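/- Let n ≥ 2 and let W be a normalized double-well potential. There exist universal constants ε₀ > 0 and C such that, with u_ε denoting the unique radial decreasing minimizer of ψ(ε) for ε < ε₀, the Lagrange multiplier λ(ε) := ((n−1)/n) ψ(ε) + (1/n)[ ε⁻¹∫_{ℝⁿ}W(u_ε) − ε∫_{ℝⁿ}|∇u_ε|² ] defines a continuous function of ε on (0,ε₀) and satisfies | λ(ε) − 2(n−1) ω_n^{1/n} | ≤ C ε for every ε ∈ (0,ε₀). -/

import Mathlib

noncomputable section

open MeasureTheory Real Set Filter

abbrev En (n : ℕ) : Type := EuclideanSpace ℝ (Fin n)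

/-- Volume of the unit ball of `ℝⁿ`. -/
def ballVol (n : ℕ) : ℝ := (volume (Metric.ball (0 : En n) 1)).toReal

/-- A normalized double-well potential. -/
structure DoubleWell (W : ℝ → ℝ) : Prop where
  contDiffOn : ContDiffOn ℝ 2 W (Icc 0 1)
  lipschitzSecond : ∃ L : NNReal, LipschitzOnWith L (iteratedDerivWithin 2 W (Icc 0 1)) (Icc 0 1)
  zero_at_zero : W 0 = 0
  zero_at_one : W 1 = 0
  pos_on : ∀ t ∈ Ioo (0:ℝ) 1, 0 < W t
  second_pos_zero : 0 < iteratedDerivWithin 2 W (Icc 0 1) 0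
  second_pos_one : 0 < iteratedDerivWithin 2 W (Icc 0 1) 1
  normalized : ∫ t in (0:ℝ)..1, Real.sqrt (W t) = 1

/-- `Φ(t) = ∫₀ᵗ √W`. -/
def Phi (W : ℝ → ℝ) (t : ℝ) : ℝ := ∫ s in (0:ℝ)..t, Real.sqrt (W s)

/-- `V(t) = Φ(t)^{n/(n-1)}`. -/
def Vpot (n : ℕ) (W : ℝ → ℝ) (t : ℝ) : ℝ := Phi W t ^ ((n : ℝ) / ((n : ℝ) - 1))

/-- Membership in `H¹(ℝⁿ;[0,1])`. -/
structure H1Box (n : ℕ) (u : En n → ℝ) : Prop where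
  mem_Icc : ∀ x, u x ∈ Icc (0:ℝ) 1
  diff : Differentiable ℝ u
  memL2 : MemLp u 2 (volume : Measure (En n))
  grad_memL2 : MemLp (fun x => fderiv ℝ u x) 2 (volume : Measure (En n))

/-- The Allen–Cahn energy. -/
def AC (n : ℕ) (W : ℝ → ℝ) (σ : ℝ) (u : En n → ℝ) : ℝ :=
  σ * (∫ x : En n, ‖fderiv ℝ u x‖ ^ 2) + σ⁻¹ * (∫ x : En n, W (u x))

/-- The isoperimetric-type infimum `Ψ(σ,m)`. -/
def Psi (n : ℕ) (W : ℝ → ℝ) (σ m : ℝ) : ℝ :=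
  sInf ((fun u => AC n W σ u) ''
    {u : En n → ℝ | H1Box n u ∧ (∫ x : En n, Vpot n W (u x)) = m})

/-- `u` is a minimizer of `ψ(ε) = Ψ(ε,1)`. -/
def Minimizes (n : ℕ) (W : ℝ → ℝ) (ε : ℝ) (u : En n → ℝ) : Prop :=
  H1Box n u ∧ (∫ x : En n, Vpot n W (u x)) = 1 ∧ AC n W ε u = Psi n W ε 1

/-- Radial function. -/
def Radial (n : ℕ) (u : En n → ℝ) : Prop :=
  ∃ ζ : ℝ → ℝ, ∀ x : En n, u x = ζ ‖x‖

/-- Radial decreasing function. -/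
def RadialDecreasing (n : ℕ) (u : En n → ℝ) : Prop :=
  ∃ ζ : ℝ → ℝ, AntitoneOn ζ (Ici 0) ∧ ∀ x : En n, u x = ζ ‖x‖

/-- The Laplacian as the trace of the second derivative. -/
def lap (n : ℕ) (u : En n → ℝ) (x : En n) : ℝ :=
  ∑ i : Fin n,
    fderiv ℝ (fun y => fderiv ℝ u y (EuclideanSpace.single i 1)) x (EuclideanSpace.single i 1)

/-- The optimal transition profile `η`. -/
structure TransitionProfile (W : ℝ → ℝ) (η : ℝ → ℝ) : Prop where
  mem : ∀ s, η s ∈ Ioo (0:ℝ) 1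
  init : η 0 = 1/2
  ode : ∀ s, HasDerivAt η (-(Real.sqrt (W (η s)))) s
  anti : StrictAnti η
  tendsto_bot : Tendsto η atBot (nhds 1)
  tendsto_top : Tendsto η atTop (nhds 0)

/-- `d_Φ(u,v)`. -/
def dPhi (n : ℕ) (W : ℝ → ℝ) (u v : En n → ℝ) : ℝ :=
  ∫ x : En n, |Phi W (u x) - Phi W (v x)| ^ ((n : ℝ) / ((n : ℝ) - 1))

/-- `R₀ = ω_n^{-1/n}`. -/
def R0 (n : ℕ) : ℝ := ballVol n ^ (-(1:ℝ) / (n : ℝ))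

/-!
A radial decreasing minimizer is a profile `Z` on the half-line, and deforming it along radial
vector fields `φ(r) ∂_r` gives a virial identity in which `λ(ε)` is the multiplier of the volume
constraint. Putting a transition layer on the sphere of radius `R₀ = ω_n^{-1/n}` shows
`ψ(ε) ≤ 2 n ω_n R₀ⁿ⁻¹ + O(ε)`, while the Modica–Mortola inequality
`ε Z'² + ε⁻¹ W(Z) ≥ 2 |(Φ ∘ Z)'|` and the concentration of `Φ(Z)` and `V(Z)` on the ball of radius
`R₀` give the matching lower bound, even after `|(Φ ∘ Z)'|` is multiplied by a weight peaked at
`r = R₀`. Hence both the equipartition defect and the energy away from that sphere are `O(ε)`.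
Testing the virial identity with a field equal to `1` and having vanishing derivative at `R₀` then
reads off `λ(ε) = 2 (n - 1) / R₀ + O(ε)`.

For the continuity, the virial identity for all fields yields the first integral of the
Euler–Lagrange equation, which expresses `Z'²` through `Z` and `λ(ε)` and so makes minimizers
uniformly Lipschitz as `ε` varies in a compact subset of `(0, ∞)`. Along a sequence of parameters,
minimizers therefore subconverge to a minimizer, with convergence of both parts of the energy, and
by uniqueness the limit of `λ` does not depend on the subsequence.

The definition of a double well does not force `W'(0) = 0`. If `W'(0) > 0`, some `u` have
non-integrable `W(u)`, for which the Bochner integral is `0`; this makes `ψ(ε) = 0`, which no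
radial decreasing function attains.
-/

/-! ### Double-well potentials -/

lemma le_of_hasDerivWithinAt_le {f f' g g' : ℝ → ℝ} {a b : ℝ}
    (hf : ∀ t ∈ Icc a b, HasDerivWithinAt f (f' t) (Icc a b) t)
    (hg : ∀ t ∈ Icc a b, HasDerivWithinAt g (g' t) (Icc a b) t) (ha : f a ≤ g a)
    (hle : ∀ t ∈ Icc a b, f' t ≤ g' t) {t : ℝ} (ht : t ∈ Icc a b) : f t ≤ g t := by
  have right_deriv : ∀ {φ φ' : ℝ → ℝ}, (∀ s ∈ Icc a b, HasDerivWithinAt φ (φ' s) (Icc a b) s) →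
      ∀ s ∈ Ico a b, HasDerivWithinAt φ (φ' s) (Ici s) s := fun hφ s hs =>
    ((hφ s (Ico_subset_Icc_self hs)).mono_of_mem_nhdsWithin
      (mem_of_superset (Icc_mem_nhdsGE hs.2) (Icc_subset_Icc_left hs.1)))
  exact image_le_of_deriv_right_le_deriv_boundary (fun s hs => (hf s hs).continuousWithinAt)
    (right_deriv hf) ha (fun s hs => (hg s hs).continuousWithinAt) (right_deriv hg)
    (fun s hs => hle s (Ico_subset_Icc_self hs)) ht

section SecondOrderTaylor

variable {f f' f'' : ℝ → ℝ} {b c t : ℝ}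

lemma taylor_le_of_le_second_deriv
    (hf : ∀ t ∈ Icc 0 b, HasDerivWithinAt f (f' t) (Icc 0 b) t)
    (hf' : ∀ t ∈ Icc 0 b, HasDerivWithinAt f' (f'' t) (Icc 0 b) t)
    (hc : ∀ t ∈ Icc 0 b, c ≤ f'' t) (ht : t ∈ Icc 0 b) :
    f' 0 + c * t ≤ f' t ∧ f 0 + f' 0 * t + c / 2 * t ^ 2 ≤ f t := by
  have first : ∀ s ∈ Icc 0 b, f' 0 + c * s ≤ f' s := fun s hs =>
    le_of_hasDerivWithinAt_le (f := fun s => f' 0 + c * s) (f' := fun _ => c)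
      (fun s _ => by
        simpa using (((hasDerivAt_id s).const_mul c).const_add (f' 0)).hasDerivWithinAt)
      hf' (by simp) hc hs
  refine ⟨first t ht, le_of_hasDerivWithinAt_le (f := fun s => f 0 + f' 0 * s + c / 2 * s ^ 2)
    (f' := fun s => f' 0 + c * s) (fun s _ => ?_) hf (by simp) first ht⟩
  have := (((hasDerivAt_id s).const_mul (f' 0)).const_add (f 0)).add
    ((hasDerivAt_pow 2 s).const_mul (c / 2))
  exact (this.congr_deriv (by push_cast; ring)).hasDerivWithinAt

lemma le_taylor_of_second_deriv_le
    (hf : ∀ t ∈ Icc 0 b, HasDerivWithinAt f (f' t) (Icc 0 b) t)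
    (hf' : ∀ t ∈ Icc 0 b, HasDerivWithinAt f' (f'' t) (Icc 0 b) t)
    (hc : ∀ t ∈ Icc 0 b, f'' t ≤ c) (ht : t ∈ Icc 0 b) :
    f t ≤ f 0 + f' 0 * t + c / 2 * t ^ 2 := by
  have := (taylor_le_of_le_second_deriv (f := fun s => -f s) (f' := fun s => -f' s)
    (f'' := fun s => -f'' s) (c := -c) (fun s hs => (hf s hs).fun_neg)
    (fun s hs => (hf' s hs).fun_neg) (fun s hs => neg_le_neg (hc s hs)) ht).2
  linarith

end SecondOrderTaylor

namespace DoubleWell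

variable {W : ℝ → ℝ} {t : ℝ}

lemma continuousOn (hW : DoubleWell W) : ContinuousOn W (Icc 0 1) :=
  hW.contDiffOn.continuousOn

lemma nonneg (hW : DoubleWell W) (ht : t ∈ Icc (0 : ℝ) 1) : 0 ≤ W t := by
  rcases ht.1.eq_or_lt with rfl | h0
  · exact hW.zero_at_zero.ge
  rcases ht.2.eq_or_lt with rfl | h1
  · exact hW.zero_at_one.ge
  exact (hW.pos_on t ⟨h0, h1⟩).le

lemma one_sub_mem (ht : t ∈ Icc (0 : ℝ) 1) : 1 - t ∈ Icc (0 : ℝ) 1 :=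
  ⟨sub_nonneg.2 ht.2, sub_le_self _ ht.1⟩

lemma hasDerivWithinAt (hW : DoubleWell W) (ht : t ∈ Icc (0 : ℝ) 1) :
    HasDerivWithinAt W (derivWithin W (Icc 0 1) t) (Icc 0 1) t :=
  (hW.contDiffOn.differentiableOn (by norm_num) t ht).hasDerivWithinAt

lemma hasDerivWithinAt_derivWithin (hW : DoubleWell W) (ht : t ∈ Icc (0 : ℝ) 1) :
    HasDerivWithinAt (derivWithin W (Icc 0 1)) (iteratedDerivWithin 2 W (Icc 0 1) t)
      (Icc 0 1) t := by
  have hdiff : DifferentiableOn ℝ (derivWithin W (Icc 0 1)) (Icc 0 1) :=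
    (hW.contDiffOn.derivWithin (uniqueDiffOn_Icc one_pos) (m := 1)
      (by norm_num)).differentiableOn (by norm_num)
  rw [iteratedDerivWithin_succ, iteratedDerivWithin_one]
  exact (hdiff t ht).hasDerivWithinAt

lemma continuousOn_iteratedDerivWithin (hW : DoubleWell W) :
    ContinuousOn (iteratedDerivWithin 2 W (Icc 0 1)) (Icc 0 1) :=
  hW.contDiffOn.continuousOn_iteratedDerivWithin le_rfl (uniqueDiffOn_Icc one_pos)

lemma derivWithin_zero_nonneg (hW : DoubleWell W) : 0 ≤ derivWithin W (Icc 0 1) 0 := by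
  have hslope := (hW.hasDerivWithinAt (left_mem_Icc.2 zero_le_one))
  rw [hasDerivWithinAt_iff_tendsto_slope, Icc_sdiff_left] at hslope
  have := left_nhdsWithin_Ioc_neBot (zero_lt_one (α := ℝ))
  refine ge_of_tendsto hslope (eventually_nhdsWithin_of_forall fun s hs => ?_)
  rw [slope_def_field, hW.zero_at_zero, sub_zero, sub_zero]
  exact div_nonneg (hW.nonneg (Ioc_subset_Icc_self hs)) hs.1.le

open scoped Pointwise in
lemma reflect (hW : DoubleWell W) : DoubleWell fun t => W (1 - t) := by
  have hmaps : MapsTo (fun t : ℝ => 1 - t) (Icc 0 1) (Icc 0 1) := fun t => one_sub_mem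
  have hsecond : iteratedDerivWithin 2 (fun t => W (1 - t)) (Icc 0 1) =
      fun t => iteratedDerivWithin 2 W (Icc 0 1) (1 - t) := by
    have hrefl : (1 : ℝ) +ᵥ -Icc (0 : ℝ) 1 = Icc 0 1 := by simp
    rw [iteratedDerivWithin_comp_const_sub, hrefl]
    simp
  obtain ⟨L, hL⟩ := hW.lipschitzSecond
  refine ⟨hW.contDiffOn.comp (by fun_prop) hmaps, ⟨L, ?_⟩, by simpa using hW.zero_at_one,
    by simpa using hW.zero_at_zero,
    fun t ht => hW.pos_on _ ⟨by linarith [ht.2], by linarith [ht.1]⟩,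
    by simpa [hsecond] using hW.second_pos_one, by simpa [hsecond] using hW.second_pos_zero, ?_⟩
  · rw [hsecond]
    simpa [Function.comp_def] using
      hL.comp (IsometryEquiv.subLeft (1 : ℝ)).isometry.lipschitz.lipschitzOnWith hmaps
  · rw [intervalIntegral.integral_comp_sub_left fun s => √(W s)]
    simpa using hW.normalized

lemma exists_taylor_lower_bound (hW : DoubleWell W) :
    ∃ δ ∈ Ioc (0 : ℝ) (1 / 2), MonotoneOn W (Icc 0 δ) ∧ ∃ c > 0, ∀ t ∈ Icc 0 δ,
      derivWithin W (Icc 0 1) 0 * t + c * t ^ 2 ≤ W t := by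
  set c := iteratedDerivWithin 2 W (Icc 0 1) 0 / 2
  have hc0 : 0 < c := half_pos hW.second_pos_zero
  have hnear : ∀ᶠ t in nhdsWithin (0 : ℝ) (Icc 0 1), c < iteratedDerivWithin 2 W (Icc 0 1) t :=
    (hW.continuousOn_iteratedDerivWithin 0 (by simp)).eventually
      (lt_mem_nhds (half_lt_self hW.second_pos_zero))
  rw [nhdsWithin_Icc_eq_nhdsGE one_pos] at hnear
  obtain ⟨b, hb, hball⟩ := mem_nhdsGE_iff_exists_Icc_subset.1 hnear
  have hδ : min b (1 / 2) ∈ Ioc (0 : ℝ) (1 / 2) := ⟨lt_min hb (by norm_num), min_le_right _ _⟩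
  have hsub : Icc 0 (min b (1 / 2)) ⊆ Icc (0 : ℝ) 1 :=
    Icc_subset_Icc_right (hδ.2.trans (by norm_num))
  have taylor : ∀ t ∈ Icc 0 (min b (1 / 2)), _ := fun t ht => taylor_le_of_le_second_deriv (c := c)
    (fun s hs => (hW.hasDerivWithinAt (hsub hs)).mono hsub)
    (fun s hs => (hW.hasDerivWithinAt_derivWithin (hsub hs)).mono hsub)
    (fun s hs => (hball ⟨hs.1, hs.2.trans (min_le_left _ _)⟩).le) ht
  refine ⟨_, hδ, ?_, c / 2, half_pos hc0, fun t ht => ?_⟩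
  · refine monotoneOn_of_hasDerivWithinAt_nonneg (convex_Icc _ _) (hW.continuousOn.mono hsub)
      (fun s hs => (hW.hasDerivWithinAt (hsub (interior_subset hs))).mono
        (interior_subset.trans hsub)) fun s hs => ?_
    have hs' := interior_subset hs
    exact (add_nonneg hW.derivWithin_zero_nonneg (mul_nonneg hc0.le hs'.1)).trans (taylor s hs').1
  · simpa only [hW.zero_at_zero, zero_add] using (taylor t ht).2

lemma exists_taylor_upper_bound (hW : DoubleWell W) :
    ∃ K > 0, ∀ t ∈ Icc (0 : ℝ) 1, W t ≤ derivWithin W (Icc 0 1) 0 * t + K * t ^ 2 := by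
  obtain ⟨K, hK⟩ := isCompact_Icc.exists_bound_of_continuousOn hW.continuousOn_iteratedDerivWithin
  have hle : ∀ t ∈ Icc (0 : ℝ) 1, iteratedDerivWithin 2 W (Icc 0 1) t ≤ K := fun t ht =>
    (le_abs_self _).trans (hK t ht)
  have hK0 : 0 < K := hW.second_pos_zero.trans_le (hle 0 (by simp))
  refine ⟨K / 2, half_pos hK0, fun t ht => ?_⟩
  simpa only [hW.zero_at_zero, zero_add] using le_taylor_of_second_deriv_le
    (fun s hs => hW.hasDerivWithinAt hs) (fun s hs => hW.hasDerivWithinAt_derivWithin hs) hle ht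

lemma exists_le_mul_self (hW : DoubleWell W) :
    ∃ C > 0, ∀ t ∈ Icc (0 : ℝ) 1, W t ≤ C * t := by
  obtain ⟨K, hK, h⟩ := hW.exists_taylor_upper_bound
  have h0 := hW.derivWithin_zero_nonneg
  refine ⟨derivWithin W (Icc 0 1) 0 + K, by positivity, fun t ht => (h t ht).trans ?_⟩
  have : K * t ^ 2 ≤ K * t := by gcongr; exact pow_le_of_le_one ht.1 ht.2 two_ne_zero
  linarith

lemma exists_le_mul_sq (hW : DoubleWell W) (h0 : derivWithin W (Icc 0 1) 0 = 0) :
    ∃ C > 0, ∀ t ∈ Icc (0 : ℝ) 1, W t ≤ C * t ^ 2 := by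
  obtain ⟨K, hK, h⟩ := hW.exists_taylor_upper_bound
  exact ⟨K, hK, fun t ht => by simpa [h0] using h t ht⟩

lemma exists_mul_self_le (hW : DoubleWell W) (h0 : derivWithin W (Icc 0 1) 0 ≠ 0) :
    ∃ δ > 0, ∃ c > 0, ∀ t ∈ Icc (0 : ℝ) δ, c * t ≤ W t := by
  obtain ⟨δ, hδ, -, c, hc, h⟩ := hW.exists_taylor_lower_bound
  exact ⟨δ, hδ.1, _, hW.derivWithin_zero_nonneg.lt_of_ne' h0, fun t ht =>
    (le_add_of_nonneg_right (by positivity)).trans (h t ht)⟩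

lemma exists_pos_le_on_Icc (hW : DoubleWell W) {δ : ℝ} (hδ : δ ∈ Ioc (0 : ℝ) (1 / 2)) :
    ∃ c > 0, ∀ t ∈ Icc δ (1 / 2), c ≤ W t := by
  obtain ⟨s, hs, hmin⟩ := isCompact_Icc.exists_isMinOn ⟨δ, le_rfl, hδ.2⟩
    (hW.continuousOn.mono (Icc_subset_Icc hδ.1.le (by norm_num)))
  exact ⟨W s, hW.pos_on s ⟨hδ.1.trans_le hs.1, hs.2.trans_lt (by norm_num)⟩, fun t ht => hmin ht⟩

lemma exists_mul_sq_le_on_half (hW : DoubleWell W) :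
    ∃ c > 0, ∀ t ∈ Icc (0 : ℝ) (1 / 2), c * t ^ 2 ≤ W t := by
  obtain ⟨δ, hδ, -, c, hc, hnear⟩ := hW.exists_taylor_lower_bound
  obtain ⟨d, hd, hfar⟩ := hW.exists_pos_le_on_Icc hδ
  refine ⟨min c d, lt_min hc hd, fun t ht => ?_⟩
  rcases le_total t δ with h | h
  · have := hnear t ⟨ht.1, h⟩
    have := mul_nonneg hW.derivWithin_zero_nonneg ht.1
    have : min c d * t ^ 2 ≤ c * t ^ 2 := by gcongr; exact min_le_left _ _
    linarith
  · calc min c d * t ^ 2 ≤ d * 1 := by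
          gcongr
          · exact min_le_right _ _
          · exact pow_le_one₀ ht.1 (ht.2.trans (by norm_num))
      _ ≤ W t := by simpa using hfar t ⟨h, ht.2⟩

lemma exists_mul_le_sqrt (hW : DoubleWell W) :
    ∃ c > 0, ∀ t ∈ Icc (0 : ℝ) 1, c * (t * (1 - t)) ≤ √(W t) := by
  obtain ⟨c, hc, hleft⟩ := hW.exists_mul_sq_le_on_half
  obtain ⟨d, hd, hright⟩ := hW.reflect.exists_mul_sq_le_on_half
  have sqrt_bound : ∀ {a s x w : ℝ}, 0 < a → min c d ≤ a → 0 ≤ s → s ≤ x →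
      a * x ^ 2 ≤ w → √(min c d) * s ≤ √w := fun ha hcd hs hsx hw => by
    refine Real.le_sqrt_of_sq_le ?_
    rw [mul_pow, Real.sq_sqrt (lt_min hc hd).le]
    exact le_trans (by gcongr) hw
  refine ⟨√(min c d), Real.sqrt_pos.2 (lt_min hc hd), fun t ht => ?_⟩
  have h1 := (one_sub_mem ht).1
  have hs : 0 ≤ t * (1 - t) := mul_nonneg ht.1 h1
  rcases le_total t (1 / 2) with h | h
  · exact sqrt_bound hc (min_le_left _ _) hs (mul_le_of_le_one_right ht.1 (by linarith [ht.1]))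
      (hleft t ⟨ht.1, h⟩)
  · have := hright (1 - t) ⟨h1, by linarith⟩
    rw [sub_sub_cancel] at this
    exact sqrt_bound hd (min_le_right _ _) hs (mul_le_of_le_one_left h1 ht.2) this

lemma exists_le_mul (hW : DoubleWell W) :
    ∃ C > 0, ∀ t ∈ Icc (0 : ℝ) 1, W t ≤ C * (t * (1 - t)) := by
  obtain ⟨C, hC, hleft⟩ := hW.exists_le_mul_self
  obtain ⟨D, -, hright⟩ := hW.reflect.exists_le_mul_self
  refine ⟨2 * max C D, by positivity, fun t ht => ?_⟩
  have h1 := (one_sub_mem ht).1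
  have ht0 := ht.1
  rcases le_total t (1 / 2) with h | h
  · calc W t ≤ C * t := hleft t ht
      _ ≤ max C D * (t * (2 * (1 - t))) := by
        gcongr
        · exact le_max_left _ _
        · exact le_mul_of_one_le_right ht0 (by linarith)
      _ = 2 * max C D * (t * (1 - t)) := by ring
  · calc W t ≤ D * (1 - t) := by simpa using hright (1 - t) (one_sub_mem ht)
      _ ≤ max C D * ((2 * t) * (1 - t)) := by
        gcongr
        · exact le_max_right _ _
        · exact le_mul_of_one_le_left h1 (by linarith)
      _ = 2 * max C D * (t * (1 - t)) := by ring

end DoubleWell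

namespace DoubleWell

variable {W : ℝ → ℝ} {t : ℝ}

lemma continuousOn_sqrt (hW : DoubleWell W) : ContinuousOn (fun t => √(W t)) (Icc 0 1) :=
  hW.continuousOn.sqrt

lemma intervalIntegrable_sqrt (hW : DoubleWell W) {a b : ℝ} (ha : a ∈ Icc (0 : ℝ) 1)
    (hb : b ∈ Icc (0 : ℝ) 1) : IntervalIntegrable (fun s => √(W s)) volume a b :=
  (hW.continuousOn_sqrt.mono (uIcc_subset_Icc ha hb)).intervalIntegrable

lemma exists_sqrt_le (hW : DoubleWell W) : ∃ M > 0, ∀ t ∈ Icc (0 : ℝ) 1, √(W t) ≤ M := by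
  obtain ⟨M, hM⟩ := isCompact_Icc.exists_bound_of_continuousOn hW.continuousOn_sqrt
  exact ⟨max M 1, by positivity, fun t ht => (le_abs_self _).trans
    ((hM t ht).trans (le_max_left _ _))⟩

lemma hasDerivWithinAt_Phi (hW : DoubleWell W) (ht : t ∈ Icc (0 : ℝ) 1) :
    HasDerivWithinAt (Phi W) √(W t) (Icc 0 1) t := by
  set ext : ℝ → ℝ := IccExtend zero_le_one ((Icc 0 1).domRestrict fun s => √(W s))
  have hext : ∀ s ∈ Icc (0 : ℝ) 1, ext s = √(W s) := fun s hs => IccExtend_of_mem _ _ hs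
  have hcont : Continuous ext := hW.continuousOn_sqrt.domRestrict.Icc_extend'
  have hPhi : ∀ s ∈ Icc (0 : ℝ) 1, Phi W s = ∫ x in (0 : ℝ)..s, ext x := fun s hs =>
    intervalIntegral.integral_congr fun x hx =>
      (hext x (uIcc_subset_Icc (left_mem_Icc.2 zero_le_one) hs hx)).symm
  rw [← hext t ht]
  exact (hcont.integral_hasStrictDerivAt 0 t).hasDerivAt.hasDerivWithinAt.congr hPhi (hPhi t ht)

lemma continuousOn_Phi (hW : DoubleWell W) : ContinuousOn (Phi W) (Icc 0 1) :=
  fun _ ht => (hW.hasDerivWithinAt_Phi ht).continuousWithinAt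

lemma Phi_zero : Phi W 0 = 0 := intervalIntegral.integral_same

lemma monotoneOn_Phi (hW : DoubleWell W) : MonotoneOn (Phi W) (Icc 0 1) :=
  monotoneOn_of_hasDerivWithinAt_nonneg (convex_Icc 0 1) hW.continuousOn_Phi
    (fun _ ht => (hW.hasDerivWithinAt_Phi (interior_subset ht)).mono interior_subset)
    fun _ _ => Real.sqrt_nonneg _

lemma Phi_mem (hW : DoubleWell W) (ht : t ∈ Icc (0 : ℝ) 1) : Phi W t ∈ Icc (0 : ℝ) 1 :=
  ⟨Phi_zero.symm.le.trans (hW.monotoneOn_Phi (by simp) ht ht.1),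
    (hW.monotoneOn_Phi ht (by simp) ht.2).trans hW.normalized.le⟩

lemma Phi_reflect (hW : DoubleWell W) (ht : t ∈ Icc (0 : ℝ) 1) :
    Phi (fun s => W (1 - s)) (1 - t) = 1 - Phi W t := by
  have htotal : Phi W t + ∫ s in t..1, √(W s) = 1 :=
    (intervalIntegral.integral_add_adjacent_intervals
      (hW.intervalIntegrable_sqrt (by simp) ht) (hW.intervalIntegrable_sqrt ht (by simp))).trans
      hW.normalized
  rw [Phi, intervalIntegral.integral_comp_sub_left fun s => √(W s), sub_sub_cancel, sub_zero]
  exact eq_sub_of_add_eq' htotal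

lemma exists_mul_sq_le_Phi (hW : DoubleWell W) :
    ∃ c ∈ Ioc (0 : ℝ) 1, ∀ t ∈ Icc (0 : ℝ) 1, c * t ^ 2 ≤ Phi W t := by
  obtain ⟨c, hc, hsqrt⟩ := hW.exists_mul_le_sqrt
  have primitive : ∀ t ∈ Icc (0 : ℝ) 1, c * (t ^ 2 / 2 - t ^ 3 / 3) ≤ Phi W t := fun t ht => by
    refine le_of_hasDerivWithinAt_le (f := fun t => c * (t ^ 2 / 2 - t ^ 3 / 3))
      (f' := fun t => c * (t * (1 - t))) (fun s _ => HasDerivAt.hasDerivWithinAt ?_)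
      (fun s hs => hW.hasDerivWithinAt_Phi hs) (by simp [Phi_zero]) hsqrt ht
    refine ((((hasDerivAt_pow 2 s).div_const 2).sub ((hasDerivAt_pow 3 s).div_const 3)).const_mul
      c).congr_deriv ?_
    push_cast; ring
  have lower : ∀ t ∈ Icc (0 : ℝ) 1, c / 6 * t ^ 2 ≤ Phi W t := fun t ht => by
    refine le_trans ?_ (primitive t ht)
    have : t ^ 3 ≤ t ^ 2 := pow_le_pow_of_le_one ht.1 ht.2 (by norm_num)
    nlinarith
  have hc1 : c / 6 ≤ 1 := by
    simpa using (lower 1 (by simp)).trans (hW.Phi_mem (t := 1) (by simp)).2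
  exact ⟨c / 6, ⟨by positivity, hc1⟩, lower⟩

lemma exists_Phi_le_mul_self (hW : DoubleWell W) :
    ∃ C > 0, ∀ t ∈ Icc (0 : ℝ) 1, Phi W t ≤ C * t := by
  obtain ⟨M, hM, hsqrt⟩ := hW.exists_sqrt_le
  refine ⟨M, hM, fun t ht => le_of_hasDerivWithinAt_le (g' := fun _ => M)
    (fun s hs => hW.hasDerivWithinAt_Phi hs)
    (fun s _ => ?_) (by simp [Phi_zero]) hsqrt ht⟩
  simpa using ((hasDerivAt_id s).const_mul M).hasDerivWithinAt

lemma exists_Phi_le_mul_sq (hW : DoubleWell W) (h0 : derivWithin W (Icc 0 1) 0 = 0) :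
    ∃ C > 0, ∀ t ∈ Icc (0 : ℝ) 1, Phi W t ≤ C * t ^ 2 := by
  obtain ⟨C, hC, hle⟩ := hW.exists_le_mul_sq h0
  have hsqrt : ∀ t ∈ Icc (0 : ℝ) 1, √(W t) ≤ √C * t := fun t ht => by
    rw [← Real.sqrt_sq ht.1, ← Real.sqrt_mul hC.le, Real.sqrt_sq ht.1]
    exact Real.sqrt_le_sqrt (hle t ht)
  refine ⟨√C / 2, by positivity, fun t ht => le_of_hasDerivWithinAt_le
    (g := fun t => √C / 2 * t ^ 2) (fun s hs => hW.hasDerivWithinAt_Phi hs)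
    (fun s _ => HasDerivAt.hasDerivWithinAt ?_) (by simp [Phi_zero]) hsqrt ht⟩
  exact ((hasDerivAt_pow 2 s).const_mul (√C / 2)).congr_deriv (by push_cast; ring)

lemma Phi_le_mul_sqrt_of_monotoneOn (hW : DoubleWell W) {δ : ℝ} (hδ : δ ≤ 1)
    (hmono : MonotoneOn W (Icc 0 δ)) (ht : t ∈ Icc 0 δ) : Phi W t ≤ t * √(W t) := by
  have : Phi W t ≤ ∫ _ in (0 : ℝ)..t, √(W t) :=
    intervalIntegral.integral_mono_on ht.1
      (hW.intervalIntegrable_sqrt (by simp) ⟨ht.1, ht.2.trans hδ⟩) (by simp) fun s hs =>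
        Real.sqrt_le_sqrt (hmono ⟨hs.1, hs.2.trans ht.2⟩ ht hs.2)
  simpa using this

lemma exists_Phi_le_mul_on_half (hW : DoubleWell W) :
    ∃ C > 0, ∀ t ∈ Icc (0 : ℝ) (1 / 2), Phi W t ≤ C * W t := by
  obtain ⟨δ, hδ, hmono, -⟩ := hW.exists_taylor_lower_bound
  obtain ⟨c, hc, hsq⟩ := hW.exists_mul_sq_le_on_half
  obtain ⟨d, hd, hfar⟩ := hW.exists_pos_le_on_Icc hδ
  refine ⟨max (√c)⁻¹ d⁻¹, by positivity, fun t ht => ?_⟩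
  have ht1 : t ∈ Icc (0 : ℝ) 1 := ⟨ht.1, ht.2.trans (by norm_num)⟩
  have hWt := hW.nonneg ht1
  rcases le_total t δ with h | h
  · have hroot : t ≤ (√c)⁻¹ * √(W t) := by
      rw [le_inv_mul_iff₀ (Real.sqrt_pos.2 hc)]
      refine Real.le_sqrt_of_sq_le ?_
      rw [mul_pow, Real.sq_sqrt hc.le]
      exact hsq t ht
    calc Phi W t ≤ t * √(W t) :=
          hW.Phi_le_mul_sqrt_of_monotoneOn (hδ.2.trans (by norm_num)) hmono ⟨ht.1, h⟩
      _ ≤ (√c)⁻¹ * √(W t) * √(W t) := by gcongr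
      _ = (√c)⁻¹ * W t := by rw [mul_assoc, Real.mul_self_sqrt hWt]
      _ ≤ max (√c)⁻¹ d⁻¹ * W t := by gcongr; exact le_max_left _ _
  · calc Phi W t ≤ 1 := (hW.Phi_mem ht1).2
      _ = d⁻¹ * d := (inv_mul_cancel₀ hd.ne').symm
      _ ≤ max (√c)⁻¹ d⁻¹ * W t := by
        gcongr
        · exact le_max_right _ _
        · exact hfar t ⟨h, ht.2⟩

lemma exists_Phi_mul_one_sub_le (hW : DoubleWell W) :
    ∃ C > 0, ∀ t ∈ Icc (0 : ℝ) 1, Phi W t * (1 - Phi W t) ≤ C * W t := by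
  obtain ⟨C, hC, hleft⟩ := hW.exists_Phi_le_mul_on_half
  obtain ⟨D, -, hright⟩ := hW.reflect.exists_Phi_le_mul_on_half
  refine ⟨max C D, by positivity, fun t ht => ?_⟩
  obtain ⟨hP0, hP1⟩ := hW.Phi_mem ht
  have hWt := hW.nonneg ht
  rcases le_total t (1 / 2) with h | h
  · calc Phi W t * (1 - Phi W t) ≤ Phi W t := mul_le_of_le_one_right hP0 (by linarith)
      _ ≤ C * W t := hleft t ⟨ht.1, h⟩
      _ ≤ max C D * W t := by gcongr; exact le_max_left _ _
  · have hmem : 1 - t ∈ Icc (0 : ℝ) (1 / 2) := ⟨(one_sub_mem ht).1, by linarith⟩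
    calc Phi W t * (1 - Phi W t) ≤ 1 - Phi W t :=
          mul_le_of_le_one_left (sub_nonneg.2 hP1) hP1
      _ ≤ D * W t := by simpa [hW.Phi_reflect ht] using hright (1 - t) hmem
      _ ≤ max C D * W t := by gcongr; exact le_max_right _ _

end DoubleWell

lemma volumeExponent_mem (m : ℕ) :
    ((m + 2 : ℕ) : ℝ) / (((m + 2 : ℕ) : ℝ) - 1) ∈ Ioc (1 : ℝ) 2 := by
  have : (0 : ℝ) ≤ m := m.cast_nonneg
  push_cast
  rw [mem_Ioc, lt_div_iff₀ (by linarith), div_le_iff₀ (by linarith)]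
  constructor <;> linarith

namespace DoubleWell

variable {W : ℝ → ℝ} {t : ℝ}

lemma Vpot_mem (hW : DoubleWell W) (m : ℕ) (ht : t ∈ Icc (0 : ℝ) 1) :
    Vpot (m + 2) W t ∈ Icc (0 : ℝ) 1 := by
  obtain ⟨hP0, hP1⟩ := hW.Phi_mem ht
  exact ⟨Real.rpow_nonneg hP0 _,
    Real.rpow_le_one hP0 hP1 (one_pos.trans (volumeExponent_mem m).1).le⟩

lemma Vpot_le_Phi (hW : DoubleWell W) (m : ℕ) (ht : t ∈ Icc (0 : ℝ) 1) :
    Vpot (m + 2) W t ≤ Phi W t := by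
  obtain ⟨hP0, hP1⟩ := hW.Phi_mem ht
  exact Real.rpow_le_self_of_le_one hP0 hP1 (volumeExponent_mem m).1.le

lemma Phi_sq_le_Vpot (hW : DoubleWell W) (m : ℕ) (ht : t ∈ Icc (0 : ℝ) 1) :
    Phi W t ^ 2 ≤ Vpot (m + 2) W t := by
  obtain ⟨hP0, hP1⟩ := hW.Phi_mem ht
  have hq := volumeExponent_mem m
  simpa [Vpot] using Real.rpow_le_rpow_of_exponent_ge_of_imp hP0 hP1 hq.2
    fun _ h => absurd h two_ne_zero

lemma continuousOn_Vpot (hW : DoubleWell W) (m : ℕ) :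
    ContinuousOn (Vpot (m + 2) W) (Icc 0 1) :=
  hW.continuousOn_Phi.rpow_const fun _ _ => Or.inr (one_pos.trans (volumeExponent_mem m).1).le

lemma exists_Phi_le_mul_add_Vpot (hW : DoubleWell W) (m : ℕ) :
    ∃ C > 0, ∀ t ∈ Icc (0 : ℝ) 1, Phi W t ≤ C * (W t + Vpot (m + 2) W t) := by
  obtain ⟨C, hC, h⟩ := hW.exists_Phi_mul_one_sub_le
  refine ⟨max C 1, by positivity, fun t ht => ?_⟩
  have hWt := hW.nonneg ht
  have hVt := (hW.Vpot_mem m ht).1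
  calc Phi W t = Phi W t * (1 - Phi W t) + Phi W t ^ 2 := by ring
    _ ≤ C * W t + 1 * Vpot (m + 2) W t := by
      rw [one_mul]; exact add_le_add (h t ht) (hW.Phi_sq_le_Vpot m ht)
    _ ≤ max C 1 * W t + max C 1 * Vpot (m + 2) W t := by
      gcongr
      · exact le_max_left _ _
      · exact le_max_right _ _
    _ = max C 1 * (W t + Vpot (m + 2) W t) := by ring

lemma exists_sq_le_mul_add_Vpot (hW : DoubleWell W) (m : ℕ) :
    ∃ C > 0, ∀ t ∈ Icc (0 : ℝ) 1, t ^ 2 ≤ C * (W t + Vpot (m + 2) W t) := by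
  obtain ⟨C, hC, hPhi⟩ := hW.exists_Phi_le_mul_add_Vpot m
  obtain ⟨c, hc, hsq⟩ := hW.exists_mul_sq_le_Phi
  refine ⟨c⁻¹ * C, mul_pos (inv_pos.2 hc.1) hC, fun t ht => ?_⟩
  rw [mul_assoc, le_inv_mul_iff₀ hc.1]
  exact (hsq t ht).trans (hPhi t ht)

end DoubleWell

/-! ### Radial integration -/

/-- The surface area `n ω_n` of the unit sphere of `ℝⁿ`. -/
def sphereArea (n : ℕ) : ℝ := n * ballVol n

/-- The law of `‖x‖` under Lebesgue measure on `ℝⁿ`, written as a density on `(0, ∞)` so that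
integrals of arbitrary functions, measurable or not, can be passed to and from the half-line. -/
def radialMeasure (n : ℕ) : Measure ℝ :=
  (volume.restrict (Ioi 0)).withDensity fun r => ENNReal.ofReal (sphereArea n * r ^ (n - 1))

lemma ballVol_pos (n : ℕ) : 0 < ballVol n :=
  ENNReal.toReal_pos (Metric.measure_ball_pos _ _ one_pos).ne' measure_ball_lt_top.ne

lemma sphereArea_pos (n : ℕ) [NeZero n] : 0 < sphereArea n :=
  mul_pos (Nat.cast_pos.2 (NeZero.pos n)) (ballVol_pos n)

lemma sphereArea_nonneg (n : ℕ) : 0 ≤ sphereArea n :=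
  mul_nonneg n.cast_nonneg (ballVol_pos n).le

lemma radialMeasure_absolutelyContinuous (n : ℕ) :
    radialMeasure n ≪ volume.restrict (Ioi 0) :=
  withDensity_absolutelyContinuous _ _

lemma absolutelyContinuous_radialMeasure (n : ℕ) [NeZero n] :
    volume.restrict (Ioi 0) ≪ radialMeasure n := by
  refine withDensity_absolutelyContinuous' (by fun_prop) ?_
  filter_upwards [ae_restrict_mem measurableSet_Ioi] with r (hr : 0 < r)
  have := sphereArea_pos n
  rw [Ne, ENNReal.ofReal_eq_zero, not_le]
  positivity

lemma ae_radialMeasure_of_forall_pos {n : ℕ} {p : ℝ → Prop} (hp : ∀ r, 0 < r → p r) :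
    ∀ᵐ r ∂radialMeasure n, p r :=
  (radialMeasure_absolutelyContinuous n).ae_le (ae_restrict_of_forall_mem measurableSet_Ioi hp)

lemma aestronglyMeasurable_radialMeasure {n : ℕ} {g : ℝ → ℝ} (hg : ContinuousOn g (Ioi 0)) :
    AEStronglyMeasurable g (radialMeasure n) :=
  (hg.aestronglyMeasurable measurableSet_Ioi).mono_ac (radialMeasure_absolutelyContinuous n)

lemma integral_radialMeasure (k : ℕ) (g : ℝ → ℝ) :
    ∫ r, g r ∂radialMeasure (k + 1) = sphereArea (k + 1) * ∫ r in Ioi 0, r ^ k * g r := by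
  rw [radialMeasure, integral_withDensity_eq_integral_toReal_smul (by fun_prop) (by simp),
    ← integral_const_mul]
  refine setIntegral_congr_fun measurableSet_Ioi fun r (hr : 0 < r) => ?_
  have := sphereArea_nonneg (k + 1)
  simp only [add_tsub_cancel_right, smul_eq_mul]
  rw [ENNReal.toReal_ofReal (by positivity), mul_assoc]

lemma integrable_radialMeasure_iff (k : ℕ) {g : ℝ → ℝ} :
    Integrable g (radialMeasure (k + 1)) ↔ IntegrableOn (fun r => r ^ k * g r) (Ioi 0) := by
  rw [radialMeasure, integrable_withDensity_iff_integrable_smul' (by fun_prop) (by simp)]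
  refine Iff.trans ?_ (integrable_const_mul_iff (sphereArea_pos (k + 1)).ne'.isUnit _)
  refine integrableOn_congr_fun (fun r (hr : 0 < r) => ?_) measurableSet_Ioi
  have := sphereArea_nonneg (k + 1)
  simp only [add_tsub_cancel_right, smul_eq_mul]
  rw [ENNReal.toReal_ofReal (by positivity), mul_assoc]

section NeZero

variable {n : ℕ} [NeZero n]

lemma integral_comp_norm (g : ℝ → ℝ) : ∫ x : En n, g ‖x‖ = ∫ r, g r ∂radialMeasure n := by
  obtain ⟨k, rfl⟩ := Nat.exists_eq_succ_of_ne_zero (NeZero.ne n)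
  rw [integral_fun_norm_addHaar volume g, integral_radialMeasure]
  simp [sphereArea, ballVol, Measure.real, mul_assoc]

lemma integrable_comp_norm {g : ℝ → ℝ} :
    Integrable (fun x : En n => g ‖x‖) ↔ Integrable g (radialMeasure n) := by
  obtain ⟨k, rfl⟩ := Nat.exists_eq_succ_of_ne_zero (NeZero.ne n)
  rw [integrable_fun_norm_addHaar volume (f := g), integrable_radialMeasure_iff]
  simp

lemma integral_radialMeasure_comp_div (g : ℝ → ℝ) {t : ℝ} (ht : 0 < t) :
    ∫ r, g (r / t) ∂radialMeasure n = t ^ n * ∫ r, g r ∂radialMeasure n := by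
  have := Measure.integral_comp_inv_smul (volume : Measure (En n)) (fun x => g ‖x‖) t
  rw [← integral_comp_norm, ← integral_comp_norm]
  simpa [norm_smul, abs_of_pos ht, div_eq_inv_mul] using this

lemma integrable_radialMeasure_comp_div {g : ℝ → ℝ} (hg : Integrable g (radialMeasure n)) {t : ℝ}
    (ht : 0 < t) : Integrable (fun r => g (r / t)) (radialMeasure n) := by
  rw [← integrable_comp_norm] at hg ⊢
  simpa [norm_smul, abs_of_pos ht, div_eq_inv_mul] using hg.comp_smul (inv_ne_zero ht.ne')

end NeZero

/-! ### Radial profiles and the Allen–Cahn energy -/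

/-- `Y`, with derivative `Y'` on `(0, ∞)` and vanishing right derivative at `0`, is the radial
profile of a function in `H¹(ℝⁿ;[0,1])`. The derivative is part of the data so that it can be
replaced on a null set or at `0`. -/
structure RadialProfile (n : ℕ) (Y Y' : ℝ → ℝ) : Prop where
  hasDerivAt : ∀ r, 0 < r → HasDerivAt Y (Y' r) r
  hasDerivWithinAt_zero : HasDerivWithinAt Y 0 (Ici 0) 0
  mem_Icc : ∀ r, 0 ≤ r → Y r ∈ Icc (0 : ℝ) 1
  integrable_sq : Integrable (fun r => Y r ^ 2) (radialMeasure n)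
  integrable_deriv_sq : Integrable (fun r => Y' r ^ 2) (radialMeasure n)

lemma hasFDerivAt_comp_norm_zero {E : Type*} [NormedAddCommGroup E] [NormedSpace ℝ E] {Y : ℝ → ℝ}
    (hY : HasDerivWithinAt Y 0 (Ici 0) 0) :
    HasFDerivAt (fun x : E => Y ‖x‖) (0 : E →L[ℝ] ℝ) 0 := by
  rw [hasFDerivAt_iff_isLittleO_nhds_zero]
  rw [hasDerivWithinAt_iff_isLittleO] at hY
  have hnorm : Tendsto (fun x : E => ‖x‖) (nhds 0) (nhdsWithin 0 (Ici 0)) :=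
    tendsto_nhdsWithin_iff.2
      ⟨by simpa using (continuous_norm (E := E)).tendsto 0, Eventually.of_forall norm_nonneg⟩
  refine Asymptotics.isLittleO_norm_right.1 ?_
  simpa [Function.comp_def] using hY.comp_tendsto hnorm

lemma hasFDerivAt_comp_norm {E : Type*} [NormedAddCommGroup E] [InnerProductSpace ℝ E]
    {Y : ℝ → ℝ} {y : ℝ} {x : E} (hx : x ≠ 0) (hY : HasDerivAt Y y ‖x‖) :
    HasFDerivAt (fun x : E => Y ‖x‖) (y • fderiv ℝ (fun x : E => ‖x‖) x) x :=
  hY.comp_hasFDerivAt x (differentiableAt_id.norm ℝ hx).hasFDerivAt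

lemma norm_fderiv_comp_norm {E : Type*} [NormedAddCommGroup E] [InnerProductSpace ℝ E]
    {Y : ℝ → ℝ} {y : ℝ} {x : E} (hx : x ≠ 0) (hY : HasDerivAt Y y ‖x‖) :
    ‖fderiv ℝ (fun x : E => Y ‖x‖) x‖ = |y| := by
  have : Nontrivial E := ⟨x, 0, hx⟩
  rw [(hasFDerivAt_comp_norm hx hY).fderiv, norm_smul,
    norm_fderiv_norm (differentiableAt_id.norm ℝ hx), mul_one, Real.norm_eq_abs]

namespace RadialProfile

variable {n : ℕ} {Y Y' : ℝ → ℝ}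

lemma continuousOn (h : RadialProfile n Y Y') : ContinuousOn Y (Ici 0) := by
  intro r hr
  rcases eq_or_lt_of_le (mem_Ici.1 hr) with rfl | hpos
  · exact h.hasDerivWithinAt_zero.continuousWithinAt
  · exact (h.hasDerivAt r hpos).continuousAt.continuousWithinAt

lemma continuousOn_comp (h : RadialProfile n Y Y') {F : ℝ → ℝ} (hF : ContinuousOn F (Icc 0 1)) :
    ContinuousOn (fun r => F (Y r)) (Ici 0) :=
  hF.comp h.continuousOn h.mem_Icc

lemma integrable_comp (h : RadialProfile n Y Y') {F : ℝ → ℝ} (hF : ContinuousOn F (Icc 0 1))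
    {C : ℝ} (hC : ∀ t ∈ Icc (0 : ℝ) 1, |F t| ≤ C * t ^ 2) :
    Integrable (fun r => F (Y r)) (radialMeasure n) :=
  (h.integrable_sq.const_mul C).mono'
    (aestronglyMeasurable_radialMeasure ((h.continuousOn_comp hF).mono Ioi_subset_Ici_self))
    (ae_radialMeasure_of_forall_pos fun r hr => hC _ (h.mem_Icc r hr.le))

lemma differentiable_comp_norm (h : RadialProfile n Y Y') :
    Differentiable ℝ fun x : En n => Y ‖x‖ := by
  intro x
  rcases eq_or_ne x 0 with rfl | hx
  · exact (hasFDerivAt_comp_norm_zero h.hasDerivWithinAt_zero).differentiableAt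
  · exact (hasFDerivAt_comp_norm hx (h.hasDerivAt _ (norm_pos_iff.2 hx))).differentiableAt

variable [NeZero n]

lemma norm_fderiv_sq_ae_eq (hY : ∀ r, 0 < r → HasDerivAt Y (Y' r) r) :
    (fun x : En n => ‖fderiv ℝ (fun x : En n => Y ‖x‖) x‖ ^ 2) =ᵐ[volume]
      fun x => Y' ‖x‖ ^ 2 := by
  filter_upwards [compl_mem_ae_iff.2 (measure_singleton (0 : En n))] with x hx
  rw [norm_fderiv_comp_norm hx (hY _ (norm_pos_iff.2 hx)), sq_abs]

lemma h1Box (h : RadialProfile n Y Y') : H1Box n fun x => Y ‖x‖ where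
  mem_Icc x := h.mem_Icc _ (norm_nonneg x)
  diff := h.differentiable_comp_norm
  memL2 := by
    rw [memLp_two_iff_integrable_sq
      h.differentiable_comp_norm.continuous.aestronglyMeasurable]
    exact integrable_comp_norm.2 h.integrable_sq
  grad_memL2 := by
    rw [memLp_two_iff_integrable_sq_norm (measurable_fderiv ℝ _).aestronglyMeasurable,
      integrable_congr (norm_fderiv_sq_ae_eq h.hasDerivAt)]
    exact integrable_comp_norm.2 h.integrable_deriv_sq

lemma integral_norm_fderiv_sq (h : RadialProfile n Y Y') :
    ∫ x, ‖fderiv ℝ (fun x : En n => Y ‖x‖) x‖ ^ 2 = ∫ r, Y' r ^ 2 ∂radialMeasure n := by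
  rw [integral_congr_ae (norm_fderiv_sq_ae_eq h.hasDerivAt), ← integral_comp_norm]

lemma AC_eq (h : RadialProfile n Y Y') (W : ℝ → ℝ) (σ : ℝ) :
    AC n W σ (fun x => Y ‖x‖) =
      σ * ∫ r, Y' r ^ 2 ∂radialMeasure n + σ⁻¹ * ∫ r, W (Y r) ∂radialMeasure n := by
  rw [AC, h.integral_norm_fderiv_sq, integral_comp_norm fun r => W (Y r)]

lemma scale (h : RadialProfile n Y Y') {t : ℝ} (ht : 0 < t) :
    RadialProfile n (fun r => Y (r / t)) fun r => t⁻¹ * Y' (r / t) where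
  hasDerivAt r hr := by
    simpa [Function.comp_def, mul_comm] using
      (h.hasDerivAt (r / t) (by positivity)).comp r ((hasDerivAt_id r).div_const t)
  hasDerivWithinAt_zero := by
    have hdiv : HasDerivWithinAt (fun r : ℝ => r / t) (1 / t) (Ici 0) 0 :=
      ((hasDerivAt_id (0 : ℝ)).div_const t).hasDerivWithinAt
    have hzero : HasDerivWithinAt Y 0 (Ici 0) (0 / t) := by
      simpa using h.hasDerivWithinAt_zero
    simpa [Function.comp_def] using hzero.comp (0 : ℝ) hdiv fun r hr => div_nonneg hr ht.le
  mem_Icc r hr := h.mem_Icc _ (by positivity)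
  integrable_sq := integrable_radialMeasure_comp_div (g := fun r => Y r ^ 2) h.integrable_sq ht
  integrable_deriv_sq := by
    simpa only [mul_pow] using (integrable_radialMeasure_comp_div (g := fun r => Y' r ^ 2)
      h.integrable_deriv_sq ht).const_mul (t⁻¹ ^ 2)

lemma eq_apply_zero_of_integral_deriv_sq_eq_zero (h : RadialProfile n Y Y')
    (h0 : ∫ r, Y' r ^ 2 ∂radialMeasure n = 0) {r : ℝ} (hr : 0 ≤ r) : Y r = Y 0 := by
  have hY' : ∀ᵐ r ∂volume.restrict (Ioi 0), Y' r = 0 := by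
    refine (absolutelyContinuous_radialMeasure n).ae_le ?_
    filter_upwards [(integral_eq_zero_iff_of_nonneg (fun r => sq_nonneg (Y' r))
      h.integrable_deriv_sq).1 h0] with r hr using pow_eq_zero_iff two_ne_zero |>.1 hr
  have hzero : Y' =ᵐ[volume.restrict (Ioc 0 r)] fun _ => 0 :=
    ae_restrict_of_ae_restrict_of_subset Ioc_subset_Ioi_self hY'
  have hint : IntervalIntegrable Y' volume 0 r := by
    rw [intervalIntegrable_iff_integrableOn_Ioc_of_le hr]
    exact (integrable_zero _ _ _).congr hzero.symm
  have hFTC := intervalIntegral.integral_eq_sub_of_hasDerivAt_of_le hr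
    (h.continuousOn.mono Icc_subset_Ici_self) (fun s hs => h.hasDerivAt s hs.1) hint
  rw [intervalIntegral.integral_of_le hr, integral_congr_ae hzero, integral_zero] at hFTC
  exact (sub_eq_zero.1 hFTC.symm)

end RadialProfile

lemma AC_nonneg {n : ℕ} {W : ℝ → ℝ} (hW : DoubleWell W) {σ : ℝ} (hσ : 0 < σ) {u : En n → ℝ}
    (hu : H1Box n u) : 0 ≤ AC n W σ u := by
  have : 0 ≤ ∫ x : En n, W (u x) := integral_nonneg fun x => hW.nonneg (hu.mem_Icc x)
  rw [AC]
  positivity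

lemma Psi_le_AC {n : ℕ} {W : ℝ → ℝ} (hW : DoubleWell W) {σ v : ℝ} (hσ : 0 < σ) {u : En n → ℝ}
    (hu : H1Box n u) (hv : ∫ x : En n, Vpot n W (u x) = v) : Psi n W σ v ≤ AC n W σ u :=
  csInf_le ⟨0, by rintro _ ⟨u, hu, rfl⟩; exact AC_nonneg hW hσ hu.1⟩ ⟨u, ⟨hu, hv⟩, rfl⟩

-- Dilating the profile by `v ^ (-1 / n)` normalizes its volume `v` to `1`.
lemma RadialProfile.Psi_le {m : ℕ} {W Y Y' : ℝ → ℝ} (h : RadialProfile (m + 2) Y Y')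
    (hW : DoubleWell W) {σ v : ℝ} (hσ : 0 < σ)
    (hv : ∫ r, Vpot (m + 2) W (Y r) ∂radialMeasure (m + 2) = v) (hv0 : 0 < v) :
    Psi (m + 2) W σ 1 ≤ σ * (∫ r, Y' r ^ 2 ∂radialMeasure (m + 2)) * v ^ (-(m : ℝ) / (m + 2)) +
      σ⁻¹ * (∫ r, W (Y r) ∂radialMeasure (m + 2)) * v⁻¹ := by
  set t : ℝ := v ^ (-(1 : ℝ) / (m + 2)) with ht
  have ht0 : 0 < t := Real.rpow_pos_of_pos hv0 _
  have ht_vol : t ^ (m + 2) = v⁻¹ := by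
    rw [ht, ← Real.rpow_mul_natCast hv0.le, ← Real.rpow_neg_one]
    congr 1
    push_cast
    field_simp
  have ht_grad : t ^ m = v ^ (-(m : ℝ) / (m + 2)) := by
    rw [ht, ← Real.rpow_mul_natCast hv0.le]
    congr 1
    field_simp
  have hgrad : ∫ r, (t⁻¹ * Y' (r / t)) ^ 2 ∂radialMeasure (m + 2) =
      t ^ m * ∫ r, Y' r ^ 2 ∂radialMeasure (m + 2) := by
    simp only [mul_pow]
    rw [integral_const_mul, integral_radialMeasure_comp_div (fun r => Y' r ^ 2) ht0]
    field_simp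
    ring
  have hvol : ∫ x : En (m + 2), Vpot (m + 2) W (Y (‖x‖ / t)) = 1 := by
    rw [integral_comp_norm fun r => Vpot (m + 2) W (Y (r / t)),
      integral_radialMeasure_comp_div (fun r => Vpot (m + 2) W (Y r)) ht0, hv, ht_vol,
      inv_mul_cancel₀ hv0.ne']
  refine (Psi_le_AC hW hσ (h.scale ht0).h1Box hvol).trans_eq ?_
  rw [(h.scale ht0).AC_eq, hgrad, integral_radialMeasure_comp_div (fun r => W (Y r)) ht0, ht_vol,
    ht_grad]
  ring

lemma deriv_zero_of_even {f : ℝ → ℝ} (hf : Function.Even f) : deriv f 0 = 0 := by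
  have := deriv_comp_neg f 0
  rw [neg_zero, funext hf] at this
  linarith

lemma RadialDecreasing.exists_radialProfile {n : ℕ} [NeZero n] {u : En n → ℝ}
    (hr : RadialDecreasing n u) (hu : H1Box n u) :
    ∃ Z Z' : ℝ → ℝ, RadialProfile n Z Z' ∧ AntitoneOn Z (Ici 0) ∧ Measurable Z' ∧
      u = fun x => Z ‖x‖ := by
  obtain ⟨ζ, hζ, hu_eq⟩ := hr
  set e : En n := EuclideanSpace.single 0 1
  set Z : ℝ → ℝ := fun r => u (r • e)
  have hZ_eq : ∀ r, Z r = ζ |r| := fun r => by simp [Z, e, hu_eq, norm_smul]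
  have hZ : Differentiable ℝ Z := hu.diff.comp (by fun_prop : Differentiable ℝ fun r : ℝ => r • e)
  have hZ0 : deriv Z 0 = 0 := deriv_zero_of_even fun r => by rw [hZ_eq, hZ_eq, abs_neg]
  have hderiv : ∀ r, 0 < r → HasDerivAt Z (deriv Z r) r := fun r _ => (hZ r).hasDerivAt
  have hu_norm : u = fun x => Z ‖x‖ := by
    ext x
    rw [hZ_eq, hu_eq x, abs_norm]
  refine ⟨Z, deriv Z, ⟨hderiv, ?_, fun r _ => hu.mem_Icc _, ?_, ?_⟩, fun a ha b hb hab => ?_,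
    measurable_deriv Z, hu_norm⟩
  · simpa [hZ0] using (hZ 0).hasDerivAt.hasDerivWithinAt (s := Ici 0)
  · refine (integrable_comp_norm (g := fun r => Z r ^ 2)).1 ?_
    simpa only [hu_norm] using hu.memL2.integrable_sq
  · rw [← integrable_comp_norm, ← integrable_congr (RadialProfile.norm_fderiv_sq_ae_eq hderiv),
      ← hu_norm]
    exact (memLp_two_iff_integrable_sq_norm
      (measurable_fderiv ℝ _).aestronglyMeasurable).1 hu.grad_memL2
  · rw [hZ_eq, hZ_eq, abs_of_nonneg (mem_Ici.1 ha), abs_of_nonneg (mem_Ici.1 hb)]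
    exact hζ ha hb hab

/-! ### Potentials with `W' 0 > 0` -/

/-- The profile `(1 + r²)^(-n/2)`, which is just too large at infinity to be integrable on `ℝⁿ`. -/
def slowProfile (n : ℕ) (r : ℝ) : ℝ := (1 + r ^ 2) ^ (-(n : ℝ) / 2)

section SlowProfile

variable {n : ℕ}

lemma slowProfile_pos (r : ℝ) : 0 < slowProfile n r := by
  rw [slowProfile]
  positivity

lemma slowProfile_le_one (r : ℝ) : slowProfile n r ≤ 1 :=
  Real.rpow_le_one_of_one_le_of_nonpos (by nlinarith)
    (div_nonpos_of_nonpos_of_nonneg (neg_nonpos.2 n.cast_nonneg) zero_le_two)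

lemma const_mul_slowProfile_mem {h : ℝ} (hh : h ∈ Ioc (0 : ℝ) 1) (r : ℝ) :
    h * slowProfile n r ∈ Icc 0 h :=
  ⟨mul_nonneg hh.1.le (slowProfile_pos r).le,
    mul_le_of_le_one_right hh.1.le (slowProfile_le_one r)⟩

lemma hasDerivAt_slowProfile (r : ℝ) :
    HasDerivAt (slowProfile n) (-(n * r / (1 + r ^ 2) * slowProfile n r)) r := by
  have hbase : HasDerivAt (fun r : ℝ => 1 + r ^ 2) (2 * r) r := by
    simpa using ((hasDerivAt_id r).pow 2).const_add 1
  refine (hbase.rpow_const (p := -(n : ℝ) / 2) (Or.inl (by positivity))).congr_deriv ?_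
  rw [Real.rpow_sub_one (by positivity), slowProfile]
  ring

lemma continuous_slowProfile : Continuous (slowProfile n) :=
  continuous_iff_continuousAt.2 fun r => (hasDerivAt_slowProfile r).continuousAt

lemma deriv_slowProfile_sq_le (r : ℝ) :
    (n * r / (1 + r ^ 2) * slowProfile n r) ^ 2 ≤ n ^ 2 * slowProfile n r ^ 2 := by
  have hratio : (r / (1 + r ^ 2)) ^ 2 ≤ 1 := by
    rw [sq_le_one_iff_abs_le_one, abs_div, abs_of_pos (by positivity : 0 < 1 + r ^ 2),
      div_le_one (by positivity)]
    nlinarith [sq_nonneg (|r| - 1), sq_abs r]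
  calc (n * r / (1 + r ^ 2) * slowProfile n r) ^ 2
      = n ^ 2 * slowProfile n r ^ 2 * (r / (1 + r ^ 2)) ^ 2 := by ring
    _ ≤ n ^ 2 * slowProfile n r ^ 2 := mul_le_of_le_one_right (by positivity) hratio

lemma mul_rpow_neg_le_slowProfile {r : ℝ} (hr : 1 ≤ r) :
    2 ^ (-(n : ℝ) / 2) * r ^ (-(n : ℝ)) ≤ slowProfile n r := by
  have hsq : r ^ (-(n : ℝ)) = (r ^ 2) ^ (-(n : ℝ) / 2) := by
    rw [← Real.rpow_natCast, ← Real.rpow_mul (by positivity)]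
    congr 1
    push_cast
    ring
  rw [hsq, ← Real.mul_rpow zero_le_two (by positivity)]
  exact Real.rpow_le_rpow_of_nonpos (by positivity) (by nlinarith)
    (div_nonpos_of_nonpos_of_nonneg (neg_nonpos.2 n.cast_nonneg) zero_le_two)

variable [NeZero n]

lemma integrable_slowProfile_rpow {q : ℝ} (hq : 1 < q) :
    Integrable (fun r => slowProfile n r ^ q) (radialMeasure n) := by
  have hn : (0 : ℝ) < n := Nat.cast_pos.2 (NeZero.pos n)
  rw [← integrable_comp_norm]
  convert integrable_rpow_neg_one_add_norm_sq (E := En n) (μ := volume) (r := n * q)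
    (by simpa using (lt_mul_iff_one_lt_right hn).2 hq) using 2 with x
  rw [slowProfile, ← Real.rpow_mul (by positivity)]
  congr 1
  ring

lemma integrable_slowProfile_sq : Integrable (fun r => slowProfile n r ^ 2) (radialMeasure n) := by
  simpa using integrable_slowProfile_rpow (n := n) one_lt_two

lemma not_integrable_slowProfile : ¬Integrable (slowProfile n) (radialMeasure n) := by
  obtain ⟨k, rfl⟩ := Nat.exists_eq_succ_of_ne_zero (NeZero.ne n)
  rw [Nat.succ_eq_add_one, integrable_radialMeasure_iff]
  intro hint
  set c : ℝ := 2 ^ (-((k + 1 : ℕ) : ℝ) / 2)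
  have hc : 0 < c := by positivity
  refine not_integrableOn_Ioi_inv (a := 1)
    ((integrable_const_mul_iff hc.ne'.isUnit _).1 ?_)
  refine (hint.mono_set (Ioi_subset_Ioi zero_le_one)).mono' (by fun_prop) ?_
  filter_upwards [ae_restrict_mem measurableSet_Ioi] with r (hr : 1 < r)
  have hr0 : 0 < r := one_pos.trans hr
  have hinv : r⁻¹ = r ^ k * r ^ (-((k + 1 : ℕ) : ℝ)) := by
    rw [← Real.rpow_natCast, ← Real.rpow_add hr0, ← Real.rpow_neg_one]
    congr 1
    push_cast
    ring
  calc ‖c * r⁻¹‖ = r ^ k * (c * r ^ (-((k + 1 : ℕ) : ℝ))) := by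
        rw [Real.norm_of_nonneg (by positivity), hinv]
        ring
    _ ≤ r ^ k * slowProfile (k + 1) r := by gcongr; exact mul_rpow_neg_le_slowProfile hr.le

lemma radialProfile_const_mul_slowProfile {h : ℝ} (hh : h ∈ Ioc (0 : ℝ) 1) :
    RadialProfile n (fun r => h * slowProfile n r)
      fun r => h * -(n * r / (1 + r ^ 2) * slowProfile n r) where
  hasDerivAt r _ := (hasDerivAt_slowProfile r).const_mul h
  hasDerivWithinAt_zero := by
    simpa using ((hasDerivAt_slowProfile 0).const_mul h).hasDerivWithinAt (s := Ici 0)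
  mem_Icc r _ := Icc_subset_Icc_right hh.2 (const_mul_slowProfile_mem hh r)
  integrable_sq := by
    simpa only [mul_pow] using integrable_slowProfile_sq.const_mul (h ^ 2)
  integrable_deriv_sq := by
    simp only [mul_pow h, neg_sq]
    refine Integrable.const_mul ?_ _
    have hcont : Continuous fun r => (n * r / (1 + r ^ 2) * slowProfile n r) ^ 2 :=
      ((by fun_prop (disch := intro; positivity) : Continuous fun r : ℝ => n * r / (1 + r ^ 2)).mul
        continuous_slowProfile).pow 2
    refine (integrable_slowProfile_sq.const_mul (n ^ 2)).mono' hcont.aestronglyMeasurable ?_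
    filter_upwards with r
    rw [Real.norm_of_nonneg (sq_nonneg _)]
    exact deriv_slowProfile_sq_le r

lemma integral_slowProfile_rpow_pos {q : ℝ} (hq : 1 < q) :
    0 < ∫ r, slowProfile n r ^ q ∂radialMeasure n := by
  have hpos : ∀ r, 0 < slowProfile n r ^ q := fun r => Real.rpow_pos_of_pos (slowProfile_pos r) q
  refine (integral_pos_iff_support_of_nonneg (fun r => (hpos r).le)
    (integrable_slowProfile_rpow hq)).2 ?_
  rw [Function.support_eq_univ fun r => (hpos r).ne', Measure.measure_univ_pos]
  intro h0
  refine not_integrable_slowProfile (n := n) ?_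
  rw [h0]
  exact integrable_zero_measure

end SlowProfile

namespace DoubleWell

variable {m : ℕ} {W : ℝ → ℝ}

lemma exists_mul_rpow_le_integral_Vpot_slowProfile (hW : DoubleWell W) (m : ℕ) :
    ∃ c > 0, ∀ h ∈ Ioc (0 : ℝ) 1, c * h ^ (2 * (((m + 2 : ℕ) : ℝ) / (((m + 2 : ℕ) : ℝ) - 1))) ≤
      ∫ r, Vpot (m + 2) W (h * slowProfile (m + 2) r) ∂radialMeasure (m + 2) := by
  obtain ⟨c, ⟨hc, -⟩, hlow⟩ := hW.exists_mul_sq_le_Phi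
  obtain ⟨C, hC, hup⟩ := hW.exists_Phi_le_mul_self
  obtain ⟨hq, -⟩ := volumeExponent_mem m
  set q : ℝ := ((m + 2 : ℕ) : ℝ) / (((m + 2 : ℕ) : ℝ) - 1)
  have hq0 : 0 < q := one_pos.trans hq
  refine ⟨c ^ q * ∫ r, slowProfile (m + 2) r ^ (2 * q) ∂radialMeasure (m + 2),
    mul_pos (by positivity) (integral_slowProfile_rpow_pos (by linarith)), fun h hh => ?_⟩
  have hmem : ∀ r, h * slowProfile (m + 2) r ∈ Icc (0 : ℝ) 1 := fun r =>
    Icc_subset_Icc_right hh.2 (const_mul_slowProfile_mem hh r)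
  have hcont : Continuous fun r => Vpot (m + 2) W (h * slowProfile (m + 2) r) :=
    (hW.continuousOn_Vpot m).comp_continuous (continuous_slowProfile.const_mul h) hmem
  have hint : Integrable (fun r => Vpot (m + 2) W (h * slowProfile (m + 2) r))
      (radialMeasure (m + 2)) := by
    refine ((integrable_slowProfile_rpow hq).const_mul ((C * h) ^ q)).mono'
      hcont.aestronglyMeasurable (Eventually.of_forall fun r => ?_)
    rw [Real.norm_of_nonneg (hW.Vpot_mem m (hmem r)).1, Vpot,
      ← Real.mul_rpow (mul_nonneg hC.le hh.1.le) (slowProfile_pos r).le, mul_assoc]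
    exact Real.rpow_le_rpow (hW.Phi_mem (hmem r)).1 (hup _ (hmem r)) hq0.le
  have hpoint : ∀ r, c ^ q * h ^ (2 * q) * slowProfile (m + 2) r ^ (2 * q) ≤
      Vpot (m + 2) W (h * slowProfile (m + 2) r) := fun r => by
    have hs := slowProfile_pos (n := m + 2) r
    rw [Real.rpow_mul hh.1.le, Real.rpow_mul hs.le, Real.rpow_two, Real.rpow_two,
      ← Real.mul_rpow hc.le (by positivity), ← Real.mul_rpow (by positivity) (by positivity),
      mul_assoc, ← mul_pow]
    exact Real.rpow_le_rpow (by positivity) (hlow _ (hmem r)) hq0.le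
  calc c ^ q * (∫ r, slowProfile (m + 2) r ^ (2 * q) ∂radialMeasure (m + 2)) * h ^ (2 * q)
      = ∫ r, c ^ q * h ^ (2 * q) * slowProfile (m + 2) r ^ (2 * q) ∂radialMeasure (m + 2) := by
        rw [integral_const_mul]
        ring
    _ ≤ _ := integral_mono ((integrable_slowProfile_rpow (by linarith)).const_mul _) hint hpoint

lemma not_integrable_comp_slowProfile {n : ℕ} [NeZero n] {δ c h : ℝ} (hc : 0 < c)
    (hlin : ∀ t ∈ Icc 0 δ, c * t ≤ W t) (hh : h ∈ Ioc (0 : ℝ) 1) (hδ : h ≤ δ) :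
    ¬Integrable (fun r => W (h * slowProfile n r)) (radialMeasure n) := by
  refine fun hint => not_integrable_slowProfile (n := n) ?_
  refine (integrable_const_mul_iff (mul_pos hc hh.1).ne'.isUnit _).1 (hint.mono'
    (continuous_slowProfile.const_mul _).aestronglyMeasurable (Eventually.of_forall fun r => ?_))
  rw [Real.norm_of_nonneg (mul_nonneg (mul_pos hc hh.1).le (slowProfile_pos r).le), mul_assoc]
  exact hlin _ (Icc_subset_Icc_right hδ (const_mul_slowProfile_mem hh r))

-- The Bochner integral of the non-integrable `W ∘ (h * slowProfile)` is `0`, so only the gradient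
-- contributes to the energy.
lemma exists_Psi_le_mul_rpow (hW : DoubleWell W) (m : ℕ) {δ c : ℝ} (hc : 0 < c)
    (hlin : ∀ t ∈ Icc 0 δ, c * t ≤ W t) {ε : ℝ} (hε : 0 < ε) :
    ∃ K, ∀ h ∈ Ioc (0 : ℝ) (min δ 1), Psi (m + 2) W ε 1 ≤ K * h ^ ((2 : ℝ) / (m + 1)) := by
  obtain ⟨a, ha, hvol⟩ := hW.exists_mul_rpow_le_integral_Vpot_slowProfile m
  set q : ℝ := ((m + 2 : ℕ) : ℝ) / (((m + 2 : ℕ) : ℝ) - 1) with hq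
  set A : ℝ := ∫ r, (-(((m + 2 : ℕ) : ℝ) * r / (1 + r ^ 2) * slowProfile (m + 2) r)) ^ 2
    ∂radialMeasure (m + 2)
  have : 0 ≤ A := integral_nonneg fun r => sq_nonneg _
  refine ⟨ε * A * a ^ (-(m : ℝ) / (m + 2)), fun h hh => ?_⟩
  have hh1 : h ∈ Ioc (0 : ℝ) 1 := ⟨hh.1, hh.2.trans (min_le_right _ _)⟩
  have hh0 := hh1.1
  have hlow : 0 < a * h ^ (2 * q) := by positivity
  have hPsi := (radialProfile_const_mul_slowProfile hh1).Psi_le hW hε rfl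
    (hlow.trans_le (hvol h hh1))
  rw [integral_undef (not_integrable_comp_slowProfile hc hlin hh1 (hh.2.trans (min_le_left _ _)))]
    at hPsi
  simp only [mul_pow h, integral_const_mul, mul_zero, zero_mul, add_zero] at hPsi
  have hexp : (a * h ^ (2 * q)) ^ (-(m : ℝ) / (m + 2)) * h ^ 2 =
      a ^ (-(m : ℝ) / (m + 2)) * h ^ ((2 : ℝ) / (m + 1)) := by
    rw [Real.mul_rpow ha.le (by positivity), mul_assoc, ← Real.rpow_mul hh0.le,
      ← Real.rpow_natCast h 2, ← Real.rpow_add hh0]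
    congr 2
    rw [hq, show ((m + 2 : ℕ) : ℝ) - 1 = m + 1 by push_cast; ring]
    push_cast
    field_simp
    ring
  calc Psi (m + 2) W ε 1 ≤ _ := hPsi
    _ ≤ ε * (h ^ 2 * A) * (a * h ^ (2 * q)) ^ (-(m : ℝ) / (m + 2)) := by
        gcongr ε * (h ^ 2 * A) * ?_
        exact Real.rpow_le_rpow_of_nonpos hlow (hvol h hh1)
          (div_nonpos_of_nonpos_of_nonneg (neg_nonpos.2 m.cast_nonneg) (by positivity))
    _ = ε * A * ((a * h ^ (2 * q)) ^ (-(m : ℝ) / (m + 2)) * h ^ 2) := by ring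
    _ = _ := by
        rw [hexp]
        ring

lemma Psi_nonpos (hW : DoubleWell W) (h0 : derivWithin W (Icc 0 1) 0 ≠ 0) {ε : ℝ} (hε : 0 < ε) :
    Psi (m + 2) W ε 1 ≤ 0 := by
  obtain ⟨δ, hδ, c, hc, hlin⟩ := hW.exists_mul_self_le h0
  obtain ⟨K, hK⟩ := hW.exists_Psi_le_mul_rpow m hc hlin hε
  have hexp : (0 : ℝ) < 2 / (m + 1) := by positivity
  have hlim : Tendsto (fun h : ℝ => K * h ^ ((2 : ℝ) / (m + 1))) (nhdsWithin 0 (Ioi 0))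
      (nhds 0) := by
    simpa [Real.zero_rpow hexp.ne'] using (tendsto_nhdsWithin_of_tendsto_nhds
      (Real.continuousAt_rpow_const 0 _ (Or.inr hexp.le)).tendsto).const_mul K
  refine ge_of_tendsto hlim ?_
  filter_upwards [Ioc_mem_nhdsGT (by positivity : 0 < min δ 1)] using hK

lemma not_minimizes_of_derivWithin_ne_zero (hW : DoubleWell W)
    (h0 : derivWithin W (Icc 0 1) 0 ≠ 0) {ε : ℝ} (hε : 0 < ε) {u : En (m + 2) → ℝ}
    (hr : RadialDecreasing (m + 2) u) : ¬Minimizes (m + 2) W ε u := by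
  rintro ⟨hu, hvol, hmin⟩
  obtain ⟨Z, Z', hZ, -, -, rfl⟩ := hr.exists_radialProfile hu
  have henergy := hmin.trans_le (hW.Psi_nonpos h0 hε)
  rw [hZ.AC_eq] at henergy
  have hgrad : 0 ≤ ∫ r, Z' r ^ 2 ∂radialMeasure (m + 2) := integral_nonneg fun r => sq_nonneg _
  have hpot : 0 ≤ ∫ r, W (Z r) ∂radialMeasure (m + 2) := integral_nonneg_of_ae
    (ae_radialMeasure_of_forall_pos fun r hr => hW.nonneg (hZ.mem_Icc r hr.le))
  have hgrad0 : ∫ r, Z' r ^ 2 ∂radialMeasure (m + 2) = 0 := by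
    by_contra hne
    have := lt_of_le_of_ne hgrad (Ne.symm hne)
    have : 0 < ε * ∫ r, Z' r ^ 2 ∂radialMeasure (m + 2) := by positivity
    have : 0 ≤ ε⁻¹ * ∫ r, W (Z r) ∂radialMeasure (m + 2) := by positivity
    linarith
  have hconst : ∀ x : En (m + 2), Z ‖x‖ = Z 0 := fun x =>
    hZ.eq_apply_zero_of_integral_deriv_sq_eq_zero hgrad0 (norm_nonneg x)
  simp [hconst, Measure.real] at hvol

end DoubleWell

/-! ### Inner variations -/

/-- A radial vector field `φ(r) ∂_r` vanishing at the origin, with continuous derivative `w`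
bounded by `K`. It generates the inner variations `r ↦ r + τ φ(r)`. -/
structure RadialField (K : ℝ) (φ w : ℝ → ℝ) : Prop where
  hasDerivAt : ∀ r, HasDerivAt φ (w r) r
  continuous_deriv : Continuous w
  abs_deriv_le : ∀ r, |w r| ≤ K
  map_zero : φ 0 = 0

/-- `(1 + τ φ(r)/r)^k (1 + τ w(r))^p`: the factors by which the inner variation `r ↦ r + τ φ(r)`
stretches spheres of dimension `k` and the radial direction. The Jacobian on `ℝᵏ⁺¹` is the case
`p = 1`, and squared gradients pick up the case `p = -1`. -/
def stretch (φ w : ℝ → ℝ) (k : ℕ) (p : ℤ) (τ r : ℝ) : ℝ :=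
  (1 + τ * (φ r / r)) ^ k * (1 + τ * w r) ^ p

lemma abs_one_add_le_two {x : ℝ} (hx : |x| ≤ 1 / 2) : |1 + x| ≤ 2 := by
  have := abs_le.1 hx
  rw [abs_le]
  constructor <;> linarith

lemma abs_one_add_zpow_le {x : ℝ} (hx : |x| ≤ 1 / 2) (p : ℤ) :
    |(1 + x) ^ p| ≤ 2 ^ p.natAbs := by
  have hhalf : 1 / 2 ≤ 1 + x := by linarith [(abs_le.1 hx).1]
  have hinv : |(1 + x)⁻¹| ≤ 2 := by
    rw [abs_of_pos (by positivity)]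
    exact inv_le_of_inv_le₀ two_pos (by linarith)
  obtain ⟨k, rfl | rfl⟩ := p.eq_nat_or_neg
  · simpa [abs_pow] using pow_le_pow_left₀ (abs_nonneg _) (abs_one_add_le_two hx) k
  · rw [zpow_neg, zpow_natCast, ← inv_pow, abs_pow, Int.natAbs_neg, Int.natAbs_natCast]
    exact pow_le_pow_left₀ (abs_nonneg _) hinv k

lemma mul_sub_le_sub_of_le_hasDerivAt {G g : ℝ → ℝ} {c : ℝ} (hG : ∀ x, HasDerivAt G (g x) x)
    (hg : ∀ x, c ≤ g x) {x y : ℝ} (hxy : x ≤ y) : c * (y - x) ≤ G y - G x :=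
  convex_univ.mul_sub_le_image_sub_of_le_deriv
    (continuous_iff_continuousAt.2 fun x => (hG x).continuousAt).continuousOn
    (fun x _ => (hG x).differentiableAt.differentiableWithinAt)
    (fun x _ => (hg x).trans_eq (hG x).deriv.symm) x (mem_univ x) y (mem_univ y) hxy

lemma surjective_of_le_hasDerivAt {G g : ℝ → ℝ} {c : ℝ} (hc : 0 < c)
    (hG : ∀ x, HasDerivAt G (g x) x) (hg : ∀ x, c ≤ g x) : Function.Surjective G := by
  refine (continuous_iff_continuousAt.2 fun x => (hG x).continuousAt).surjective ?_ ?_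
  · refine tendsto_atTop_mono' _ ?_
      (tendsto_atTop_add_const_right _ (G 0) (tendsto_id.const_mul_atTop hc))
    filter_upwards [eventually_ge_atTop 0] with x hx
    simpa [le_sub_iff_add_le] using mul_sub_le_sub_of_le_hasDerivAt hG hg hx
  · refine tendsto_atBot_mono' _ ?_
      (tendsto_atBot_add_const_right _ (G 0) (tendsto_id.const_mul_atBot hc))
    filter_upwards [eventually_le_atBot 0] with x hx
    have := mul_sub_le_sub_of_le_hasDerivAt hG hg hx
    simp only [id]
    linarith

lemma exists_orderIso_of_le_hasDerivAt {G g : ℝ → ℝ} {c : ℝ} (hc : 0 < c)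
    (hG : ∀ x, HasDerivAt G (g x) x) (hg : ∀ x, c ≤ g x) :
    ∃ e : ℝ ≃o ℝ, (∀ x, e x = G x) ∧ ∀ y, HasDerivAt e.symm (g (e.symm y))⁻¹ y := by
  have hpos : ∀ x, 0 < g x := fun x => hc.trans_le (hg x)
  have hmono : StrictMono G := strictMono_of_deriv_pos fun x => by
    rw [(hG x).deriv]
    exact hpos x
  set e : ℝ ≃o ℝ := hmono.orderIsoOfSurjective _ (surjective_of_le_hasDerivAt hc hG hg)
  exact ⟨e, fun _ => rfl, fun y => HasDerivAt.of_local_left_inverse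
    e.symm.continuous.continuousAt (hG _) (hpos _).ne' (Eventually.of_forall e.apply_symm_apply)⟩

lemma hasDerivAt_integral_mul {α : Type*} [MeasurableSpace α] {μ : Measure α} {g : α → ℝ}
    {p p' : ℝ → α → ℝ} {τ₀ C : ℝ} {s : Set ℝ} (hs : s ∈ nhds τ₀) (hg : Integrable g μ)
    (hp_meas : ∀ τ, AEStronglyMeasurable (p τ) μ) (hp_int : Integrable (fun x => g x * p τ₀ x) μ)
    (hp'_meas : AEStronglyMeasurable (p' τ₀) μ)
    (hp' : ∀ τ ∈ s, ∀ x, HasDerivAt (fun τ => p τ x) (p' τ x) τ)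
    (hC : ∀ τ ∈ s, ∀ x, |p' τ x| ≤ C) :
    HasDerivAt (fun τ => ∫ x, g x * p τ x ∂μ) (∫ x, g x * p' τ₀ x ∂μ) τ₀ := by
  refine (hasDerivAt_integral_of_dominated_loc_of_deriv_le (bound := fun x => |g x| * C) hs
    (Eventually.of_forall fun τ => hg.aestronglyMeasurable.mul (hp_meas τ)) hp_int
    (hg.aestronglyMeasurable.mul hp'_meas) (Eventually.of_forall fun x τ hτ => ?_)
    (hg.abs.mul_const C) (Eventually.of_forall fun x τ hτ => (hp' τ hτ x).const_mul (g x))).2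
  rw [norm_mul]
  exact mul_le_mul_of_nonneg_left (hC τ hτ x) (abs_nonneg _)

namespace RadialField

variable {K τ : ℝ} {φ w : ℝ → ℝ}

lemma continuous (h : RadialField K φ w) : Continuous φ :=
  continuous_iff_continuousAt.2 fun r => (h.hasDerivAt r).continuousAt

lemma abs_div_le (h : RadialField K φ w) (r : ℝ) : |φ r / r| ≤ K := by
  have hφ : |φ r| ≤ K * |r| := by
    simpa [h.map_zero] using convex_univ.norm_image_sub_le_of_norm_hasDerivWithin_le
      (fun x _ => (h.hasDerivAt x).hasDerivWithinAt) (fun x _ => h.abs_deriv_le x)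
      (mem_univ (0 : ℝ)) (mem_univ r)
  rw [abs_div]
  exact div_le_of_le_mul₀ (abs_nonneg r) ((abs_nonneg _).trans (h.abs_deriv_le 0)) hφ

lemma eventually_abs_mul_le (K : ℝ) : ∀ᶠ τ in nhds (0 : ℝ), |τ| * K ≤ 1 / 2 := by
  have : Tendsto (fun τ : ℝ => |τ| * K) (nhds 0) (nhds 0) := by
    simpa using (by fun_prop : Continuous fun τ : ℝ => |τ| * K).tendsto 0
  exact this.eventually_le_const (by norm_num)

lemma abs_mul_div_le (h : RadialField K φ w) (hτ : |τ| * K ≤ 1 / 2) (r : ℝ) :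
    |τ * (φ r / r)| ≤ 1 / 2 := by
  rw [abs_mul]
  exact (mul_le_mul_of_nonneg_left (h.abs_div_le r) (abs_nonneg τ)).trans hτ

lemma abs_mul_deriv_le (h : RadialField K φ w) (hτ : |τ| * K ≤ 1 / 2) (r : ℝ) :
    |τ * w r| ≤ 1 / 2 := by
  rw [abs_mul]
  exact (mul_le_mul_of_nonneg_left (h.abs_deriv_le r) (abs_nonneg τ)).trans hτ

lemma half_le_one_add (h : RadialField K φ w) (hτ : |τ| * K ≤ 1 / 2) (r : ℝ) :
    1 / 2 ≤ 1 + τ * w r := by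
  linarith [(abs_le.1 (h.abs_mul_deriv_le hτ r)).1]

lemma hasDerivAt_deform (h : RadialField K φ w) (τ r : ℝ) :
    HasDerivAt (fun r => r + τ * φ r) (1 + τ * w r) r :=
  (hasDerivAt_id r).add ((h.hasDerivAt r).const_mul τ)

lemma exists_inverse (h : RadialField K φ w) (hτ : |τ| * K ≤ 1 / 2) :
    ∃ S : ℝ → ℝ, (∀ r, S (r + τ * φ r) = r) ∧ (∀ y, S y + τ * φ (S y) = y) ∧ S 0 = 0 ∧
      StrictMono S ∧ ∀ y, HasDerivAt S (1 + τ * w (S y))⁻¹ y := by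
  obtain ⟨e, he, hderiv⟩ := exists_orderIso_of_le_hasDerivAt one_half_pos
    (h.hasDerivAt_deform τ) (h.half_le_one_add hτ)
  have hleft : ∀ r, e.symm (r + τ * φ r) = r := fun r => by rw [← he, e.symm_apply_apply]
  have hright : ∀ y, e.symm y + τ * φ (e.symm y) = y := fun y => by
    rw [← he, e.apply_symm_apply]
  exact ⟨e.symm, hleft, hright, by simpa [h.map_zero] using hleft 0, e.symm.strictMono, hderiv⟩

section Stretch

variable (k : ℕ) (p : ℤ)

lemma measurable_stretch (h : RadialField K φ w) (τ : ℝ) : Measurable (stretch φ w k p τ) := by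
  have := h.continuous.measurable
  have := h.continuous_deriv.measurable
  unfold stretch
  fun_prop

lemma abs_stretch_le (h : RadialField K φ w) (hτ : |τ| * K ≤ 1 / 2) (r : ℝ) :
    |stretch φ w k p τ r| ≤ 2 ^ k * 2 ^ p.natAbs := by
  rw [stretch, abs_mul, abs_pow]
  gcongr
  · exact abs_one_add_le_two (h.abs_mul_div_le hτ r)
  · exact abs_one_add_zpow_le (h.abs_mul_deriv_le hτ r) p

lemma integrable_mul_stretch (h : RadialField K φ w) (hτ : |τ| * K ≤ 1 / 2) {μ : Measure ℝ}
    {g : ℝ → ℝ} (hg : Integrable g μ) : Integrable (fun r => g r * stretch φ w k p τ r) μ :=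
  hg.mul_bdd (h.measurable_stretch k p τ).aestronglyMeasurable
    (Eventually.of_forall (h.abs_stretch_le k p hτ))

lemma hasDerivAt_stretch (h : RadialField K φ w) (hτ : |τ| * K ≤ 1 / 2) (r : ℝ) :
    HasDerivAt (fun τ => stretch φ w k p τ r)
      (k * (φ r / r) * stretch φ w (k - 1) p τ r + p * w r * stretch φ w k (p - 1) τ r) τ := by
  have hlin : ∀ x : ℝ, HasDerivAt (fun τ => 1 + τ * x) x τ := fun x => by
    simpa using ((hasDerivAt_id τ).mul_const x).const_add 1
  have hne : 1 + τ * w r ≠ 0 := by linarith [h.half_le_one_add hτ r]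
  refine (((hlin (φ r / r)).pow k).mul
    ((hasDerivAt_zpow p _ (Or.inl hne)).comp τ (hlin (w r)))).congr_deriv ?_
  simp only [stretch, Function.comp_apply, Pi.pow_apply]
  ring

lemma hasDerivAt_integral_mul_stretch (h : RadialField K φ w) {μ : Measure ℝ} {g : ℝ → ℝ}
    (hg : Integrable g μ) :
    HasDerivAt (fun τ => ∫ r, g r * stretch φ w k p τ r ∂μ)
      (∫ r, g r * (k * (φ r / r) + p * w r) ∂μ) 0 := by
  have h0 : |(0 : ℝ)| * K ≤ 1 / 2 := by norm_num
  have hmeas := h.continuous.measurable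
  have hmeas' := h.continuous_deriv.measurable
  have := hasDerivAt_integral_mul (p := stretch φ w k p)
    (p' := fun τ r => k * (φ r / r) * stretch φ w (k - 1) p τ r +
      p * w r * stretch φ w k (p - 1) τ r)
    (C := k * K * (2 ^ (k - 1) * 2 ^ p.natAbs) + |(p : ℝ)| * K * (2 ^ k * 2 ^ (p - 1).natAbs))
    (eventually_abs_mul_le K) hg (fun τ => (h.measurable_stretch k p τ).aestronglyMeasurable)
    (h.integrable_mul_stretch k p h0 hg) ?_ (fun τ hτ r => h.hasDerivAt_stretch k p hτ r) ?_
  · simpa [stretch] using this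
  · have := h.measurable_stretch (k - 1) p 0
    have := h.measurable_stretch k (p - 1) 0
    exact Measurable.aestronglyMeasurable (by fun_prop)
  · intro τ hτ r
    refine (abs_add_le _ _).trans ?_
    rw [abs_mul, abs_mul, abs_mul, abs_mul, Nat.abs_cast]
    have hK : 0 ≤ K := (abs_nonneg _).trans (h.abs_deriv_le 0)
    gcongr
    · exact h.abs_div_le r
    · exact h.abs_stretch_le _ _ hτ r
    · exact h.abs_deriv_le r
    · exact h.abs_stretch_le _ _ hτ r

end Stretch

section ChangeOfVariables

variable {k : ℕ} {S : ℝ → ℝ}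

lemma image_deform_Ioi (hleft : ∀ r, S (r + τ * φ r) = r) (hright : ∀ y, S y + τ * φ (S y) = y)
    (hS0 : S 0 = 0) (hS : StrictMono S) : (fun r => r + τ * φ r) '' Ioi 0 = Ioi 0 := by
  ext y
  constructor
  · rintro ⟨r, hr : 0 < r, rfl⟩
    rwa [mem_Ioi, ← hS.lt_iff_lt, hS0, hleft]
  · intro hy
    exact ⟨S y, hS0.symm.trans_lt (hS hy), hright y⟩

lemma comp_inverse_changeOfVariables (h : RadialField K φ w) (hτ : |τ| * K ≤ 1 / 2)
    (hleft : ∀ r, S (r + τ * φ r) = r) (hright : ∀ y, S y + τ * φ (S y) = y) (hS0 : S 0 = 0)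
    (hS : StrictMono S) (G : ℝ → ℝ) :
    (∫ y, G (S y) ∂radialMeasure (k + 1) =
        ∫ r, G r * stretch φ w k 1 τ r ∂radialMeasure (k + 1)) ∧
      (Integrable (fun y => G (S y)) (radialMeasure (k + 1)) ↔
        Integrable (fun r => G r * stretch φ w k 1 τ r) (radialMeasure (k + 1))) := by
  have himage := image_deform_Ioi hleft hright hS0 hS
  have hinj : InjOn (fun r => r + τ * φ r) (Ioi 0) := fun a _ b _ hab => by
    rw [← hleft a, ← hleft b]
    exact congrArg S hab
  have hderiv : ∀ r ∈ Ioi (0 : ℝ),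
      HasDerivWithinAt (fun r => r + τ * φ r) (1 + τ * w r) (Ioi 0) r :=
    fun r _ => (h.hasDerivAt_deform τ r).hasDerivWithinAt
  have hpoint : ∀ r ∈ Ioi (0 : ℝ),
      |1 + τ * w r| • ((r + τ * φ r) ^ k * G (S (r + τ * φ r))) =
        r ^ k * (G r * stretch φ w k 1 τ r) := fun r (hr : 0 < r) => by
    rw [hleft, abs_of_pos (by linarith [h.half_le_one_add hτ r]), stretch, zpow_one, smul_eq_mul,
      show r + τ * φ r = r * (1 + τ * (φ r / r)) by field_simp, mul_pow]
    ring
  rw [integral_radialMeasure, integral_radialMeasure, integrable_radialMeasure_iff,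
    integrable_radialMeasure_iff, ← integrableOn_congr_fun hpoint measurableSet_Ioi,
    ← setIntegral_congr_fun measurableSet_Ioi hpoint,
    ← integral_image_eq_integral_abs_deriv_smul measurableSet_Ioi hderiv hinj
      fun y => y ^ k * G (S y),
    ← integrableOn_image_iff_integrableOn_abs_deriv_smul measurableSet_Ioi hderiv hinj
      fun y => y ^ k * G (S y), himage]
  exact ⟨rfl, Iff.rfl⟩

end ChangeOfVariables

end RadialField

lemma RadialProfile.exists_deform {k : ℕ} {Z Z' φ w : ℝ → ℝ} {K τ : ℝ}
    (hZ : RadialProfile (k + 1) Z Z') (h : RadialField K φ w) (hτ : |τ| * K ≤ 1 / 2) :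
    ∃ Y Y', RadialProfile (k + 1) Y Y' ∧
      (∫ r, Y' r ^ 2 ∂radialMeasure (k + 1) =
        ∫ r, Z' r ^ 2 * stretch φ w k (-1) τ r ∂radialMeasure (k + 1)) ∧
      ∀ F : ℝ → ℝ, ∫ r, F (Y r) ∂radialMeasure (k + 1) =
        ∫ r, F (Z r) * stretch φ w k 1 τ r ∂radialMeasure (k + 1) := by
  obtain ⟨S, hleft, hright, hS0, hS, hderiv⟩ := h.exists_inverse hτ
  have hchange := h.comp_inverse_changeOfVariables (k := k) hτ hleft hright hS0 hS
  have hS_pos : ∀ y, 0 < y → 0 < S y := fun y hy => hS0.symm.trans_lt (hS hy)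
  have hS_nonneg : ∀ y, 0 ≤ y → 0 ≤ S y := fun y hy => hS0.symm.trans_le (hS.monotone hy)
  have hgrad : ∀ r, (Z' r * (1 + τ * w r)⁻¹) ^ 2 * stretch φ w k 1 τ r =
      Z' r ^ 2 * stretch φ w k (-1) τ r := fun r => by
    have : 0 < 1 + τ * w r := by linarith [h.half_le_one_add hτ r]
    simp only [stretch, zpow_one, zpow_neg_one]
    field_simp
  refine ⟨fun y => Z (S y), fun y => Z' (S y) * (1 + τ * w (S y))⁻¹,
    ⟨fun y hy => (hZ.hasDerivAt _ (hS_pos y hy)).comp y (hderiv y), ?_,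
      fun y hy => hZ.mem_Icc _ (hS_nonneg y hy), ?_, ?_⟩, ?_, fun F => (hchange fun r => F (Z r)).1⟩
  · have hzero : HasDerivWithinAt Z 0 (Ici 0) (S 0) := hS0.symm ▸ hZ.hasDerivWithinAt_zero
    simpa [Function.comp_def] using
      hzero.comp (0 : ℝ) ((hderiv 0).hasDerivWithinAt (s := Ici 0)) hS_nonneg
  · rw [(hchange fun r => Z r ^ 2).2]
    exact h.integrable_mul_stretch _ _ hτ hZ.integrable_sq
  · rw [(hchange fun r => (Z' r * (1 + τ * w r)⁻¹) ^ 2).2]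
    simp only [hgrad]
    exact h.integrable_mul_stretch _ _ hτ hZ.integrable_deriv_sq
  · rw [(hchange fun r => (Z' r * (1 + τ * w r)⁻¹) ^ 2).1]
    simp only [hgrad]

/-! ### Minimizing profiles and the virial identity -/

/-- `Z`, with derivative `Z'`, is the profile of a radial decreasing minimizer of `ψ(ε)` on
`ℝᵐ⁺²`. -/
structure MinimizingProfile (m : ℕ) (W : ℝ → ℝ) (ε : ℝ) (Z Z' : ℝ → ℝ) : Prop where
  radialProfile : RadialProfile (m + 2) Z Z'
  antitoneOn : AntitoneOn Z (Ici 0)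
  measurable_deriv : Measurable Z'
  volume_eq_one : ∫ r, Vpot (m + 2) W (Z r) ∂radialMeasure (m + 2) = 1
  Psi_eq : Psi (m + 2) W ε 1 = ε * ∫ r, Z' r ^ 2 ∂radialMeasure (m + 2) +
    ε⁻¹ * ∫ r, W (Z r) ∂radialMeasure (m + 2)
  integrable_potential : Integrable (fun r => W (Z r)) (radialMeasure (m + 2))
  integrable_volume : Integrable (fun r => Vpot (m + 2) W (Z r)) (radialMeasure (m + 2))

/-- The Lagrange multiplier `λ(ε)` on `ℝᵐ⁺²`, after substituting the energy of `Z` for `ψ(ε)`. -/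
def multiplier (m : ℕ) (W : ℝ → ℝ) (ε : ℝ) (Z Z' : ℝ → ℝ) : ℝ :=
  ε⁻¹ * ∫ r, W (Z r) ∂radialMeasure (m + 2) +
    (m : ℝ) / (m + 2) * (ε * ∫ r, Z' r ^ 2 ∂radialMeasure (m + 2))

section Integrable

variable {m : ℕ} {W Y Y' : ℝ → ℝ}

lemma RadialProfile.integrable_potential (h : RadialProfile (m + 2) Y Y') (hW : DoubleWell W)
    (h0 : derivWithin W (Icc 0 1) 0 = 0) :
    Integrable (fun r => W (Y r)) (radialMeasure (m + 2)) := by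
  obtain ⟨C, -, hC⟩ := hW.exists_le_mul_sq h0
  exact h.integrable_comp hW.continuousOn fun t ht => by
    rw [abs_of_nonneg (hW.nonneg ht)]
    exact hC t ht

lemma RadialProfile.integrable_volume (h : RadialProfile (m + 2) Y Y') (hW : DoubleWell W)
    (h0 : derivWithin W (Icc 0 1) 0 = 0) :
    Integrable (fun r => Vpot (m + 2) W (Y r)) (radialMeasure (m + 2)) := by
  obtain ⟨C, -, hC⟩ := hW.exists_Phi_le_mul_sq h0
  exact h.integrable_comp (hW.continuousOn_Vpot m) fun t ht => by
    rw [abs_of_nonneg (hW.Vpot_mem m ht).1]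
    exact (hW.Vpot_le_Phi m ht).trans (hC t ht)

lemma Minimizes.exists_minimizingProfile (hW : DoubleWell W)
    (h0 : derivWithin W (Icc 0 1) 0 = 0) {ε : ℝ} {u : En (m + 2) → ℝ}
    (hu : Minimizes (m + 2) W ε u) (hr : RadialDecreasing (m + 2) u) :
    ∃ Z Z', MinimizingProfile m W ε Z Z' ∧ u = fun x => Z ‖x‖ := by
  obtain ⟨hu, hvol, hmin⟩ := hu
  obtain ⟨Z, Z', hZ, hanti, hmeas, rfl⟩ := hr.exists_radialProfile hu
  refine ⟨Z, Z', ⟨hZ, hanti, hmeas, ?_, ?_, hZ.integrable_potential hW h0,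
    hZ.integrable_volume hW h0⟩, rfl⟩
  · rw [← hvol, integral_comp_norm fun r => Vpot (m + 2) W (Z r)]
  · rw [← hmin, hZ.AC_eq]

end Integrable

namespace MinimizingProfile

variable {m : ℕ} {W Z Z' φ w : ℝ → ℝ} {ε K : ℝ}

/-- The energy of the inner variation of `Z` along `φ`, dilated so that its volume is `1`. -/
def deformedEnergy (m : ℕ) (W : ℝ → ℝ) (ε : ℝ) (Z Z' φ w : ℝ → ℝ) (τ : ℝ) : ℝ :=
  ε * (∫ r, Z' r ^ 2 * stretch φ w (m + 1) (-1) τ r ∂radialMeasure (m + 2)) *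
      (∫ r, Vpot (m + 2) W (Z r) * stretch φ w (m + 1) 1 τ r ∂radialMeasure (m + 2)) ^
        (-(m : ℝ) / (m + 2)) +
    ε⁻¹ * (∫ r, W (Z r) * stretch φ w (m + 1) 1 τ r ∂radialMeasure (m + 2)) *
      (∫ r, Vpot (m + 2) W (Z r) * stretch φ w (m + 1) 1 τ r ∂radialMeasure (m + 2))⁻¹

lemma isLocalMin_deformedEnergy (hZ : MinimizingProfile m W ε Z Z') (hW : DoubleWell W)
    (hε : 0 < ε) (h : RadialField K φ w) : IsLocalMin (deformedEnergy m W ε Z Z' φ w) 0 := by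
  have hvol_pos : ∀ᶠ τ in nhds (0 : ℝ), 0 <
      ∫ r, Vpot (m + 2) W (Z r) * stretch φ w (m + 1) 1 τ r ∂radialMeasure (m + 2) :=
    (h.hasDerivAt_integral_mul_stretch (m + 1) 1
      hZ.integrable_volume).continuousAt.eventually_const_lt (by
        simp [stretch, hZ.volume_eq_one])
  filter_upwards [hvol_pos, RadialField.eventually_abs_mul_le K] with τ hpos hτ
  obtain ⟨Y, Y', hY, hgrad, hcomp⟩ := hZ.radialProfile.exists_deform h hτ
  have hPsi := hY.Psi_le hW hε (hcomp _) hpos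
  rw [hgrad, hcomp, hZ.Psi_eq] at hPsi
  simpa [deformedEnergy, stretch, hZ.volume_eq_one] using hPsi

lemma virial (hZ : MinimizingProfile m W ε Z Z') (hW : DoubleWell W) (hε : 0 < ε)
    (h : RadialField K φ w) :
    ε * ∫ r, Z' r ^ 2 * ((m + 1) * (φ r / r) - w r) ∂radialMeasure (m + 2) +
        ε⁻¹ * ∫ r, W (Z r) * ((m + 1) * (φ r / r) + w r) ∂radialMeasure (m + 2) =
      multiplier m W ε Z Z' *
        ∫ r, Vpot (m + 2) W (Z r) * ((m + 1) * (φ r / r) + w r) ∂radialMeasure (m + 2) := by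
  have hgrad := h.hasDerivAt_integral_mul_stretch (m + 1) (-1)
    hZ.radialProfile.integrable_deriv_sq
  have hpot := h.hasDerivAt_integral_mul_stretch (m + 1) 1 hZ.integrable_potential
  have hvol := h.hasDerivAt_integral_mul_stretch (m + 1) 1 hZ.integrable_volume
  have hvol0 :
      ∫ r, Vpot (m + 2) W (Z r) * stretch φ w (m + 1) 1 0 r ∂radialMeasure (m + 2) = 1 := by
    simp [stretch, hZ.volume_eq_one]
  have henergy := ((hgrad.const_mul ε).mul
    (hvol.rpow_const (p := -(m : ℝ) / (m + 2)) (Or.inl (by simp [hvol0])))).add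
    ((hpot.const_mul ε⁻¹).mul (hvol.inv (by simp [hvol0])))
  have hzero := (hZ.isLocalMin_deformedEnergy hW hε h).hasDerivAt_eq_zero henergy
  simp only [Pi.inv_apply, stretch, hZ.volume_eq_one, zero_mul, add_zero, one_pow, one_zpow,
    mul_one, Real.one_rpow, inv_one, div_one, Nat.cast_add, Nat.cast_one, Int.cast_neg,
    Int.cast_one, one_mul, neg_mul, ← sub_eq_add_neg] at hzero
  rw [multiplier]
  linear_combination hzero

end MinimizingProfile

/-! ### Approximate transition profiles -/

/-- An approximate solution `η` of the transition equation `η' = -√(W η)`, joining `1` to `0` at the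
exponential rate `c`, with speed `v` and equipartition of energy up to the defect `B`. Exact
solutions reach the wells in finite time when `W'` does not vanish there. -/
structure ApproxTransition (W : ℝ → ℝ) (c B : ℝ) (η v : ℝ → ℝ) : Prop where
  hasDerivAt : ∀ s, HasDerivAt η (-v s) s
  mem_Ioo : ∀ s, η s ∈ Ioo (0 : ℝ) 1
  continuous_speed : Continuous v
  speed_nonneg : ∀ s, 0 ≤ v s
  speed_le : ∀ s, v s ≤ √(W (η s))
  energy_le : ∀ s, v s ^ 2 + W (η s) ≤ (2 * √(W (η s)) + B) * v s
  le_exp : ∀ s, η s ≤ rexp (-(c * s))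
  one_sub_le_exp : ∀ s, 1 - η s ≤ rexp (c * s)

/-- The speed `√(W t)` relative to that of the logistic equation `t' = t (1 - t)`, truncated at
`ε⁻¹`. Only its values on `(0, 1)` are meaningful. -/
def truncatedRate (W : ℝ → ℝ) (ε t : ℝ) : ℝ := min (√(W t) / (t * (1 - t))) ε⁻¹

section TruncatedRate

variable {W : ℝ → ℝ} {ε t : ℝ}

lemma mul_one_sub_pos (ht : t ∈ Ioo (0 : ℝ) 1) : 0 < t * (1 - t) :=
  mul_pos ht.1 (sub_pos.2 ht.2)

lemma mul_truncatedRate_le (ht : t ∈ Ioo (0 : ℝ) 1) :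
    t * (1 - t) * truncatedRate W ε t ≤ √(W t) := by
  rw [mul_comm, ← le_div_iff₀ (mul_one_sub_pos ht)]
  exact min_le_left _ _

lemma DoubleWell.continuousOn_truncatedRate (hW : DoubleWell W) (ε : ℝ) :
    ContinuousOn (truncatedRate W ε) (Ioo 0 1) :=
  ((hW.continuousOn_sqrt.mono Ioo_subset_Icc_self).div (by fun_prop)
    fun _ ht => (mul_one_sub_pos ht).ne').inf continuousOn_const

lemma DoubleWell.exists_le_truncatedRate (hW : DoubleWell W) :
    ∃ c > 0, ∀ ε ∈ Ioc (0 : ℝ) 1, ∀ t ∈ Ioo (0 : ℝ) 1, c ≤ truncatedRate W ε t := by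
  obtain ⟨c, hc, hsqrt⟩ := hW.exists_mul_le_sqrt
  refine ⟨min c 1, by positivity, fun ε hε t ht => le_min ?_ ?_⟩
  · exact (min_le_left _ _).trans
      ((le_div_iff₀ (mul_one_sub_pos ht)).2 (hsqrt t (Ioo_subset_Icc_self ht)))
  · exact (min_le_right _ _).trans ((one_le_inv₀ hε.1).2 hε.2)

lemma DoubleWell.exists_truncatedRate_defect_le (hW : DoubleWell W) :
    ∃ C > 0, ∀ ε > 0, ∀ t ∈ Ioo (0 : ℝ) 1,
      (√(W t) - t * (1 - t) * truncatedRate W ε t) ^ 2 ≤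
        C * ε * (t * (1 - t) * truncatedRate W ε t) := by
  obtain ⟨C, hC, hupper⟩ := hW.exists_le_mul
  refine ⟨C, hC, fun ε hε t ht => ?_⟩
  have hpos := mul_one_sub_pos ht
  have hle := mul_truncatedRate_le (W := W) (ε := ε) ht
  rcases le_total (√(W t) / (t * (1 - t))) ε⁻¹ with h | h
  · rw [truncatedRate, min_eq_left h, mul_div_cancel₀ _ hpos.ne']
    simpa using by positivity
  · rw [truncatedRate, min_eq_right h] at hle ⊢
    have hsq := hupper t (Ioo_subset_Icc_self ht)
    calc (√(W t) - t * (1 - t) * ε⁻¹) ^ 2 ≤ √(W t) ^ 2 :=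
          pow_le_pow_left₀ (sub_nonneg.2 hle) (sub_le_self _ (by positivity)) 2
      _ = W t := Real.sq_sqrt (hW.nonneg (Ioo_subset_Icc_self ht))
      _ ≤ C * (t * (1 - t)) := hsq
      _ = C * ε * (t * (1 - t) * ε⁻¹) := by field_simp

end TruncatedRate

lemma exists_hasDerivAt_eq_comp {b : ℝ → ℝ} {c M : ℝ} (hb : Continuous b) (hc : 0 < c)
    (hbc : ∀ x, c ≤ b x) (hbM : ∀ x, b x ≤ M) :
    ∃ X : ℝ → ℝ, X 0 = 0 ∧ ∀ s, HasDerivAt X (b (X s)) s := by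
  have hpos : ∀ x, 0 < b x := fun x => hc.trans_le (hbc x)
  have hinv : Continuous fun x => (b x)⁻¹ := hb.inv₀ fun x => (hpos x).ne'
  obtain ⟨e, he, hderiv⟩ := exists_orderIso_of_le_hasDerivAt (c := M⁻¹)
    (inv_pos.2 ((hpos 0).trans_le (hbM 0)))
    (fun x => (hinv.integral_hasStrictDerivAt 0 x).hasDerivAt)
    fun x => inv_anti₀ (hpos x) (hbM x)
  refine ⟨e.symm, ?_, fun s => by simpa using hderiv s⟩
  rw [e.symm_apply_eq, he, intervalIntegral.integral_same]

lemma sigmoid_le_exp {x y : ℝ} (h : 0 ≤ y ∨ x ≤ y) : sigmoid x ≤ rexp y := by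
  rcases h with h | h
  · exact (sigmoid_le_one x).trans (one_le_exp h)
  · have := sigmoid_mul_rexp_neg (-x)
    rw [neg_neg] at this
    rw [← this]
    exact (mul_le_of_le_one_left (exp_pos x).le (sigmoid_le_one _)).trans (exp_le_exp.2 h)

lemma DoubleWell.exists_approxTransition {W : ℝ → ℝ} (hW : DoubleWell W) :
    ∃ c > 0, ∃ C > 0, ∀ ε ∈ Ioc (0 : ℝ) 1, ∃ η v, ApproxTransition W c (C * ε) η v := by
  obtain ⟨c, hc, hrate⟩ := hW.exists_le_truncatedRate
  obtain ⟨C, hC, hdefect⟩ := hW.exists_truncatedRate_defect_le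
  refine ⟨c, hc, C, hC, fun ε hε => ?_⟩
  have hmem : ∀ x, sigmoid x ∈ Ioo (0 : ℝ) 1 := fun x => ⟨sigmoid_pos x, sigmoid_lt_one x⟩
  have hcont : Continuous fun x => truncatedRate W ε (sigmoid (-x)) :=
    (hW.continuousOn_truncatedRate ε).comp_continuous (by fun_prop) fun x => hmem _
  obtain ⟨X, hX0, hX⟩ := exists_hasDerivAt_eq_comp hcont hc (fun x => hrate ε hε _ (hmem _))
    fun x => min_le_right _ _
  have hXcont : Continuous X := continuous_iff_continuousAt.2 fun s => (hX s).continuousAt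
  have hgrow : ∀ x y, x ≤ y → c * (y - x) ≤ X y - X x := fun x y =>
    mul_sub_le_sub_of_le_hasDerivAt hX fun x => hrate ε hε _ (hmem _)
  set η : ℝ → ℝ := fun s => sigmoid (-X s)
  refine ⟨η, fun s => η s * (1 - η s) * truncatedRate W ε (η s), fun s => ?_, fun s => hmem _,
    ?_, fun s => ?_, fun s => mul_truncatedRate_le (hmem _), fun s => ?_, fun s => ?_, fun s => ?_⟩
  · refine ((hasDerivAt_sigmoid (-X s)).comp s (hX s).fun_neg).congr_deriv ?_
    simp only [η]
    ring
  · have := hcont.comp hXcont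
    simp only [η]
    fun_prop
  · exact mul_nonneg (mul_one_sub_pos (hmem _)).le (hc.le.trans (hrate ε hε _ (hmem _)))
  · have hsq := Real.sq_sqrt (hW.nonneg (Ioo_subset_Icc_self (hmem (-X s))))
    linarith [hdefect ε hε.1 _ (hmem (-X s))]
  · refine sigmoid_le_exp ((le_total s 0).imp (fun hs => ?_) fun hs => ?_)
    · nlinarith
    · linarith [hgrow 0 s hs]
  · rw [← sigmoid_neg, neg_neg]
    refine sigmoid_le_exp ((le_total 0 s).imp (fun hs => ?_) fun hs => ?_)
    · positivity
    · linarith [hgrow s 0 hs]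

lemma integrable_one_add_sq_mul_exp {c : ℝ} (hc : 0 < c) :
    Integrable fun s : ℝ => (1 + s ^ 2) * rexp (-(c * |s|)) := by
  refine (integrable_inv_one_add_sq.const_mul (2 * (1 + 24 / c ^ 4))).mono'
    (by fun_prop : Continuous _).aestronglyMeasurable (Eventually.of_forall fun s => ?_)
  have hquartic : s ^ 4 ≤ 24 / c ^ 4 * rexp (c * |s|) := by
    have := Real.pow_div_factorial_le_exp (c * |s|) (by positivity) 4
    rw [mul_pow, Even.pow_abs (by decide), div_le_iff₀ (by positivity)] at this
    rw [div_mul_eq_mul_div, le_div_iff₀ (by positivity)]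
    simpa [Nat.factorial, mul_comm] using this
  rw [Real.norm_of_nonneg (by positivity), exp_neg, ← div_eq_mul_inv, ← div_eq_mul_inv,
    div_le_div_iff₀ (exp_pos _) (by positivity)]
  calc (1 + s ^ 2) * (1 + s ^ 2) ≤ 2 * (1 + s ^ 4) := by nlinarith [sq_nonneg (s ^ 2 - 1)]
    _ ≤ 2 * (rexp (c * |s|) + 24 / c ^ 4 * rexp (c * |s|)) := by
        gcongr
        exact one_le_exp (by positivity)
    _ = 2 * (1 + 24 / c ^ 4) * rexp (c * |s|) := by ring

/-- `∫ (1 + s²) e^{-c|s|} ds`, which bounds the moments of a transition layer of rate `c`. -/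
def layerMoment (c : ℝ) : ℝ := ∫ s, (1 + s ^ 2) * rexp (-(c * |s|))

lemma layerMoment_nonneg (c : ℝ) : 0 ≤ layerMoment c := integral_nonneg fun _ => by positivity

lemma setIntegral_Ioi_le_layerMoment {c M : ℝ} (hc : 0 < c) {g : ℝ → ℝ} (hg : Continuous g)
    (hg0 : ∀ s, 0 ≤ g s) (hgM : ∀ s, g s ≤ M * ((1 + s ^ 2) * rexp (-(c * |s|)))) :
    Integrable g ∧ ∀ a, ∫ s in Ioi a, g s ≤ M * layerMoment c := by
  have hdom := (integrable_one_add_sq_mul_exp hc).const_mul M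
  have hint : Integrable g := hdom.mono' hg.aestronglyMeasurable
    (Eventually.of_forall fun s => (Real.norm_of_nonneg (hg0 s)).trans_le (hgM s))
  refine ⟨hint, fun a => ?_⟩
  calc ∫ s in Ioi a, g s ≤ ∫ s, g s := setIntegral_le_integral hint (Eventually.of_forall hg0)
    _ ≤ ∫ s, M * ((1 + s ^ 2) * rexp (-(c * |s|))) := integral_mono hint hdom hgM
    _ = M * layerMoment c := integral_const_mul _ _

namespace ApproxTransition

variable {W η v : ℝ → ℝ} {c B : ℝ}

lemma mem_Icc (h : ApproxTransition W c B η v) (s : ℝ) : η s ∈ Icc (0 : ℝ) 1 :=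
  Ioo_subset_Icc_self (h.mem_Ioo s)

lemma continuous (h : ApproxTransition W c B η v) : Continuous η :=
  continuous_iff_continuousAt.2 fun s => (h.hasDerivAt s).continuousAt

lemma continuous_comp (h : ApproxTransition W c B η v) {F : ℝ → ℝ}
    (hF : ContinuousOn F (Icc 0 1)) : Continuous fun s => F (η s) :=
  hF.comp_continuous h.continuous h.mem_Icc

lemma mul_one_sub_le_exp (h : ApproxTransition W c B η v) (s : ℝ) :
    η s * (1 - η s) ≤ rexp (-(c * |s|)) := by
  obtain ⟨h0, h1⟩ := h.mem_Icc s
  rcases le_total 0 s with hs | hs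
  · rw [abs_of_nonneg hs]
    exact (mul_le_of_le_one_right h0 (by linarith)).trans (h.le_exp s)
  · rw [abs_of_nonpos hs, mul_neg, neg_neg]
    exact (mul_le_of_le_one_left (by linarith) h1).trans (h.one_sub_le_exp s)

lemma speed_sq_le (h : ApproxTransition W c B η v) (hW : DoubleWell W) (s : ℝ) :
    v s ^ 2 ≤ W (η s) :=
  (pow_le_pow_left₀ (h.speed_nonneg s) (h.speed_le s) 2).trans_eq
    (Real.sq_sqrt (hW.nonneg (h.mem_Icc s)))

lemma exists_potential_le_exp (hW : DoubleWell W) :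
    ∃ C > 0, ∀ {c B : ℝ} {η v : ℝ → ℝ}, ApproxTransition W c B η v →
      ∀ s, W (η s) ≤ C * rexp (-(c * |s|)) := by
  obtain ⟨C, hC, hupper⟩ := hW.exists_le_mul
  exact ⟨C, hC, fun h s => (hupper _ (h.mem_Icc s)).trans
    (mul_le_mul_of_nonneg_left (h.mul_one_sub_le_exp s) hC.le)⟩

lemma tendsto_zero (h : ApproxTransition W c B η v) (hc : 0 < c) :
    Tendsto η atTop (nhds 0) :=
  squeeze_zero (fun s => (h.mem_Icc s).1) h.le_exp
    (tendsto_exp_neg_atTop_nhds_zero.comp (tendsto_id.const_mul_atTop hc))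

lemma setIntegral_energy_le (h : ApproxTransition W c B η v) (hW : DoubleWell W) (hc : 0 < c)
    (hB : 0 ≤ B) (a : ℝ) (hint : IntegrableOn (fun s => v s ^ 2 + W (η s)) (Ioi a)) :
    ∫ s in Ioi a, (v s ^ 2 + W (η s)) ≤ 2 + B := by
  have hderiv : ∀ s ∈ Ici a, HasDerivAt (fun s => -(2 * Phi W (η s) + B * η s))
      ((2 * √(W (η s)) + B) * v s) s := fun s _ => by
    have hPhi := (hW.hasDerivWithinAt_Phi (h.mem_Icc s)).comp_hasDerivAt s (h.hasDerivAt s)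
      (Eventually.of_forall h.mem_Icc)
    exact ((hPhi.const_mul 2).add ((h.hasDerivAt s).const_mul B)).neg.congr_deriv (by ring)
  have hlim : Tendsto (fun s => -(2 * Phi W (η s) + B * η s)) atTop (nhds 0) := by
    have hPhi : Tendsto (fun s => Phi W (η s)) atTop (nhds 0) := by
      rw [← DoubleWell.Phi_zero (W := W)]
      exact (hW.continuousOn_Phi 0 (by simp)).tendsto.comp
        (tendsto_nhdsWithin_iff.2 ⟨h.tendsto_zero hc, Eventually.of_forall h.mem_Icc⟩)
    simpa using ((hPhi.const_mul 2).add ((h.tendsto_zero hc).const_mul B)).neg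
  have hnonneg : ∀ s ∈ Ioi a, 0 ≤ (2 * √(W (η s)) + B) * v s := fun s _ =>
    mul_nonneg (by positivity) (h.speed_nonneg s)
  calc ∫ s in Ioi a, (v s ^ 2 + W (η s)) ≤ ∫ s in Ioi a, (2 * √(W (η s)) + B) * v s :=
        setIntegral_mono_on hint (integrableOn_Ioi_deriv_of_nonneg' hderiv hnonneg hlim)
          measurableSet_Ioi fun s _ => h.energy_le s
    _ = 2 * Phi W (η a) + B * η a := by
        rw [integral_Ioi_of_hasDerivAt_of_nonneg' hderiv hnonneg hlim]
        ring
    _ ≤ 2 + B := by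
        have := (hW.Phi_mem (h.mem_Icc a)).2
        nlinarith [(h.mem_Icc a).2]

end ApproxTransition

/-! ### The energy upper bound -/

/-- The volume of the shell between the spheres of radii `R` and `r` in dimension `k + 1`, divided
by `ε` times the area of the sphere of radius `R`. It agrees with `(r - R) / ε` to first order, and
in this coordinate radial integrals become integrals on a half-line with constant weight. -/
def shellCoord (k : ℕ) (R ε r : ℝ) : ℝ := (r ^ (k + 1) - R ^ (k + 1)) / ((k + 1) * R ^ k * ε)

section ShellCoord

variable (k : ℕ) {R ε r : ℝ}

lemma hasDerivAt_shellCoord (r : ℝ) :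
    HasDerivAt (shellCoord k R ε) (r ^ k / (R ^ k * ε)) r := by
  refine (((hasDerivAt_pow (k + 1) r).sub_const _).div_const _).congr_deriv ?_
  rw [Nat.add_sub_cancel, mul_assoc, Nat.cast_add_one, mul_div_mul_left _ _ k.cast_add_one_ne_zero]

lemma continuous_shellCoord : Continuous (shellCoord k R ε) := by
  unfold shellCoord
  fun_prop

lemma shellCoord_nonpos (hR : 0 < R) (hε : 0 < ε) (hr : 0 ≤ r) (hrR : r ≤ R) :
    shellCoord k R ε r ≤ 0 :=
  div_nonpos_of_nonpos_of_nonneg (sub_nonpos.2 (pow_le_pow_left₀ hr hrR _)) (by positivity)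

lemma strictMonoOn_shellCoord (hR : 0 < R) (hε : 0 < ε) :
    StrictMonoOn (shellCoord k R ε) (Ici 0) := fun _ ha _ _ hab =>
  div_lt_div_of_pos_right (sub_lt_sub_right (pow_lt_pow_left₀ hab ha k.succ_ne_zero) _)
    (by positivity)

lemma image_shellCoord_Ioi (hR : 0 < R) (hε : 0 < ε) :
    shellCoord k R ε '' Ioi 0 = Ioi (shellCoord k R ε 0) :=
  (continuous_shellCoord k).continuousOn.image_Ioi_of_strictMonoOn
    (strictMonoOn_shellCoord k hR hε) (Tendsto.atTop_div_const (by positivity)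
      (tendsto_atTop_add_const_right _ _ (tendsto_pow_atTop k.succ_ne_zero)))

lemma integral_comp_shellCoord (hR : 0 < R) (hε : 0 < ε) (G : ℝ → ℝ) :
    ∫ r, G (shellCoord k R ε r) ∂radialMeasure (k + 1) =
      sphereArea (k + 1) * (R ^ k * ε * ∫ s in Ioi (shellCoord k R ε 0), G s) := by
  rw [integral_radialMeasure, ← image_shellCoord_Ioi k hR hε,
    integral_image_eq_integral_abs_deriv_smul measurableSet_Ioi
      (fun r _ => (hasDerivAt_shellCoord k r).hasDerivWithinAt)
      ((strictMonoOn_shellCoord k hR hε).injOn.mono Ioi_subset_Ici_self) G,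
    ← integral_const_mul (R ^ k * ε)]
  congr 1
  refine setIntegral_congr_fun measurableSet_Ioi fun r (hr : 0 < r) => ?_
  simp only [smul_eq_mul]
  rw [abs_of_nonneg (by positivity)]
  field_simp

lemma integrable_comp_shellCoord (hR : 0 < R) (hε : 0 < ε) {G : ℝ → ℝ}
    (hG : IntegrableOn G (Ioi (shellCoord k R ε 0))) :
    Integrable (fun r => G (shellCoord k R ε r)) (radialMeasure (k + 1)) := by
  rw [← image_shellCoord_Ioi k hR hε,
    integrableOn_image_iff_integrableOn_abs_deriv_smul measurableSet_Ioi
      (fun r _ => (hasDerivAt_shellCoord k r).hasDerivWithinAt)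
      ((strictMonoOn_shellCoord k hR hε).injOn.mono Ioi_subset_Ici_self)] at hG
  rw [integrable_radialMeasure_iff]
  refine IntegrableOn.congr_fun (hG.const_mul (R ^ k * ε)) (fun r (hr : 0 < r) => ?_)
    measurableSet_Ioi
  simp only [smul_eq_mul]
  rw [abs_of_nonneg (by positivity)]
  field_simp

lemma integrable_exp_neg_mul_shellCoord (hR : 0 < R) (hε : 0 < ε) {c : ℝ} (hc : 0 < c) :
    Integrable (fun r => rexp (-(c * shellCoord k R ε r))) (radialMeasure (k + 1)) :=
  integrable_comp_shellCoord k hR hε (G := fun s => rexp (-(c * s)))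
    (by simpa only [neg_mul] using integrableOn_exp_mul_Ioi (neg_lt_zero.2 hc) _)

lemma div_pow_sq_le_shellCoord (hR : 0 < R) (hε : ε ∈ Ioc (0 : ℝ) 1) (hr : 0 ≤ r) :
    ((r / R) ^ k) ^ 2 ≤
      1 + ε * (((k + 1) / R + ((k + 1) / R) ^ 2) * (1 + shellCoord k R ε r ^ 2)) := by
  obtain ⟨hε0, hε1⟩ := hε
  rcases le_total r R with h | h
  · refine (pow_le_one₀ (by positivity) (pow_le_one₀ (by positivity) ?_)).trans ?_
    · exact (div_le_one hR).2 h
    · exact le_add_of_nonneg_right (by positivity)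
  · have hratio : (r / R) ^ (k + 1) = 1 + ε * ((k + 1) / R * shellCoord k R ε r) := by
      have : (k : ℝ) + 1 ≠ 0 := k.cast_add_one_ne_zero
      rw [shellCoord, div_pow]
      field_simp
      ring
    set a : ℝ := (k + 1) / R
    set s := shellCoord k R ε r
    have : 0 ≤ a := by positivity
    have hquad : ε ^ 2 * (a * s) ^ 2 ≤ ε * (a * s) ^ 2 := by
      gcongr
      nlinarith
    calc ((r / R) ^ k) ^ 2 ≤ ((r / R) ^ (k + 1)) ^ 2 := by
          gcongr
          · exact (one_le_div hR).2 h
          · exact k.le_succ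
      _ = 1 + ε * (a * (2 * s)) + ε ^ 2 * (a * s) ^ 2 := by rw [hratio]; ring
      _ ≤ 1 + ε * (a * (1 + s ^ 2)) + ε * (a ^ 2 * (1 + s ^ 2)) := by
          gcongr ?_ + ?_
          · gcongr
            nlinarith [sq_nonneg (s - 1)]
          · refine hquad.trans ?_
            gcongr
            nlinarith [sq_nonneg a]
      _ = 1 + ε * ((a + a ^ 2) * (1 + s ^ 2)) := by ring

end ShellCoord

lemma DoubleWell.exists_one_sub_Vpot_le {W : ℝ → ℝ} (hW : DoubleWell W) (m : ℕ) :
    ∃ C > 0, ∀ t ∈ Icc (0 : ℝ) 1, 1 - Vpot (m + 2) W t ≤ C * (1 - t) := by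
  obtain ⟨C, hC, hupper⟩ := hW.reflect.exists_Phi_le_mul_self
  refine ⟨2 * C, by positivity, fun t ht => ?_⟩
  have hreflect := hupper _ (DoubleWell.one_sub_mem ht)
  rw [hW.Phi_reflect ht] at hreflect
  obtain ⟨_, _⟩ := hW.Phi_mem ht
  nlinarith [hW.Phi_sq_le_Vpot m ht]

lemma comp_norm_indicator_Iic (n : ℕ) (R : ℝ) :
    (fun x : En n => (Iic R).indicator (fun _ => (1 : ℝ)) ‖x‖) =
      (Metric.closedBall 0 R).indicator fun _ => 1 := by
  ext x
  by_cases hx : ‖x‖ ≤ R <;> simp [hx]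

section BallIndicator

variable {n : ℕ} [NeZero n] {R : ℝ}

lemma integrable_indicator_Iic (R : ℝ) :
    Integrable ((Iic R).indicator fun _ => (1 : ℝ)) (radialMeasure n) := by
  rw [← integrable_comp_norm, comp_norm_indicator_Iic]
  exact (integrable_indicator_iff measurableSet_closedBall).2
    (integrableOn_const measure_closedBall_lt_top.ne)

lemma integral_indicator_Iic (hR : 0 ≤ R) :
    ∫ r, (Iic R).indicator (fun _ => (1 : ℝ)) r ∂radialMeasure n = ballVol n * R ^ n := by
  rw [← integral_comp_norm, comp_norm_indicator_Iic, integral_indicator measurableSet_closedBall,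
    setIntegral_const, smul_eq_mul, mul_one, Measure.addHaar_real_closedBall _ _ hR,
    finrank_euclideanSpace_fin, mul_comm]
  rfl

end BallIndicator

lemma R0_pos (n : ℕ) : 0 < R0 n := rpow_pos_of_pos (ballVol_pos n) _

lemma ballVol_mul_R0_pow (n : ℕ) [NeZero n] : ballVol n * R0 n ^ n = 1 := by
  have hn : (n : ℝ) ≠ 0 := NeZero.ne _
  have h := ballVol_pos n
  rw [R0, ← rpow_natCast, ← rpow_mul h.le, div_mul_cancel₀ _ hn, rpow_neg_one,
    mul_inv_cancel₀ h.ne']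

lemma rpow_le_one_add {v δ p : ℝ} (hp : p ∈ Icc (-1 : ℝ) 0) (hδ : δ ∈ Icc (0 : ℝ) (1 / 2))
    (hv : 1 - δ ≤ v) : v ^ p ≤ 1 + 2 * δ := by
  have hv0 : 0 < v := by linarith [hδ.2]
  rcases le_total 1 v with h | h
  · exact (rpow_le_one_of_one_le_of_nonpos h hp.2).trans (by linarith [hδ.1])
  · refine (rpow_le_rpow_of_exponent_ge hv0 h hp.1).trans ?_
    rw [rpow_neg_one, inv_le_iff_one_le_mul₀ hv0]
    nlinarith [hδ.1, hδ.2]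

section ShellDeriv

variable {R ε : ℝ}

lemma deriv_comp_shellCoord_sq_le (hR : 0 < R) (hε : ε ∈ Ioc (0 : ℝ) 1) (v : ℝ → ℝ) (k : ℕ) {r : ℝ}
    (hr : 0 ≤ r) :
    (-v (shellCoord k R ε r) * (r ^ k / (R ^ k * ε))) ^ 2 ≤
      ε⁻¹ ^ 2 * (v (shellCoord k R ε r) ^ 2 + ε * ((k + 1) / R + ((k + 1) / R) ^ 2) *
        ((1 + shellCoord k R ε r ^ 2) * v (shellCoord k R ε r) ^ 2)) := by
  have hweight := div_pow_sq_le_shellCoord k hR hε hr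
  set s := shellCoord k R ε r
  calc (-v s * (r ^ k / (R ^ k * ε))) ^ 2 = ε⁻¹ ^ 2 * (v s ^ 2 * ((r / R) ^ k) ^ 2) := by
        rw [div_pow]
        field_simp
    _ ≤ ε⁻¹ ^ 2 *
        (v s ^ 2 * (1 + ε * (((k + 1) / R + ((k + 1) / R) ^ 2) * (1 + s ^ 2)))) := by gcongr
    _ = _ := by ring

lemma integral_deriv_comp_shellCoord_sq_le (hR : 0 < R) (hε : ε ∈ Ioc (0 : ℝ) 1) (k : ℕ) {v : ℝ → ℝ}
    (hv : Continuous v) (hspeed : Integrable fun s => v s ^ 2)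
    (hmoment : Integrable fun s => (1 + s ^ 2) * v s ^ 2) :
    Integrable (fun r => (-v (shellCoord k R ε r) * (r ^ k / (R ^ k * ε))) ^ 2)
        (radialMeasure (k + 1)) ∧
      ε * ∫ r, (-v (shellCoord k R ε r) * (r ^ k / (R ^ k * ε))) ^ 2 ∂radialMeasure (k + 1) ≤
        sphereArea (k + 1) * R ^ k * ((∫ s in Ioi (shellCoord k R ε 0), v s ^ 2) +
          ε * ((k + 1) / R + ((k + 1) / R) ^ 2) *
            ∫ s in Ioi (shellCoord k R ε 0), (1 + s ^ 2) * v s ^ 2) := by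
  have hcont := continuous_shellCoord k (R := R) (ε := ε)
  have hle {r : ℝ} (hr : 0 < r) := deriv_comp_shellCoord_sq_le hR hε v k hr.le
  set a : ℝ := (k + 1) / R + ((k + 1) / R) ^ 2
  have hmajorant := integrable_comp_shellCoord k hR hε.1
    (G := fun s => ε⁻¹ ^ 2 * (v s ^ 2 + ε * a * ((1 + s ^ 2) * v s ^ 2)))
    ((hspeed.add (hmoment.const_mul (ε * a))).const_mul (ε⁻¹ ^ 2)).integrableOn
  have hint : Integrable (fun r => (-v (shellCoord k R ε r) * (r ^ k / (R ^ k * ε))) ^ 2)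
      (radialMeasure (k + 1)) :=
    hmajorant.mono' (aestronglyMeasurable_radialMeasure (by fun_prop))
      (ae_radialMeasure_of_forall_pos fun r hr =>
        (Real.norm_of_nonneg (sq_nonneg _)).trans_le (hle hr))
  refine ⟨hint, ?_⟩
  calc ε * ∫ r, (-v (shellCoord k R ε r) * (r ^ k / (R ^ k * ε))) ^ 2 ∂radialMeasure (k + 1)
      ≤ ε * ∫ r, ε⁻¹ ^ 2 * (v (shellCoord k R ε r) ^ 2 + ε * a *
          ((1 + shellCoord k R ε r ^ 2) * v (shellCoord k R ε r) ^ 2)) ∂radialMeasure (k + 1) :=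
        mul_le_mul_of_nonneg_left
          (integral_mono_ae hint hmajorant (ae_radialMeasure_of_forall_pos fun r hr => hle hr))
          hε.1.le
    _ = _ := by
        have := hε.1.ne'
        rw [integral_comp_shellCoord k hR hε.1
            fun s => ε⁻¹ ^ 2 * (v s ^ 2 + ε * a * ((1 + s ^ 2) * v s ^ 2)),
          integral_const_mul,
          integral_add hspeed.integrableOn (hmoment.integrableOn.const_mul _), integral_const_mul]
        field_simp

end ShellDeriv

namespace ApproxTransition

variable {m : ℕ} {W η v : ℝ → ℝ} {c B R ε : ℝ}

lemma integrable_potential (h : ApproxTransition W c B η v) (hW : DoubleWell W) (hc : 0 < c) :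
    Integrable fun s => W (η s) := by
  obtain ⟨C, hC, hupper⟩ := exists_potential_le_exp hW
  refine (setIntegral_Ioi_le_layerMoment (M := C) hc (h.continuous_comp hW.continuousOn)
    (fun s => hW.nonneg (h.mem_Icc s)) fun s => (hupper h s).trans ?_).1
  gcongr
  exact le_mul_of_one_le_left (exp_pos _).le (by nlinarith [sq_nonneg s])

lemma integrable_speed_sq (h : ApproxTransition W c B η v) (hW : DoubleWell W) (hc : 0 < c) :
    Integrable fun s => v s ^ 2 :=
  (h.integrable_potential hW hc).mono' (h.continuous_speed.pow 2).aestronglyMeasurable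
    (Eventually.of_forall fun s =>
      (Real.norm_of_nonneg (sq_nonneg _)).trans_le (h.speed_sq_le hW s))

lemma exists_moment_le (hW : DoubleWell W) {c : ℝ} (hc : 0 < c) :
    ∃ C > 0, ∀ {B : ℝ} {η v : ℝ → ℝ}, ApproxTransition W c B η v →
      (Integrable fun s => (1 + s ^ 2) * v s ^ 2) ∧
        ∀ a, ∫ s in Ioi a, (1 + s ^ 2) * v s ^ 2 ≤ C := by
  obtain ⟨C, hC, hupper⟩ := exists_potential_le_exp hW
  refine ⟨C * layerMoment c + 1, by have := layerMoment_nonneg c; positivity,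
    fun {B η v} h => ?_⟩
  have hcont := h.continuous_speed
  have hbound := setIntegral_Ioi_le_layerMoment (M := C) hc (g := fun s => (1 + s ^ 2) * v s ^ 2)
    (by fun_prop) (fun s => by positivity) fun s => by
      rw [mul_left_comm]
      gcongr
      exact (h.speed_sq_le hW s).trans (hupper h s)
  exact ⟨hbound.1, fun a => (hbound.2 a).trans (by linarith)⟩

lemma exists_radialProfile (hW : DoubleWell W) {c : ℝ} (hc : 0 < c) {R : ℝ} (hR : 0 < R) (m : ℕ) :
    ∃ C > 0, ∀ {ε : ℝ}, ε ∈ Ioc (0 : ℝ) 1 → ∀ {B : ℝ} {η v : ℝ → ℝ}, ApproxTransition W c B η v →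
      ∃ Y', RadialProfile (m + 2) (fun r => η (shellCoord (m + 1) R ε r)) Y' ∧
        ε * ∫ r, Y' r ^ 2 ∂radialMeasure (m + 2) ≤ sphereArea (m + 2) * R ^ (m + 1) *
          ((∫ s in Ioi (shellCoord (m + 1) R ε 0), v s ^ 2) + C * ε) := by
  obtain ⟨M, hM, hmoment⟩ := exists_moment_le hW hc
  set a : ℝ := ((m + 1 : ℕ) + 1) / R + (((m + 1 : ℕ) + 1) / R) ^ 2
  refine ⟨a * M, by positivity, fun {ε} hε B η v h => ?_⟩
  obtain ⟨hmomentInt, hmomentLe⟩ := hmoment h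
  obtain ⟨hint, hle⟩ := integral_deriv_comp_shellCoord_sq_le hR hε (m + 1) h.continuous_speed
    (h.integrable_speed_sq hW hc) hmomentInt
  have hderiv r := (h.hasDerivAt _).comp r (hasDerivAt_shellCoord (m + 1) (R := R) (ε := ε) r)
  refine ⟨_, ⟨fun r _ => hderiv r, ?_, fun r _ => h.mem_Icc _, ?_, hint⟩, hle.trans ?_⟩
  · exact (hderiv 0).hasDerivWithinAt.congr_deriv (by simp)
  · refine (integrable_exp_neg_mul_shellCoord (m + 1) hR hε.1 hc).mono'
      (h.continuous.comp (continuous_shellCoord _) |>.pow 2).aestronglyMeasurable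
      (Eventually.of_forall fun r => ?_)
    obtain ⟨_, _⟩ := h.mem_Icc (shellCoord (m + 1) R ε r)
    rw [Real.norm_of_nonneg (sq_nonneg _)]
    exact (by nlinarith : _ ≤ η (shellCoord (m + 1) R ε r)).trans (h.le_exp _)
  · have hε0 := hε.1
    have := sphereArea_nonneg (m + 2)
    rw [mul_right_comm a, mul_comm a]
    gcongr
    exact hmomentLe _

lemma indicator_sub_le_Vpot (h : ApproxTransition W c B η v) (hW : DoubleWell W) {C : ℝ}
    (hC : ∀ t ∈ Icc (0 : ℝ) 1, 1 - Vpot (m + 2) W t ≤ C * (1 - t)) (hC0 : 0 ≤ C) (k : ℕ)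
    (hR : 0 < R) (hε : 0 < ε) {r : ℝ} (hr : 0 ≤ r) :
    (Iic R).indicator (fun _ => 1) r - C * rexp (-(c * |shellCoord k R ε r|)) ≤
      Vpot (m + 2) W (η (shellCoord k R ε r)) := by
  set s := shellCoord k R ε r
  by_cases hrR : r ≤ R
  · rw [abs_of_nonpos (shellCoord_nonpos k hR hε hr hrR), mul_neg, neg_neg,
      indicator_of_mem (mem_Iic.2 hrR)]
    linarith [hC _ (h.mem_Icc s), mul_le_mul_of_nonneg_left (h.one_sub_le_exp s) hC0]
  · rw [indicator_of_notMem (mt mem_Iic.1 hrR), zero_sub]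
    have : 0 ≤ C * rexp (-(c * |s|)) := by positivity
    linarith [(hW.Vpot_mem m (h.mem_Icc s)).1]

lemma integrable_Vpot (h : ApproxTransition W c B η v) (hW : DoubleWell W) (hc : 0 < c) (m k : ℕ)
    (hR : 0 < R) (hε : 0 < ε) :
    Integrable (fun r => Vpot (m + 2) W (η (shellCoord k R ε r))) (radialMeasure (k + 1)) := by
  obtain ⟨C, hC, hupper⟩ := hW.exists_Phi_le_mul_self
  refine ((integrable_exp_neg_mul_shellCoord k hR hε hc).const_mul C).mono'
    ((h.continuous_comp (hW.continuousOn_Vpot m)).comp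
      (continuous_shellCoord k)).aestronglyMeasurable (Eventually.of_forall fun r => ?_)
  have hmem := h.mem_Icc (shellCoord k R ε r)
  rw [Real.norm_of_nonneg (hW.Vpot_mem m hmem).1]
  exact ((hW.Vpot_le_Phi m hmem).trans (hupper _ hmem)).trans
    (mul_le_mul_of_nonneg_left (h.le_exp _) hC.le)

lemma exists_volume_ge (hW : DoubleWell W) {c : ℝ} (hc : 0 < c) (m : ℕ) :
    ∃ C > 0, ∀ {ε : ℝ}, 0 < ε → ∀ {B : ℝ} {η v : ℝ → ℝ}, ApproxTransition W c B η v →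
      1 - C * ε ≤
        ∫ r, Vpot (m + 2) W (η (shellCoord (m + 1) (R0 (m + 2)) ε r)) ∂radialMeasure (m + 2) := by
  obtain ⟨C, hC, hupper⟩ := hW.exists_one_sub_Vpot_le m
  have hR := R0_pos (m + 2)
  set R := R0 (m + 2)
  obtain ⟨hexp, hexpLe⟩ := setIntegral_Ioi_le_layerMoment (M := 1) hc
    (g := fun s => rexp (-(c * |s|))) (by fun_prop) (fun s => by positivity) fun s => by
      rw [one_mul]
      exact le_mul_of_one_le_left (exp_pos _).le (by nlinarith [sq_nonneg s])
  have hM := layerMoment_nonneg c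
  have hA := sphereArea_pos (m + 2)
  refine ⟨C * (sphereArea (m + 2) * R ^ (m + 1) * (layerMoment c + 1)), by positivity,
    fun {ε} hε B η v h => ?_⟩
  have hexpInt := (integrable_comp_shellCoord (m + 1) hR hε hexp.integrableOn).const_mul C
  calc 1 - C * (sphereArea (m + 2) * R ^ (m + 1) * (layerMoment c + 1)) * ε
      ≤ 1 - C * (sphereArea (m + 2) * (R ^ (m + 1) * ε *
          ∫ s in Ioi (shellCoord (m + 1) R ε 0), rexp (-(c * |s|)))) := by
        have := mul_le_mul_of_nonneg_left (hexpLe (shellCoord (m + 1) R ε 0))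
          (by positivity : 0 ≤ C * (sphereArea (m + 2) * (R ^ (m + 1) * ε)))
        have : 0 ≤ C * (sphereArea (m + 2) * (R ^ (m + 1) * ε)) := by positivity
        linarith
    _ = ∫ r, ((Iic R).indicator (fun _ => 1) r - C * rexp (-(c * |shellCoord (m + 1) R ε r|)))
          ∂radialMeasure (m + 2) := by
        rw [integral_sub (integrable_indicator_Iic R) hexpInt, integral_indicator_Iic hR.le,
          ballVol_mul_R0_pow, integral_const_mul,
          integral_comp_shellCoord (m + 1) hR hε fun s => rexp (-(c * |s|))]
    _ ≤ _ := integral_mono_ae ((integrable_indicator_Iic R).sub hexpInt)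
        (h.integrable_Vpot hW hc m (m + 1) hR hε) (ae_radialMeasure_of_forall_pos fun r hr =>
          h.indicator_sub_le_Vpot hW hupper hC.le (m + 1) hR hε hr.le)

end ApproxTransition

lemma neg_div_add_two_mem (m : ℕ) : -(m : ℝ) / (m + 2) ∈ Icc (-1 : ℝ) 0 :=
  ⟨by rw [le_div_iff₀ (by positivity)]; linarith,
    div_nonpos_of_nonpos_of_nonneg (by simp) (by positivity)⟩

namespace DoubleWell

variable {W : ℝ → ℝ}

lemma exists_competitor (hW : DoubleWell W) (m : ℕ) :
    ∃ C > 0, ∀ ε ∈ Ioc (0 : ℝ) 1, ∃ Y Y', RadialProfile (m + 2) Y Y' ∧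
      1 - C * ε ≤ ∫ r, Vpot (m + 2) W (Y r) ∂radialMeasure (m + 2) ∧
      ε * (∫ r, Y' r ^ 2 ∂radialMeasure (m + 2)) + ε⁻¹ * (∫ r, W (Y r) ∂radialMeasure (m + 2)) ≤
        sphereArea (m + 2) * R0 (m + 2) ^ (m + 1) * (2 + C * ε) := by
  obtain ⟨c, hc, B, hB, htransition⟩ := hW.exists_approxTransition
  have hR := R0_pos (m + 2)
  have hA := sphereArea_pos (m + 2)
  obtain ⟨Cgrad, hCgrad, hgrad⟩ := ApproxTransition.exists_radialProfile hW hc hR m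
  obtain ⟨Cvol, hCvol, hvol⟩ := ApproxTransition.exists_volume_ge hW hc m
  refine ⟨B + Cgrad + Cvol, by positivity, fun ε hε => ?_⟩
  have hε0 := hε.1
  obtain ⟨η, v, h⟩ := htransition ε hε
  obtain ⟨Y', hY, hY'⟩ := hgrad hε h
  have hspeed := (h.integrable_speed_sq hW hc).integrableOn
    (s := Ioi (shellCoord (m + 1) (R0 (m + 2)) ε 0))
  have hpot := (h.integrable_potential hW hc).integrableOn
    (s := Ioi (shellCoord (m + 1) (R0 (m + 2)) ε 0))
  have henergy := h.setIntegral_energy_le hW hc (by positivity) _ (hspeed.add hpot)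
  rw [integral_add hspeed hpot] at henergy
  refine ⟨_, Y', hY, le_trans (by nlinarith) (hvol hε0 h), ?_⟩
  calc _ ≤ sphereArea (m + 2) * R0 (m + 2) ^ (m + 1) *
          ((∫ s in Ioi (shellCoord (m + 1) (R0 (m + 2)) ε 0), v s ^ 2) + Cgrad * ε) +
        sphereArea (m + 2) * R0 (m + 2) ^ (m + 1) *
          ∫ s in Ioi (shellCoord (m + 1) (R0 (m + 2)) ε 0), W (η s) := by
        refine add_le_add hY' (le_of_eq ?_)
        rw [integral_comp_shellCoord (m + 1) hR hε0 fun s => W (η s)]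
        field_simp
    _ = sphereArea (m + 2) * R0 (m + 2) ^ (m + 1) *
          ((∫ s in Ioi (shellCoord (m + 1) (R0 (m + 2)) ε 0), v s ^ 2) +
            (∫ s in Ioi (shellCoord (m + 1) (R0 (m + 2)) ε 0), W (η s)) + Cgrad * ε) := by ring
    _ ≤ _ := by
        have : 0 ≤ Cvol * ε := by positivity
        refine mul_le_mul_of_nonneg_left ?_ (by positivity)
        linarith

lemma exists_Psi_le (hW : DoubleWell W) (m : ℕ) :
    ∃ C > 0, ∃ ε₁ ∈ Ioc (0 : ℝ) 1, ∀ ε ∈ Ioo 0 ε₁,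
      Psi (m + 2) W ε 1 ≤ 2 * sphereArea (m + 2) * R0 (m + 2) ^ (m + 1) + C * ε := by
  obtain ⟨C, hC, hcompetitor⟩ := hW.exists_competitor m
  set A := sphereArea (m + 2) * R0 (m + 2) ^ (m + 1)
  have hA : 0 < A := mul_pos (sphereArea_pos _) (pow_pos (R0_pos _) _)
  refine ⟨A * (5 * C + 2 * C ^ 2), by positivity, min 1 (1 / (2 * C)),
    ⟨by positivity, min_le_left _ _⟩, fun ε hε => ?_⟩
  have hε0 := hε.1
  have hε1 : ε ≤ 1 := (hε.2.trans_le (min_le_left _ _)).le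
  obtain ⟨Y, Y', hY, hvol, henergy⟩ := hcompetitor ε ⟨hε0, hε1⟩
  have hδ : C * ε ∈ Icc (0 : ℝ) (1 / 2) := by
    have := hε.2.le.trans (min_le_right _ _)
    rw [le_div_iff₀ (by positivity)] at this
    exact ⟨by positivity, by linarith⟩
  have hrpow := rpow_le_one_add (neg_div_add_two_mem m) hδ hvol
  have hinv := rpow_le_one_add (p := -1) (by simp) hδ hvol
  rw [rpow_neg_one] at hinv
  have hpot : 0 ≤ ∫ r, W (Y r) ∂radialMeasure (m + 2) :=
    integral_nonneg_of_ae (ae_radialMeasure_of_forall_pos fun r hr =>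
      hW.nonneg (hY.mem_Icc r hr.le))
  calc Psi (m + 2) W ε 1 ≤ _ := hY.Psi_le hW hε0 rfl (by linarith [hδ.2])
    _ ≤ ε * (∫ r, Y' r ^ 2 ∂radialMeasure (m + 2)) * (1 + 2 * (C * ε)) +
        ε⁻¹ * (∫ r, W (Y r) ∂radialMeasure (m + 2)) * (1 + 2 * (C * ε)) := by gcongr
    _ = (ε * (∫ r, Y' r ^ 2 ∂radialMeasure (m + 2)) +
        ε⁻¹ * (∫ r, W (Y r) ∂radialMeasure (m + 2))) * (1 + 2 * (C * ε)) := by ring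
    _ ≤ A * (2 + C * ε) * (1 + 2 * (C * ε)) := by gcongr
    _ = A * (2 + 5 * C * ε + 2 * C ^ 2 * (ε * ε)) := by ring
    _ ≤ A * (2 + 5 * C * ε + 2 * C ^ 2 * (1 * ε)) := by gcongr
    _ = _ := by ring

end DoubleWell

/-! ### Radial test fields -/

/-- A radial vector field `p(|x|) x/|x|` which is bounded together with its gradient, whose
eigenvalues are `p'` and `p(r)/r`. -/
structure RadialTest (K : ℝ) (p p' : ℝ → ℝ) : Prop where
  hasDerivAt : ∀ r, 0 < r → HasDerivAt p (p' r) r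
  abs_le : ∀ r, 0 < r → |p r| ≤ K
  abs_deriv_le : ∀ r, 0 < r → |p' r| ≤ K
  abs_div_le : ∀ r, 0 < r → |p r / r| ≤ K

/-- The divergence on `ℝᵐ⁺²` of the radial vector field `p(|x|) x/|x|`. -/
def radialDiv (m : ℕ) (p p' : ℝ → ℝ) (r : ℝ) : ℝ := (m + 1) * (p r / r) + p' r

namespace RadialTest

variable {m : ℕ} {K R : ℝ} {p p' f f' : ℝ → ℝ}

lemma continuousOn (h : RadialTest K p p') : ContinuousOn p (Ioi 0) := fun r hr =>
  (h.hasDerivAt r hr).continuousAt.continuousWithinAt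

lemma aestronglyMeasurable_radialDiv (h : RadialTest K p p') (m n : ℕ) :
    AEStronglyMeasurable (radialDiv m p p') (radialMeasure n) := by
  have hdiv : AEStronglyMeasurable (fun r => p r / r) (radialMeasure n) :=
    aestronglyMeasurable_radialMeasure
      (h.continuousOn.div continuousOn_id fun r (hr : 0 < r) => hr.ne')
  have hderiv : AEStronglyMeasurable p' (radialMeasure n) :=
    (measurable_deriv p).aestronglyMeasurable.congr
      (ae_radialMeasure_of_forall_pos fun r hr => (h.hasDerivAt r hr).deriv)
  exact (hdiv.const_mul _).add hderiv

lemma abs_radialDiv_le (h : RadialTest K p p') (m : ℕ) {r : ℝ} (hr : 0 < r) :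
    |radialDiv m p p' r| ≤ (m + 2) * K :=
  calc |radialDiv m p p' r| ≤ (m + 1) * |p r / r| + |p' r| := by
        refine (abs_add_le _ _).trans_eq ?_
        rw [abs_mul, abs_of_pos (by positivity : (0 : ℝ) < m + 1)]
    _ ≤ (m + 1) * K + K := by
        gcongr
        exacts [h.abs_div_le r hr, h.abs_deriv_le r hr]
    _ = (m + 2) * K := by ring

lemma integrable_mul (h : RadialTest K p p') {n : ℕ} (hf : Integrable f (radialMeasure n)) :
    Integrable (fun r => f r * p r) (radialMeasure n) :=
  hf.mul_bdd (aestronglyMeasurable_radialMeasure h.continuousOn)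
    (ae_radialMeasure_of_forall_pos h.abs_le)

lemma integrable_mul_radialDiv (h : RadialTest K p p') {n : ℕ}
    (hf : Integrable f (radialMeasure n)) :
    Integrable (fun r => f r * radialDiv m p p' r) (radialMeasure n) :=
  hf.mul_bdd (h.aestronglyMeasurable_radialDiv m n)
    (ae_radialMeasure_of_forall_pos fun _ hr => h.abs_radialDiv_le m hr)

lemma hasDerivAt_pow_mul (h : RadialTest K p p') (m : ℕ) {r : ℝ} (hr : 0 < r) :
    HasDerivAt (fun s => s ^ (m + 1) * p s) (r ^ (m + 1) * radialDiv m p p' r) r := by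
  refine ((hasDerivAt_pow (m + 1) r).mul (h.hasDerivAt r hr)).congr_deriv ?_
  simp only [radialDiv, Nat.add_sub_cancel]
  push_cast
  field_simp
  ring

lemma continuousOn_pow_mul (h : RadialTest K p p') (m : ℕ) :
    ContinuousOn (fun r => r ^ (m + 1) * p r) (Ici 0) := by
  intro r (hr : 0 ≤ r)
  obtain rfl | hr := hr.eq_or_lt
  · have hbound : Tendsto (fun r : ℝ => |r| ^ (m + 1) * K) (nhdsWithin 0 (Ici 0)) (nhds 0) := by
      have : Continuous fun r : ℝ => |r| ^ (m + 1) * K := by fun_prop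
      simpa using (this.tendsto 0).mono_left nhdsWithin_le_nhds
    suffices Tendsto (fun r => r ^ (m + 1) * p r) (nhdsWithin 0 (Ici 0)) (nhds 0) by
      simpa [ContinuousWithinAt] using this
    refine squeeze_zero_norm' ?_ hbound
    filter_upwards [self_mem_nhdsWithin] with r (hr : 0 ≤ r)
    rw [norm_mul, norm_pow, Real.norm_eq_abs]
    obtain rfl | hr := hr.eq_or_lt
    · simp
    · exact mul_le_mul_of_nonneg_left (h.abs_le r hr) (by positivity)
  · exact (h.hasDerivAt_pow_mul m hr).continuousAt.continuousWithinAt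

lemma integral_indicator_mul_radialDiv (h : RadialTest K p p') (m : ℕ) (hR : 0 ≤ R) :
    ∫ r, (Iic R).indicator (fun _ => (1 : ℝ)) r * radialDiv m p p' r ∂radialMeasure (m + 2) =
      sphereArea (m + 2) * (R ^ (m + 1) * p R) := by
  have hind : ∀ r : ℝ, r ^ (m + 1) * ((Iic R).indicator (fun _ => (1 : ℝ)) r * radialDiv m p p' r)
      = (Iic R).indicator (fun r => r ^ (m + 1) * radialDiv m p p' r) r := fun r => by
    by_cases hr : r ≤ R <;> simp [hr]
  have hset : Iic R ∩ Ioi 0 = Ioc 0 R := Iic_inter_Ioi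
  have hint := (integrable_radialMeasure_iff (m + 1)).1
    (h.integrable_mul_radialDiv (m := m) (integrable_indicator_Iic (n := m + 2) R))
  simp_rw [hind] at hint
  rw [IntegrableOn, integrable_indicator_iff measurableSet_Iic, IntegrableOn,
    Measure.restrict_restrict measurableSet_Iic, hset] at hint
  rw [integral_radialMeasure (m + 1)]
  simp_rw [hind]
  rw [integral_indicator measurableSet_Iic, Measure.restrict_restrict measurableSet_Iic, hset,
    ← intervalIntegral.integral_of_le hR,
    intervalIntegral.integral_eq_sub_of_hasDerivAt_of_le hR
      ((h.continuousOn_pow_mul m).mono Icc_subset_Ici_self)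
      (fun r hr => h.hasDerivAt_pow_mul m hr.1)
      ((intervalIntegrable_iff_integrableOn_Ioc_of_le hR).2 hint)]
  simp

lemma abs_integral_mul_radialDiv_sub_le (h : RadialTest K p p') (hR : 0 ≤ R)
    (hf : Integrable f (radialMeasure (m + 2))) :
    |∫ r, f r * radialDiv m p p' r ∂radialMeasure (m + 2) -
        sphereArea (m + 2) * (R ^ (m + 1) * p R)| ≤
      (m + 2) * K *
        ∫ r, |f r - (Iic R).indicator (fun _ => (1 : ℝ)) r| ∂radialMeasure (m + 2) := by
  have hind := integrable_indicator_Iic (n := m + 2) R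
  rw [← h.integral_indicator_mul_radialDiv m hR, ← integral_sub (h.integrable_mul_radialDiv hf)
    (h.integrable_mul_radialDiv hind), ← integral_const_mul]
  refine norm_integral_le_of_norm_le (G := ℝ) ((hf.sub hind).abs.const_mul _)
    (ae_radialMeasure_of_forall_pos fun r hr => ?_)
  rw [← sub_mul, norm_mul, mul_comm]
  exact mul_le_mul_of_nonneg_right (h.abs_radialDiv_le m hr) (abs_nonneg _)

lemma integral_neg_deriv_mul (h : RadialTest K p p') {C : ℝ}
    (hderiv : ∀ r, 0 < r → HasDerivAt f (f' r) r) (hcont : ContinuousWithinAt f (Ici 0) 0)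
    (hf : Integrable f (radialMeasure (m + 2))) (hf' : Integrable f' (radialMeasure (m + 2)))
    (hdecay : ∀ r, 0 < r → |f r| * r ^ (m + 2) ≤ C) :
    ∫ r, -f' r * p r ∂radialMeasure (m + 2) =
      ∫ r, f r * radialDiv m p p' r ∂radialMeasure (m + 2) := by
  have hflux : ∀ r ∈ Ioi (0 : ℝ), HasDerivAt (fun r => f r * (r ^ (m + 1) * p r))
      (r ^ (m + 1) * (f r * radialDiv m p p' r) - r ^ (m + 1) * (-f' r * p r)) r := fun r hr =>
    ((hderiv r hr).mul (h.hasDerivAt_pow_mul m hr)).congr_deriv (by ring)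
  have hlim : Tendsto (fun r => f r * (r ^ (m + 1) * p r)) atTop (nhds 0) := by
    have hbound : Tendsto (fun r : ℝ => C * K * r⁻¹) atTop (nhds 0) := by
      simpa using tendsto_inv_atTop_zero.const_mul (C * K)
    refine squeeze_zero_norm' ?_ hbound
    filter_upwards [eventually_gt_atTop 0] with r hr
    rw [← div_eq_mul_inv, le_div_iff₀ hr]
    calc ‖f r * (r ^ (m + 1) * p r)‖ * r = |f r| * r ^ (m + 2) * |p r| := by
          rw [norm_mul, norm_mul, norm_pow, Real.norm_eq_abs, Real.norm_eq_abs, Real.norm_eq_abs,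
            abs_of_pos hr]
          ring
      _ ≤ C * K := mul_le_mul (hdecay r hr) (h.abs_le r hr) (abs_nonneg _)
          ((by positivity : 0 ≤ |f r| * r ^ (m + 2)).trans (hdecay r hr))
  have hint := (integrable_radialMeasure_iff (m + 1)).1 (h.integrable_mul hf'.neg)
  simp only [Pi.neg_apply] at hint
  have hint_div := (integrable_radialMeasure_iff (m + 1)).1
    (h.integrable_mul_radialDiv (m := m) hf)
  have hparts := integral_Ioi_of_hasDerivAt_of_tendsto
    (hcont.mul (h.continuousOn_pow_mul m 0 self_mem_Ici)) hflux (hint_div.sub hint) hlim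
  rw [integral_sub hint_div hint] at hparts
  rw [integral_radialMeasure (m + 1), integral_radialMeasure (m + 1)]
  congr 1
  refine (sub_eq_zero.1 (hparts.trans ?_)).symm
  simp

end RadialTest

lemma exists_abs_sub_indicator_le {f : ℝ → ℝ} {R : ℝ} (hanti : AntitoneOn f (Ici 0))
    (hmem : ∀ r, 0 < r → f r ∈ Icc (0 : ℝ) 1) (hR : 0 < R) :
    ∃ s : ℝ, ∀ r, 0 < r → |f r - (Iic R).indicator (fun _ => (1 : ℝ)) r| ≤
      s * (f r - (Iic R).indicator (fun _ => (1 : ℝ)) r) + 4 * (f r * (1 - f r)) := by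
  rcases le_total (1 / 2) (f R) with hc | hc
  · refine ⟨1, fun r hr => ?_⟩
    obtain ⟨h0, h1⟩ := hmem r hr
    by_cases hrR : r ≤ R
    · have := hanti hr.le hR.le hrR
      rw [indicator_of_mem (show r ∈ Iic R from hrR), abs_of_nonpos (by linarith)]
      nlinarith
    · rw [indicator_of_notMem (show r ∉ Iic R from hrR), sub_zero, abs_of_nonneg h0]
      nlinarith
  · refine ⟨-1, fun r hr => ?_⟩
    obtain ⟨h0, h1⟩ := hmem r hr
    by_cases hrR : r ≤ R
    · rw [indicator_of_mem (show r ∈ Iic R from hrR), abs_of_nonpos (by linarith)]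
      nlinarith
    · have := hanti hR.le hr.le (not_le.1 hrR).le
      rw [indicator_of_notMem (show r ∉ Iic R from hrR), sub_zero, abs_of_nonneg h0]
      nlinarith

lemma integral_abs_sub_indicator_le {n : ℕ} [NeZero n] {f : ℝ → ℝ} {R : ℝ}
    (hf : Integrable f (radialMeasure n)) (hanti : AntitoneOn f (Ici 0))
    (hmem : ∀ r, 0 < r → f r ∈ Icc (0 : ℝ) 1) (hR : 0 < R)
    (hvol : ∫ r, f r ∂radialMeasure n =
      ∫ r, (Iic R).indicator (fun _ => (1 : ℝ)) r ∂radialMeasure n) :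
    ∫ r, |f r - (Iic R).indicator (fun _ => (1 : ℝ)) r| ∂radialMeasure n ≤
      4 * ∫ r, f r * (1 - f r) ∂radialMeasure n := by
  have hdiff := hf.sub (integrable_indicator_Iic (n := n) R)
  have hmix : Integrable (fun r => f r * (1 - f r)) (radialMeasure n) :=
    hf.mul_bdd (c := 1) (aestronglyMeasurable_const.sub hf.aestronglyMeasurable)
      (ae_radialMeasure_of_forall_pos fun r hr => by
        rw [Real.norm_eq_abs, abs_le]
        constructor <;> linarith [(hmem r hr).1, (hmem r hr).2])
  obtain ⟨s, hs⟩ := exists_abs_sub_indicator_le hanti hmem hR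
  refine (integral_mono_ae hdiff.abs ((hdiff.const_mul s).add (hmix.const_mul 4))
    (ae_radialMeasure_of_forall_pos hs)).trans_eq ?_
  rw [integral_add' (hdiff.const_mul s) (hmix.const_mul 4), integral_const_mul, integral_const_mul,
    integral_sub' hf (integrable_indicator_Iic R), hvol, sub_self, mul_zero, zero_add]

/-! ### Two test fields adapted to the sphere of radius `R` -/

/-- A weight on `(0, ∞)` with values in `[0, 1]` whose only maximum `1` is attained, with
quadratic contact, at `r = R`. -/
def peak (R r : ℝ) : ℝ := 2 * R * r / (R ^ 2 + r ^ 2)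

/-- A bounded radial field normalised by `φ(R) = 1` whose derivative vanishes to second order at
`r = R`, so that testing the virial identity with it only sees the tangential divergence. -/
def flatField (R r : ℝ) : ℝ := 1 - ((R ^ 2 - r ^ 2) / (R ^ 2 + r ^ 2)) ^ 3

/-- The derivative of `flatField R`. -/
def flatFieldDeriv (R r : ℝ) : ℝ :=
  12 * R ^ 2 * r / (R ^ 2 + r ^ 2) ^ 2 * ((R ^ 2 - r ^ 2) / (R ^ 2 + r ^ 2)) ^ 2

section Fields

variable {R r : ℝ}

lemma peak_self (hR : R ≠ 0) : peak R R = 1 := by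
  rw [peak]
  field_simp
  norm_num

lemma one_sub_peak (hR : R ≠ 0) (r : ℝ) : 1 - peak R r = (r - R) ^ 2 / (R ^ 2 + r ^ 2) := by
  have : R ^ 2 + r ^ 2 ≠ 0 := by positivity
  rw [peak]
  field_simp
  ring

lemma peak_mem (hR : 0 < R) (hr : 0 < r) : peak R r ∈ Icc (0 : ℝ) 1 := by
  have h : 0 ≤ 1 - peak R r := one_sub_peak hR.ne' r ▸ by positivity
  exact ⟨by rw [peak]; positivity, by linarith⟩

lemma abs_sq_sub_sq_le (R r : ℝ) : |R ^ 2 - r ^ 2| ≤ R ^ 2 + r ^ 2 := by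
  rw [abs_le]
  constructor <;> nlinarith [sq_nonneg R, sq_nonneg r]

lemma abs_sq_sub_sq_div_le (R r : ℝ) : |(R ^ 2 - r ^ 2) / (R ^ 2 + r ^ 2)| ≤ 1 := by
  rw [abs_div, abs_of_nonneg (by positivity : 0 ≤ R ^ 2 + r ^ 2)]
  exact div_le_one_of_le₀ (abs_sq_sub_sq_le R r) (by positivity)

lemma radialTest_peak (hR : 0 < R) : RadialTest (1 + 2 / R) (peak R)
    fun r => 2 * R * (R ^ 2 - r ^ 2) / (R ^ 2 + r ^ 2) ^ 2 where
  hasDerivAt r hr := by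
    have hnum : HasDerivAt (fun s : ℝ => 2 * R * s) (2 * R * 1) r :=
      (hasDerivAt_id r).const_mul (2 * R)
    have hden : HasDerivAt (fun s : ℝ => R ^ 2 + s ^ 2) (2 * r) r := by
      simpa using (hasDerivAt_pow 2 r).const_add (R ^ 2)
    exact (hnum.div hden (by positivity)).congr_deriv (by congr 1; ring)
  abs_le r hr := by
    obtain ⟨h0, h1⟩ := peak_mem hR hr
    have : 0 < 2 / R := by positivity
    rw [abs_of_nonneg h0]
    linarith
  abs_deriv_le r hr := by
    have hle : 2 * R / (R ^ 2 + r ^ 2) ≤ 2 / R := by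
      rw [div_le_div_iff₀ (by positivity) hR]
      nlinarith
    calc |2 * R * (R ^ 2 - r ^ 2) / (R ^ 2 + r ^ 2) ^ 2|
        = 2 * R / (R ^ 2 + r ^ 2) * |(R ^ 2 - r ^ 2) / (R ^ 2 + r ^ 2)| := by
          rw [sq (R ^ 2 + r ^ 2), mul_div_mul_comm, abs_mul, abs_of_pos (by positivity)]
      _ ≤ 2 * R / (R ^ 2 + r ^ 2) * 1 := by
          gcongr
          exact abs_sq_sub_sq_div_le R r
      _ ≤ 1 + 2 / R := by linarith
  abs_div_le r hr := by
    have hle : 2 * R / (R ^ 2 + r ^ 2) ≤ 2 / R := by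
      rw [div_le_div_iff₀ (by positivity) hR]
      nlinarith
    have heq : peak R r / r = 2 * R / (R ^ 2 + r ^ 2) := by
      rw [peak]
      field_simp
    rw [heq, abs_of_pos (by positivity)]
    linarith

lemma flatField_self (R : ℝ) : flatField R R = 1 := by simp [flatField]

lemma hasDerivAt_flatField (hR : R ≠ 0) (r : ℝ) :
    HasDerivAt (flatField R) (flatFieldDeriv R r) r := by
  have hpos : R ^ 2 + r ^ 2 ≠ 0 := by positivity
  have hnum : HasDerivAt (fun s : ℝ => R ^ 2 - s ^ 2) (-(2 * r)) r := by
    simpa using (hasDerivAt_pow 2 r).const_sub (R ^ 2)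
  have hden : HasDerivAt (fun s : ℝ => R ^ 2 + s ^ 2) (2 * r) r := by
    simpa using (hasDerivAt_pow 2 r).const_add (R ^ 2)
  refine (((hnum.div hden hpos).pow 3).const_sub 1).congr_deriv ?_
  simp only [flatFieldDeriv, Pi.div_apply]
  push_cast
  field_simp
  ring

lemma abs_flatField_le (hR : R ≠ 0) (r : ℝ) : |flatField R r| ≤ 6 * (r ^ 2 / (R ^ 2 + r ^ 2)) := by
  have hpos : R ^ 2 + r ^ 2 ≠ 0 := by positivity
  have hsub : 1 - (R ^ 2 - r ^ 2) / (R ^ 2 + r ^ 2) = 2 * (r ^ 2 / (R ^ 2 + r ^ 2)) := by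
    field_simp
    ring
  have hx := abs_le.1 (abs_sq_sub_sq_div_le R r)
  rw [flatField]
  generalize (R ^ 2 - r ^ 2) / (R ^ 2 + r ^ 2) = x at *
  have hfactor : 1 - x ^ 3 = (1 - x) * (1 + x + x ^ 2) := by ring
  have hle : 1 + x + x ^ 2 ≤ 3 := by nlinarith
  rw [hfactor, abs_of_nonneg (mul_nonneg (by linarith) (by nlinarith))]
  linarith [mul_le_mul_of_nonneg_left hle (by linarith : 0 ≤ 1 - x)]

lemma abs_flatFieldDeriv_le (R r : ℝ) :
    |flatFieldDeriv R r| ≤ 12 * R ^ 2 * |r| / (R ^ 2 + r ^ 2) ^ 2 := by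
  have hx := sq_le_one_iff_abs_le_one _ |>.2 (abs_sq_sub_sq_div_le R r)
  rw [flatFieldDeriv, abs_mul, abs_div, abs_mul, abs_of_nonneg (by positivity : 0 ≤ 12 * R ^ 2),
    abs_of_nonneg (sq_nonneg (R ^ 2 + r ^ 2)), abs_sq]
  exact mul_le_of_le_one_right (by positivity) hx

lemma abs_flatFieldDeriv_le_const (hR : 0 < R) (r : ℝ) : |flatFieldDeriv R r| ≤ 6 / R := by
  refine (abs_flatFieldDeriv_le R r).trans ?_
  rw [div_le_div_iff₀ (by positivity) hR]
  have hyoung : 2 * R * |r| ≤ R ^ 2 + r ^ 2 := by nlinarith [sq_nonneg (R - |r|), sq_abs r]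
  calc 12 * R ^ 2 * |r| * R = 6 * (R ^ 2 * (2 * R * |r|)) := by ring
    _ ≤ 6 * ((R ^ 2 + r ^ 2) * (R ^ 2 + r ^ 2)) := by
        gcongr
        nlinarith [sq_nonneg r]
    _ = 6 * (R ^ 2 + r ^ 2) ^ 2 := by ring

lemma abs_flatFieldDeriv_le_mul (hR : 0 < R) (hr : 0 < r) :
    |flatFieldDeriv R r| ≤ 12 / R ^ 2 * r := by
  refine (abs_flatFieldDeriv_le R r).trans ?_
  rw [abs_of_pos hr, div_mul_eq_mul_div, div_le_div_iff₀ (by positivity) (by positivity)]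
  have : R ^ 2 * R ^ 2 ≤ (R ^ 2 + r ^ 2) ^ 2 := by nlinarith [sq_nonneg R, sq_nonneg r]
  calc 12 * R ^ 2 * r * R ^ 2 = 12 * r * (R ^ 2 * R ^ 2) := by ring
    _ ≤ 12 * r * (R ^ 2 + r ^ 2) ^ 2 := by gcongr

lemma abs_flatFieldDeriv_le_one_sub_peak (hR : 0 < R) (hr : 0 < r) :
    |flatFieldDeriv R r| ≤ 12 / R * (1 - peak R r) := by
  obtain ⟨hp0, hp1⟩ := peak_mem hR hr
  have hw : flatFieldDeriv R r =
      6 * R / (R ^ 2 + r ^ 2) * peak R r * ((1 + peak R r) * (1 - peak R r)) := by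
    rw [flatFieldDeriv, peak]
    field_simp
    ring
  have hle : 6 * R / (R ^ 2 + r ^ 2) ≤ 6 / R := by
    rw [div_le_div_iff₀ (by positivity) hR]
    nlinarith
  rw [hw, abs_of_nonneg (mul_nonneg (by positivity) (mul_nonneg (by linarith) (by linarith)))]
  calc 6 * R / (R ^ 2 + r ^ 2) * peak R r * ((1 + peak R r) * (1 - peak R r))
      ≤ 6 / R * 1 * ((1 + 1) * (1 - peak R r)) := by gcongr
    _ = 12 / R * (1 - peak R r) := by ring

lemma radialField_flatField (hR : 0 < R) :
    RadialField (6 / R) (flatField R) (flatFieldDeriv R) where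
  hasDerivAt := hasDerivAt_flatField hR.ne'
  continuous_deriv := by
    have hpos (r : ℝ) : R ^ 2 + r ^ 2 ≠ 0 := by positivity
    unfold flatFieldDeriv
    fun_prop (disch := simp [hpos])
  abs_deriv_le := abs_flatFieldDeriv_le_const hR
  map_zero := by simp [flatField, hR.ne']

lemma radialTest_flatField (hR : 0 < R) :
    RadialTest (6 + 6 / R) (flatField R) (flatFieldDeriv R) where
  hasDerivAt r _ := hasDerivAt_flatField hR.ne' r
  abs_le r _ := by
    have hle : r ^ 2 / (R ^ 2 + r ^ 2) ≤ 1 :=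
      div_le_one_of_le₀ (by nlinarith) (by positivity)
    have : 0 < 6 / R := by positivity
    linarith [abs_flatField_le hR.ne' r]
  abs_deriv_le r _ := by linarith [abs_flatFieldDeriv_le_const hR r]
  abs_div_le r _ := by linarith [(radialField_flatField hR).abs_div_le r]

lemma radialTest_flatField_div (hR : 0 < R) :
    RadialTest (6 / R + 18 / R ^ 2) (fun r => flatField R r / r)
      fun r => (flatFieldDeriv R r - flatField R r / r) / r := by
  have hdiv : ∀ r, 0 < r → |flatField R r / r| ≤ 6 / R ^ 2 * r := fun r hr => by
    rw [abs_div, abs_of_pos hr, div_le_iff₀ hr]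
    refine (abs_flatField_le hR.ne' r).trans ?_
    calc 6 * (r ^ 2 / (R ^ 2 + r ^ 2)) ≤ 6 * (r ^ 2 / R ^ 2) := by
          gcongr
          nlinarith [sq_nonneg r]
      _ = 6 / R ^ 2 * r * r := by ring
  have hR1 : 0 < 6 / R := by positivity
  have hR2 : 6 / R ^ 2 + 12 / R ^ 2 = 18 / R ^ 2 := by ring
  have hR3 : 0 < 12 / R ^ 2 := by positivity
  refine ⟨fun r hr => ?_, fun r _ => ?_, fun r hr => ?_, fun r hr => ?_⟩
  · refine ((hasDerivAt_flatField hR.ne' r).div (hasDerivAt_id r) hr.ne').congr_deriv ?_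
    simp only [id]
    field_simp
  · have : 0 < 18 / R ^ 2 := by positivity
    linarith [(radialField_flatField hR).abs_div_le r]
  · rw [abs_div, abs_of_pos hr, div_le_iff₀ hr]
    have := abs_sub (flatFieldDeriv R r) (flatField R r / r)
    nlinarith [abs_flatFieldDeriv_le_mul hR hr, hdiv r hr]
  · rw [abs_div, abs_of_pos hr, div_le_iff₀ hr]
    nlinarith [hdiv r hr]

end Fields

/-! ### Concentration of minimizing profiles -/

lemma mul_ballVol_pow_le_integral {n : ℕ} [NeZero n] {f : ℝ → ℝ} {r : ℝ}
    (hf : Integrable f (radialMeasure n)) (hanti : AntitoneOn f (Ici 0))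
    (hnonneg : ∀ s, 0 < s → 0 ≤ f s) (hr : 0 ≤ r) :
    f r * (ballVol n * r ^ n) ≤ ∫ s, f s ∂radialMeasure n := by
  rw [← integral_indicator_Iic hr, ← integral_const_mul]
  refine integral_mono_ae ((integrable_indicator_Iic r).const_mul _) hf
    (ae_radialMeasure_of_forall_pos fun s hs => ?_)
  by_cases hsr : s ≤ r
  · simpa [hsr] using hanti hs.le hr hsr
  · simpa [hsr] using hnonneg s hs

/-- The density `ε u'² + ε⁻¹ W(u)` of the Allen–Cahn energy of a radial profile. -/
def energyDensity (W : ℝ → ℝ) (ε : ℝ) (Z Z' : ℝ → ℝ) (r : ℝ) : ℝ := ε * Z' r ^ 2 + ε⁻¹ * W (Z r)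

/-- The density `|(Φ(u))'|` of the total variation of `Φ(u)`, for a decreasing radial profile. -/
def variationDensity (W Z Z' : ℝ → ℝ) (r : ℝ) : ℝ := -(√(W (Z r)) * Z' r)

namespace MinimizingProfile

variable {m : ℕ} {W Z Z' p p' : ℝ → ℝ} {ε K C r : ℝ}

lemma mem_Icc (h : MinimizingProfile m W ε Z Z') (hr : 0 < r) : Z r ∈ Icc (0 : ℝ) 1 :=
  h.radialProfile.mem_Icc r hr.le

lemma deriv_nonpos (h : MinimizingProfile m W ε Z Z') (hr : 0 < r) : Z' r ≤ 0 := by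
  have hderiv := (h.radialProfile.hasDerivAt r hr).hasDerivWithinAt (s := Ici 0)
  rw [← hderiv.derivWithin (uniqueDiffOn_Ici 0 r hr.le)]
  exact h.antitoneOn.derivWithin_nonpos

lemma antitoneOn_Phi (h : MinimizingProfile m W ε Z Z') (hW : DoubleWell W) :
    AntitoneOn (fun r => Phi W (Z r)) (Ici 0) := fun _ hr _ hs hrs =>
  hW.monotoneOn_Phi (h.radialProfile.mem_Icc _ hs) (h.radialProfile.mem_Icc _ hr)
    (h.antitoneOn hr hs hrs)

lemma antitoneOn_Vpot (h : MinimizingProfile m W ε Z Z') (hW : DoubleWell W) :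
    AntitoneOn (fun r => Vpot (m + 2) W (Z r)) (Ici 0) := fun _ hr _ hs hrs =>
  Real.rpow_le_rpow (hW.Phi_mem (h.radialProfile.mem_Icc _ hs)).1 (h.antitoneOn_Phi hW hr hs hrs)
    (one_pos.trans (volumeExponent_mem m).1).le

lemma integrable_Phi (h : MinimizingProfile m W ε Z Z') (hW : DoubleWell W) :
    Integrable (fun r => Phi W (Z r)) (radialMeasure (m + 2)) := by
  obtain ⟨C, -, hC⟩ := hW.exists_Phi_le_mul_add_Vpot m
  refine ((h.integrable_potential.add h.integrable_volume).const_mul C).mono'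
    (aestronglyMeasurable_radialMeasure
      ((h.radialProfile.continuousOn_comp hW.continuousOn_Phi).mono Ioi_subset_Ici_self))
    (ae_radialMeasure_of_forall_pos fun r hr => ?_)
  rw [Real.norm_of_nonneg (hW.Phi_mem (h.mem_Icc hr)).1]
  exact hC _ (h.mem_Icc hr)

lemma hasDerivAt_Phi (h : MinimizingProfile m W ε Z Z') (hW : DoubleWell W) (hr : 0 < r) :
    HasDerivAt (fun r => Phi W (Z r)) (√(W (Z r)) * Z' r) r :=
  (hW.hasDerivWithinAt_Phi (h.mem_Icc hr)).comp_hasDerivAt r (h.radialProfile.hasDerivAt r hr)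
    ((eventually_gt_nhds hr).mono fun _ => h.mem_Icc)

lemma integrable_energyDensity (h : MinimizingProfile m W ε Z Z') :
    Integrable (energyDensity W ε Z Z') (radialMeasure (m + 2)) :=
  (h.radialProfile.integrable_deriv_sq.const_mul ε).add (h.integrable_potential.const_mul ε⁻¹)

lemma integral_energyDensity (h : MinimizingProfile m W ε Z Z') :
    ∫ r, energyDensity W ε Z Z' r ∂radialMeasure (m + 2) = Psi (m + 2) W ε 1 := by
  rw [h.Psi_eq, ← integral_const_mul, ← integral_const_mul]
  exact integral_add (h.radialProfile.integrable_deriv_sq.const_mul ε)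
    (h.integrable_potential.const_mul ε⁻¹)

lemma variationDensity_nonneg (h : MinimizingProfile m W ε Z Z') (hr : 0 < r) :
    0 ≤ variationDensity W Z Z' r := by
  rw [variationDensity, ← mul_neg]
  exact mul_nonneg (Real.sqrt_nonneg _) (neg_nonneg.2 (h.deriv_nonpos hr))

lemma two_mul_variationDensity_le (h : MinimizingProfile m W ε Z Z') (hW : DoubleWell W)
    (hε : 0 < ε) (hr : 0 < r) : 2 * variationDensity W Z Z' r ≤ energyDensity W ε Z Z' r := by
  have hsq : 0 ≤ ε⁻¹ * (ε * Z' r + √(W (Z r))) ^ 2 := by positivity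
  have hexpand : ε⁻¹ * (ε * Z' r + √(W (Z r))) ^ 2 =
      energyDensity W ε Z Z' r - 2 * variationDensity W Z Z' r := by
    rw [energyDensity, variationDensity, ← Real.sq_sqrt (hW.nonneg (h.mem_Icc hr)),
      Real.sqrt_sq (Real.sqrt_nonneg _)]
    field_simp
    ring
  linarith

lemma integrable_variationDensity (h : MinimizingProfile m W ε Z Z') (hW : DoubleWell W)
    (hε : 0 < ε) : Integrable (variationDensity W Z Z') (radialMeasure (m + 2)) := by
  refine h.integrable_energyDensity.mono' ?_ (ae_radialMeasure_of_forall_pos fun r hr => ?_)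
  · exact ((aestronglyMeasurable_radialMeasure
      ((h.radialProfile.continuousOn_comp hW.continuousOn_sqrt).mono Ioi_subset_Ici_self)).mul
      h.measurable_deriv.aestronglyMeasurable).neg
  · rw [Real.norm_of_nonneg (h.variationDensity_nonneg hr)]
    linarith [h.variationDensity_nonneg hr, h.two_mul_variationDensity_le hW hε hr]

lemma integral_variationDensity_mul (h : MinimizingProfile m W ε Z Z') (hW : DoubleWell W)
    (hε : 0 < ε) (hp : RadialTest K p p') :
    ∫ r, variationDensity W Z Z' r * p r ∂radialMeasure (m + 2) =
      ∫ r, Phi W (Z r) * radialDiv m p p' r ∂radialMeasure (m + 2) := by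
  refine hp.integral_neg_deriv_mul (C := (∫ r, Phi W (Z r) ∂radialMeasure (m + 2)) /
    ballVol (m + 2)) (fun r hr => h.hasDerivAt_Phi hW hr)
    (h.radialProfile.continuousOn_comp hW.continuousOn_Phi 0 self_mem_Ici) (h.integrable_Phi hW)
    ?_ fun r hr => ?_
  · exact (h.integrable_variationDensity hW hε).neg.congr (.of_forall fun r => neg_neg _)
  · have hPhi := fun s hs => (hW.Phi_mem (h.mem_Icc (r := s) hs)).1
    have hdecay :=
      mul_ballVol_pow_le_integral (h.integrable_Phi hW) (h.antitoneOn_Phi hW) hPhi hr.le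
    rw [le_div_iff₀ (ballVol_pos _), abs_of_nonneg (hPhi r hr)]
    linarith

lemma integral_abs_Vpot_sub_indicator_le (h : MinimizingProfile m W ε Z Z') (hW : DoubleWell W)
    (hC : ∀ t ∈ Icc (0 : ℝ) 1, Phi W t * (1 - Phi W t) ≤ C * W t) :
    ∫ r, |Vpot (m + 2) W (Z r) - (Iic (R0 (m + 2))).indicator (fun _ => (1 : ℝ)) r|
      ∂radialMeasure (m + 2) ≤ 8 * C * ∫ r, W (Z r) ∂radialMeasure (m + 2) := by
  have hmem := fun r hr => hW.Vpot_mem m (h.mem_Icc (r := r) hr)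
  refine (integral_abs_sub_indicator_le h.integrable_volume (h.antitoneOn_Vpot hW) hmem
    (R0_pos _) ?_).trans ?_
  · rw [h.volume_eq_one, integral_indicator_Iic (R0_pos _).le, ballVol_mul_R0_pow]
  · have hmix : ∀ r, 0 < r →
        Vpot (m + 2) W (Z r) * (1 - Vpot (m + 2) W (Z r)) ≤ 2 * C * W (Z r) := fun r hr => by
      obtain ⟨hP0, hP1⟩ := hW.Phi_mem (h.mem_Icc hr)
      have hV1 : 0 ≤ 1 - Vpot (m + 2) W (Z r) := sub_nonneg.2 (hmem r hr).2
      calc Vpot (m + 2) W (Z r) * (1 - Vpot (m + 2) W (Z r))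
          ≤ Phi W (Z r) * (1 - Phi W (Z r) ^ 2) := by
            gcongr
            exacts [hW.Vpot_le_Phi m (h.mem_Icc hr), hW.Phi_sq_le_Vpot m (h.mem_Icc hr)]
        _ = (1 + Phi W (Z r)) * (Phi W (Z r) * (1 - Phi W (Z r))) := by ring
        _ ≤ 2 * (Phi W (Z r) * (1 - Phi W (Z r))) := by
            have := mul_nonneg hP0 (sub_nonneg.2 hP1)
            gcongr
            linarith
        _ ≤ 2 * C * W (Z r) := by linarith [hC _ (h.mem_Icc hr)]
    have hmono := integral_mono_of_nonneg
      (ae_radialMeasure_of_forall_pos (n := m + 2) fun r hr =>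
        mul_nonneg (hmem r hr).1 (sub_nonneg.2 (hmem r hr).2))
      (h.integrable_potential.const_mul (2 * C)) (ae_radialMeasure_of_forall_pos hmix)
    rw [integral_const_mul] at hmono
    linarith

lemma integral_abs_Phi_sub_indicator_le (h : MinimizingProfile m W ε Z Z') (hW : DoubleWell W)
    (hC : ∀ t ∈ Icc (0 : ℝ) 1, Phi W t * (1 - Phi W t) ≤ C * W t) :
    ∫ r, |Phi W (Z r) - (Iic (R0 (m + 2))).indicator (fun _ => (1 : ℝ)) r|
      ∂radialMeasure (m + 2) ≤ 9 * C * ∫ r, W (Z r) ∂radialMeasure (m + 2) := by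
  have hind := integrable_indicator_Iic (n := m + 2) (R0 (m + 2))
  have hle : ∀ r, 0 < r →
      |Phi W (Z r) - (Iic (R0 (m + 2))).indicator (fun _ => (1 : ℝ)) r| ≤
        |Vpot (m + 2) W (Z r) - (Iic (R0 (m + 2))).indicator (fun _ => (1 : ℝ)) r| +
          C * W (Z r) := fun r hr => by
    have hupp := hW.Vpot_le_Phi m (h.mem_Icc hr)
    have hlow := hW.Phi_sq_le_Vpot m (h.mem_Icc hr)
    have hbound := hC _ (h.mem_Icc hr)
    refine (abs_sub_le _ (Vpot (m + 2) W (Z r)) _).trans ?_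
    rw [abs_of_nonneg (sub_nonneg.2 hupp)]
    linarith
  have hmono := integral_mono_ae ((h.integrable_Phi hW).sub hind).abs
    ((h.integrable_volume.sub hind).abs.add (h.integrable_potential.const_mul C))
    (ae_radialMeasure_of_forall_pos hle)
  rw [integral_add' (h.integrable_volume.sub hind).abs (h.integrable_potential.const_mul C),
    integral_const_mul] at hmono
  simp only [Pi.sub_apply] at hmono
  linarith [h.integral_abs_Vpot_sub_indicator_le hW hC]

end MinimizingProfile

/-! ### The Lagrange multiplier of minimizing profiles -/

section Multiplier

open Asymptotics

/-- The filter of triples `(ε, Z, Z')`, where `Z` is a minimizing profile at scale `ε` and `Z'` its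
derivative, as `ε → 0⁺`; asymptotics along it are uniform in the choice of the minimizer. -/
def smallMinimizers (m : ℕ) (W : ℝ → ℝ) : Filter (ℝ × (ℝ → ℝ) × (ℝ → ℝ)) :=
  comap Prod.fst (nhdsWithin 0 (Ioi 0)) ⊓ 𝓟 {x | MinimizingProfile m W x.1 x.2.1 x.2.2}

variable {m : ℕ} {W p p' : ℝ → ℝ} {K : ℝ}

lemma eventually_smallMinimizers_iff {P : ℝ × (ℝ → ℝ) × (ℝ → ℝ) → Prop} :
    (∀ᶠ x in smallMinimizers m W, P x) ↔ ∃ ε₁ > 0, ∀ ε ∈ Ioo (0 : ℝ) ε₁, ∀ Z Z',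
      MinimizingProfile m W ε Z Z' → P (ε, Z, Z') := by
  rw [smallMinimizers, eventually_inf_principal, eventually_comap,
    (nhdsGT_basis (0 : ℝ)).eventually_iff]
  refine exists_congr fun ε₁ => and_congr_right fun _ => forall₂_congr fun ε _ => ⟨?_, ?_⟩
  · exact fun h Z Z' => h (ε, Z, Z') rfl
  · rintro h ⟨_, Z, Z'⟩ rfl
    exact h Z Z'

lemma eventually_smallMinimizers (m : ℕ) (W : ℝ → ℝ) : ∀ᶠ x in smallMinimizers m W,
    0 < x.1 ∧ MinimizingProfile m W x.1 x.2.1 x.2.2 :=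
  eventually_smallMinimizers_iff.2 ⟨1, one_pos, fun _ hε _ _ h => ⟨hε.1, h⟩⟩

lemma DoubleWell.eventually_Psi_le (hW : DoubleWell W) (m : ℕ) :
    ∃ C > 0, ∀ᶠ x in smallMinimizers m W, x.1 < 1 ∧ Psi (m + 2) W x.1 1 ≤
      2 * (sphereArea (m + 2) * R0 (m + 2) ^ (m + 1)) + C * x.1 := by
  obtain ⟨C, hC, ε₁, hε₁, hPsi⟩ := hW.exists_Psi_le m
  refine ⟨C, hC, eventually_smallMinimizers_iff.2 ⟨ε₁, hε₁.1, fun ε hε Z Z' _ => ?_⟩⟩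
  exact ⟨hε.2.trans_le hε₁.2, by simpa only [mul_assoc] using hPsi ε hε⟩

namespace MinimizingProfile

variable {Z Z' : ℝ → ℝ} {ε : ℝ}

lemma integral_potential_nonneg (h : MinimizingProfile m W ε Z Z') (hW : DoubleWell W) :
    0 ≤ ∫ r, W (Z r) ∂radialMeasure (m + 2) :=
  integral_nonneg_of_ae (ae_radialMeasure_of_forall_pos fun _ hr => hW.nonneg (h.mem_Icc hr))

lemma kineticEnergy_nonneg (hε : 0 < ε) : 0 ≤ ε * ∫ r, Z' r ^ 2 ∂radialMeasure (m + 2) :=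
  mul_nonneg hε.le (integral_nonneg fun _ => sq_nonneg _)

lemma integral_potential_le (h : MinimizingProfile m W ε Z Z') (hε : 0 < ε) :
    ∫ r, W (Z r) ∂radialMeasure (m + 2) ≤ Psi (m + 2) W ε 1 * ε := by
  have hkin := kineticEnergy_nonneg (m := m) (Z' := Z') hε
  rw [← div_le_iff₀ hε, div_eq_inv_mul, h.Psi_eq]
  linarith

lemma abs_multiplier_le (h : MinimizingProfile m W ε Z Z') (hW : DoubleWell W) (hε : 0 < ε) :
    |multiplier m W ε Z Z'| ≤ Psi (m + 2) W ε 1 := by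
  have hkin := kineticEnergy_nonneg (m := m) (Z' := Z') hε
  have hpot := mul_nonneg (inv_pos.2 hε).le (h.integral_potential_nonneg hW)
  have hfactor : (m : ℝ) / (m + 2) ≤ 1 := (div_le_one (by positivity)).2 (by linarith)
  rw [multiplier, abs_of_nonneg (by positivity), h.Psi_eq]
  linarith [mul_le_of_le_one_left hkin hfactor]

end MinimizingProfile

namespace DoubleWell

lemma isBigO_integral_potential (hW : DoubleWell W) (m : ℕ) :
    (fun x => ∫ r, W (x.2.1 r) ∂radialMeasure (m + 2)) =O[smallMinimizers m W] Prod.fst := by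
  obtain ⟨C, hC, hPsi⟩ := hW.eventually_Psi_le m
  refine .of_bound (2 * (sphereArea (m + 2) * R0 (m + 2) ^ (m + 1)) + C) ?_
  filter_upwards [eventually_smallMinimizers m W, hPsi] with x ⟨hε, hx⟩ ⟨hε1, hle⟩
  rw [norm_of_nonneg (hx.integral_potential_nonneg hW), norm_of_nonneg hε.le]
  refine (hx.integral_potential_le hε).trans ?_
  gcongr
  exact hle.trans (by gcongr; exact mul_le_of_le_one_right hC.le hε1.le)

lemma isBigO_multiplier (hW : DoubleWell W) (m : ℕ) :
    (fun x => multiplier m W x.1 x.2.1 x.2.2) =O[smallMinimizers m W] fun _ => (1 : ℝ) := by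
  obtain ⟨C, hC, hPsi⟩ := hW.eventually_Psi_le m
  refine .of_bound (2 * (sphereArea (m + 2) * R0 (m + 2) ^ (m + 1)) + C) ?_
  filter_upwards [eventually_smallMinimizers m W, hPsi] with x ⟨hε, hx⟩ ⟨hε1, hle⟩
  rw [norm_one, mul_one]
  refine (hx.abs_multiplier_le hW hε).trans (hle.trans ?_)
  gcongr
  exact mul_le_of_le_one_right hC.le hε1.le

lemma isBigO_integral_abs_Vpot_sub_indicator (hW : DoubleWell W) (m : ℕ) :
    (fun x => ∫ r, |Vpot (m + 2) W (x.2.1 r) - (Iic (R0 (m + 2))).indicator (fun _ => (1 : ℝ)) r|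
      ∂radialMeasure (m + 2)) =O[smallMinimizers m W] Prod.fst := by
  obtain ⟨C, -, hC⟩ := hW.exists_Phi_mul_one_sub_le
  refine IsBigO.trans (.of_bound (8 * C) ?_) (hW.isBigO_integral_potential m)
  filter_upwards [eventually_smallMinimizers m W] with x ⟨_, hx⟩
  rw [norm_of_nonneg (integral_nonneg fun _ => abs_nonneg _),
    norm_of_nonneg (hx.integral_potential_nonneg hW)]
  exact hx.integral_abs_Vpot_sub_indicator_le hW hC

lemma isBigO_integral_abs_Phi_sub_indicator (hW : DoubleWell W) (m : ℕ) :
    (fun x => ∫ r, |Phi W (x.2.1 r) - (Iic (R0 (m + 2))).indicator (fun _ => (1 : ℝ)) r|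
      ∂radialMeasure (m + 2)) =O[smallMinimizers m W] Prod.fst := by
  obtain ⟨C, -, hC⟩ := hW.exists_Phi_mul_one_sub_le
  refine IsBigO.trans (.of_bound (9 * C) ?_) (hW.isBigO_integral_potential m)
  filter_upwards [eventually_smallMinimizers m W] with x ⟨_, hx⟩
  rw [norm_of_nonneg (integral_nonneg fun _ => abs_nonneg _),
    norm_of_nonneg (hx.integral_potential_nonneg hW)]
  exact hx.integral_abs_Phi_sub_indicator_le hW hC

lemma isBigO_integral_Vpot_mul_radialDiv (hW : DoubleWell W) (m : ℕ) (hp : RadialTest K p p') :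
    (fun x => ∫ r, Vpot (m + 2) W (x.2.1 r) * radialDiv m p p' r ∂radialMeasure (m + 2) -
      sphereArea (m + 2) * (R0 (m + 2) ^ (m + 1) * p (R0 (m + 2))))
      =O[smallMinimizers m W] Prod.fst := by
  refine IsBigO.trans (.of_bound ((m + 2) * K) ?_) (hW.isBigO_integral_abs_Vpot_sub_indicator m)
  filter_upwards [eventually_smallMinimizers m W] with x ⟨_, hx⟩
  rw [norm_of_nonneg (integral_nonneg fun _ => abs_nonneg _)]
  exact hp.abs_integral_mul_radialDiv_sub_le (R0_pos _).le hx.integrable_volume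

lemma isBigO_integral_variationDensity_mul (hW : DoubleWell W) (m : ℕ) (hp : RadialTest K p p') :
    (fun x => ∫ r, variationDensity W x.2.1 x.2.2 r * p r ∂radialMeasure (m + 2) -
      sphereArea (m + 2) * (R0 (m + 2) ^ (m + 1) * p (R0 (m + 2))))
      =O[smallMinimizers m W] Prod.fst := by
  refine IsBigO.trans (.of_bound ((m + 2) * K) ?_) (hW.isBigO_integral_abs_Phi_sub_indicator m)
  filter_upwards [eventually_smallMinimizers m W] with x ⟨hε, hx⟩
  rw [norm_of_nonneg (integral_nonneg fun _ => abs_nonneg _),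
    hx.integral_variationDensity_mul hW hε hp]
  exact hp.abs_integral_mul_radialDiv_sub_le (R0_pos _).le (hx.integrable_Phi hW)

end DoubleWell

/-- The energy density minus its Modica–Mortola lower bound, the latter discounted by
`peak (R0 (m + 2))` so that the excess also controls the energy away from the limit sphere. -/
def excess (m : ℕ) (W : ℝ → ℝ) (ε : ℝ) (Z Z' : ℝ → ℝ) (r : ℝ) : ℝ :=
  energyDensity W ε Z Z' r - 2 * (variationDensity W Z Z' r * peak (R0 (m + 2)) r)

namespace MinimizingProfile

variable {Z Z' : ℝ → ℝ} {ε r : ℝ}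

lemma integrable_variationDensity_mul_peak (h : MinimizingProfile m W ε Z Z') (hW : DoubleWell W)
    (hε : 0 < ε) : Integrable (fun r => variationDensity W Z Z' r * peak (R0 (m + 2)) r)
      (radialMeasure (m + 2)) :=
  (radialTest_peak (R0_pos _)).integrable_mul (h.integrable_variationDensity hW hε)

lemma integrable_excess (h : MinimizingProfile m W ε Z Z') (hW : DoubleWell W) (hε : 0 < ε) :
    Integrable (excess m W ε Z Z') (radialMeasure (m + 2)) :=
  h.integrable_energyDensity.sub ((h.integrable_variationDensity_mul_peak hW hε).const_mul 2)

lemma integral_excess (h : MinimizingProfile m W ε Z Z') (hW : DoubleWell W) (hε : 0 < ε) :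
    ∫ r, excess m W ε Z Z' r ∂radialMeasure (m + 2) = Psi (m + 2) W ε 1 -
      2 * ∫ r, variationDensity W Z Z' r * peak (R0 (m + 2)) r ∂radialMeasure (m + 2) := by
  rw [← h.integral_energyDensity, ← integral_const_mul]
  exact integral_sub h.integrable_energyDensity
    ((h.integrable_variationDensity_mul_peak hW hε).const_mul 2)

lemma energyDensity_sub_le_excess (h : MinimizingProfile m W ε Z Z') (hr : 0 < r) :
    energyDensity W ε Z Z' r - 2 * variationDensity W Z Z' r ≤ excess m W ε Z Z' r := by
  have := mul_le_of_le_one_right (h.variationDensity_nonneg hr) (peak_mem (R0_pos (m + 2)) hr).2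
  rw [excess]
  linarith

lemma excess_nonneg (h : MinimizingProfile m W ε Z Z') (hW : DoubleWell W) (hε : 0 < ε)
    (hr : 0 < r) : 0 ≤ excess m W ε Z Z' r :=
  (sub_nonneg.2 (h.two_mul_variationDensity_le hW hε hr)).trans (h.energyDensity_sub_le_excess hr)

lemma energyDensity_mul_one_sub_peak_le_excess (h : MinimizingProfile m W ε Z Z')
    (hW : DoubleWell W) (hε : 0 < ε) (hr : 0 < r) :
    energyDensity W ε Z Z' r * (1 - peak (R0 (m + 2)) r) ≤ excess m W ε Z Z' r := by
  have := mul_le_mul_of_nonneg_right (h.two_mul_variationDensity_le hW hε hr)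
    (peak_mem (R0_pos (m + 2)) hr).1
  rw [excess]
  linarith

end MinimizingProfile

lemma DoubleWell.isBigO_integral_excess (hW : DoubleWell W) (m : ℕ) :
    (fun x => ∫ r, excess m W x.1 x.2.1 x.2.2 r ∂radialMeasure (m + 2))
      =O[smallMinimizers m W] Prod.fst := by
  obtain ⟨C, -, hPsi⟩ := hW.eventually_Psi_le m
  obtain ⟨K, hK⟩ :=
    (hW.isBigO_integral_variationDensity_mul m (radialTest_peak (R0_pos (m + 2)))).bound
  refine .of_bound (C + 2 * K) ?_
  filter_upwards [eventually_smallMinimizers m W, hPsi, hK] with x ⟨hε, hx⟩ ⟨_, hle⟩ hvar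
  rw [peak_self (R0_pos _).ne', mul_one, norm_of_nonneg hε.le] at hvar
  rw [norm_of_nonneg (integral_nonneg_of_ae
    (ae_radialMeasure_of_forall_pos fun r hr => hx.excess_nonneg hW hε hr)), norm_of_nonneg hε.le,
    hx.integral_excess hW hε]
  linarith [(abs_le.1 hvar).1]

/-- The integrand of the virial identity for `flatField`, after the Modica–Mortola lower bound has
been subtracted from the energy density in its tangential part. -/
def virialDefect (m : ℕ) (W : ℝ → ℝ) (ε : ℝ) (Z Z' : ℝ → ℝ) (r : ℝ) : ℝ :=
  (m + 1) * ((energyDensity W ε Z Z' r - 2 * variationDensity W Z Z' r) *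
    (flatField (R0 (m + 2)) r / r)) +
    (ε⁻¹ * W (Z r) - ε * Z' r ^ 2) * flatFieldDeriv (R0 (m + 2)) r

namespace MinimizingProfile

variable {Z Z' : ℝ → ℝ} {ε r : ℝ}

lemma multiplier_mul_sub_eq (h : MinimizingProfile m W ε Z Z') (hW : DoubleWell W) (hε : 0 < ε) :
    multiplier m W ε Z Z' * ∫ r, Vpot (m + 2) W (Z r) *
        radialDiv m (flatField (R0 (m + 2))) (flatFieldDeriv (R0 (m + 2))) r
        ∂radialMeasure (m + 2) -
      2 * (m + 1) * ∫ r, variationDensity W Z Z' r * (flatField (R0 (m + 2)) r / r)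
        ∂radialMeasure (m + 2) =
    ∫ r, virialDefect m W ε Z Z' r ∂radialMeasure (m + 2) := by
  set φ := flatField (R0 (m + 2))
  set w := flatFieldDeriv (R0 (m + 2))
  have hφ := radialTest_flatField (R0_pos (m + 2))
  have hφ_div := radialTest_flatField_div (R0_pos (m + 2))
  have hpot : Integrable (fun r => W (Z r) * radialDiv m φ w r) (radialMeasure (m + 2)) :=
    hφ.integrable_mul_radialDiv h.integrable_potential
  have hvar := hφ_div.integrable_mul (h.integrable_variationDensity hW hε)
  have hkin : Integrable (fun r => Z' r ^ 2 * ((m + 1) * (φ r / r) - w r))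
      (radialMeasure (m + 2)) := by
    have hsq := h.radialProfile.integrable_deriv_sq
    refine (((hφ_div.integrable_mul hsq).const_mul (2 * (m + 1))).sub
      (hφ.integrable_mul_radialDiv (m := m) hsq)).congr (.of_forall fun r => ?_)
    simp only [Pi.sub_apply, radialDiv]
    ring
  have hvirial : ε * ∫ r, Z' r ^ 2 * ((m + 1) * (φ r / r) - w r) ∂radialMeasure (m + 2) +
      ε⁻¹ * ∫ r, W (Z r) * radialDiv m φ w r ∂radialMeasure (m + 2) =
      multiplier m W ε Z Z' * ∫ r, Vpot (m + 2) W (Z r) * radialDiv m φ w r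
        ∂radialMeasure (m + 2) := h.virial hW hε (radialField_flatField (R0_pos (m + 2)))
  rw [← hvirial, ← integral_const_mul, ← integral_const_mul, ← integral_const_mul,
    ← integral_add (hkin.const_mul _) (hpot.const_mul _)]
  refine (integral_sub ((hkin.const_mul _).add (hpot.const_mul _)) (hvar.const_mul _)).symm.trans
    (integral_congr_ae (.of_forall fun r => ?_))
  simp only [virialDefect, energyDensity, radialDiv, Pi.add_apply]
  ring

lemma abs_virialDefect_le (h : MinimizingProfile m W ε Z Z') (hW : DoubleWell W) (hε : 0 < ε)
    (hr : 0 < r) : |virialDefect m W ε Z Z' r| ≤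
      ((m + 1) * (6 / R0 (m + 2)) + 12 / R0 (m + 2)) * excess m W ε Z Z' r := by
  have hR := R0_pos (m + 2)
  have htangential : |(energyDensity W ε Z Z' r - 2 * variationDensity W Z Z' r) *
      (flatField (R0 (m + 2)) r / r)| ≤ excess m W ε Z Z' r * (6 / R0 (m + 2)) := by
    rw [abs_mul, abs_of_nonneg (sub_nonneg.2 (h.two_mul_variationDensity_le hW hε hr))]
    exact mul_le_mul (h.energyDensity_sub_le_excess hr) ((radialField_flatField hR).abs_div_le r)
      (abs_nonneg _) (h.excess_nonneg hW hε hr)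
  have hpot : 0 ≤ ε⁻¹ * W (Z r) := mul_nonneg (inv_pos.2 hε).le (hW.nonneg (h.mem_Icc hr))
  have hkin : 0 ≤ ε * Z' r ^ 2 := by positivity
  have hradial : |(ε⁻¹ * W (Z r) - ε * Z' r ^ 2) * flatFieldDeriv (R0 (m + 2)) r| ≤
      12 / R0 (m + 2) * excess m W ε Z Z' r :=
    calc _ ≤ energyDensity W ε Z Z' r * (12 / R0 (m + 2) * (1 - peak (R0 (m + 2)) r)) := by
          rw [abs_mul]
          refine mul_le_mul ?_ (abs_flatFieldDeriv_le_one_sub_peak hR hr) (abs_nonneg _)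
            (add_nonneg hkin hpot)
          rw [energyDensity, abs_le]
          constructor <;> linarith
      _ = 12 / R0 (m + 2) * (energyDensity W ε Z Z' r * (1 - peak (R0 (m + 2)) r)) := by ring
      _ ≤ _ := by
          gcongr
          exact h.energyDensity_mul_one_sub_peak_le_excess hW hε hr
  refine (abs_add_le _ _).trans ?_
  rw [abs_mul, abs_of_pos (by positivity : (0 : ℝ) < m + 1)]
  have := mul_le_mul_of_nonneg_left htangential (by positivity : (0 : ℝ) ≤ m + 1)
  linarith

end MinimizingProfile

namespace DoubleWell

lemma isBigO_integral_virialDefect (hW : DoubleWell W) (m : ℕ) :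
    (fun x => ∫ r, virialDefect m W x.1 x.2.1 x.2.2 r ∂radialMeasure (m + 2))
      =O[smallMinimizers m W] Prod.fst := by
  refine IsBigO.trans (.of_bound ((m + 1) * (6 / R0 (m + 2)) + 12 / R0 (m + 2)) ?_)
    (hW.isBigO_integral_excess m)
  filter_upwards [eventually_smallMinimizers m W] with x ⟨hε, hx⟩
  rw [norm_of_nonneg (integral_nonneg_of_ae
    (ae_radialMeasure_of_forall_pos fun r hr => hx.excess_nonneg hW hε hr)), ← integral_const_mul]
  exact norm_integral_le_of_norm_le ((hx.integrable_excess hW hε).const_mul _)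
    (ae_radialMeasure_of_forall_pos fun r hr => hx.abs_virialDefect_le hW hε hr)

lemma isBigO_multiplier_sub (hW : DoubleWell W) (m : ℕ) :
    (fun x => multiplier m W x.1 x.2.1 x.2.2 - 2 * (m + 1) / R0 (m + 2))
      =O[smallMinimizers m W] Prod.fst := by
  have hR := R0_pos (m + 2)
  have hA := sphereArea_pos (m + 2)
  have hvolume := (hW.isBigO_multiplier m).mul
    (hW.isBigO_integral_Vpot_mul_radialDiv m (radialTest_flatField hR))
  have hvariation := (hW.isBigO_integral_variationDensity_mul m
    (radialTest_flatField_div hR)).const_mul_left (2 * (m + 1))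
  simp only [one_mul, flatField_self, mul_one] at hvolume hvariation
  refine ((((hW.isBigO_integral_virialDefect m).add hvariation).sub hvolume).const_mul_left
    (sphereArea (m + 2) * R0 (m + 2) ^ (m + 1))⁻¹).congr' ?_ .rfl
  filter_upwards [eventually_smallMinimizers m W] with x ⟨hε, hx⟩
  rw [← hx.multiplier_mul_sub_eq hW hε]
  field_simp
  ring

theorem exists_abs_multiplier_sub_le (hW : DoubleWell W) (m : ℕ) :
    ∃ C, ∃ ε₁ > 0, ∀ ε ∈ Ioo (0 : ℝ) ε₁, ∀ Z Z', MinimizingProfile m W ε Z Z' →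
      |multiplier m W ε Z Z' - 2 * (m + 1) / R0 (m + 2)| ≤ C * ε := by
  obtain ⟨C, hC⟩ := (hW.isBigO_multiplier_sub m).bound
  obtain ⟨ε₁, hε₁, hbound⟩ := eventually_smallMinimizers_iff.1 hC
  refine ⟨C, ε₁, hε₁, fun ε hε Z Z' h => ?_⟩
  simpa only [Real.norm_eq_abs, abs_of_pos hε.1] using hbound ε hε Z Z' h

end DoubleWell

end Multiplier

/-! ### The first integral of the Euler-Lagrange equation -/

/-- The mean over the ball of radius `r` in `ℝᵏ⁺¹` of the radial function `x ↦ G ‖x‖`. -/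
def ballMean (k : ℕ) (G : ℝ → ℝ) (r : ℝ) : ℝ :=
  ∫ s in (0 : ℝ)..1, (k + 1) * s ^ k * G (r * s)

section BallMean

variable {k : ℕ} {G : ℝ → ℝ}

lemma integral_add_one_mul_pow (k : ℕ) : ∫ s in (0 : ℝ)..1, (k + 1) * s ^ k = 1 := by
  rw [intervalIntegral.integral_const_mul, integral_pow, one_pow, zero_pow k.succ_ne_zero,
    sub_zero, mul_one_div_cancel (by positivity)]

lemma continuous_ballMean (hG : Continuous G) : Continuous (ballMean k G) :=
  intervalIntegral.continuous_parametric_intervalIntegral_of_continuous' (by fun_prop) 0 1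

lemma ballMean_zero (k : ℕ) (G : ℝ → ℝ) : ballMean k G 0 = G 0 := by
  simp only [ballMean, zero_mul, intervalIntegral.integral_mul_const, integral_add_one_mul_pow,
    one_mul]

lemma norm_add_one_mul_pow_mul_le {M s x : ℝ} (hs : 0 ≤ s) (hx : |x| ≤ M) :
    ‖(k + 1) * s ^ k * x‖ ≤ M * ((k + 1) * s ^ k) := by
  rw [norm_mul, Real.norm_of_nonneg (by positivity), Real.norm_eq_abs, mul_comm]
  gcongr

lemma abs_ballMean_le {M : ℝ} (hG : ∀ t, |G t| ≤ M) (r : ℝ) : |ballMean k G r| ≤ M := by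
  refine (intervalIntegral.norm_integral_le_of_norm_le zero_le_one
    (.of_forall fun s hs => norm_add_one_mul_pow_mul_le hs.1.le (hG (r * s)))
    ((by fun_prop : Continuous fun s : ℝ => M * ((k + 1) * s ^ k)).intervalIntegrable 0 1)).trans
    ?_
  rw [intervalIntegral.integral_const_mul, integral_add_one_mul_pow, mul_one]

lemma pow_mul_ballMean (k : ℕ) (G : ℝ → ℝ) (r : ℝ) :
    r ^ (k + 1) * ballMean k G r = ∫ t in (0 : ℝ)..r, (k + 1) * t ^ k * G t := by
  have hsubst := intervalIntegral.mul_integral_comp_mul_left (a := 0) (b := 1) (c := r)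
    (f := fun t => (k + 1) * t ^ k * G t)
  rw [mul_zero, mul_one] at hsubst
  rw [← hsubst, pow_succ', mul_assoc, ballMean, ← intervalIntegral.integral_const_mul]
  congr 2 with s
  ring

lemma hasDerivAt_pow_mul_ballMean (hG : Continuous G) (r : ℝ) :
    HasDerivAt (fun r => r ^ (k + 1) * ballMean k G r) ((k + 1) * r ^ k * G r) r := by
  simp only [pow_mul_ballMean]
  exact ((by fun_prop : Continuous fun t => (k + 1) * t ^ k * G t).integral_hasStrictDerivAt
    0 r).hasDerivAt

lemma tendsto_ballMean {ι : Type*} {l : Filter ι} [l.IsCountablyGenerated] {F : ι → ℝ → ℝ}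
    {M : ℝ} (hF : ∀ i, Continuous (F i)) (hM : ∀ i t, |F i t| ≤ M)
    (hlim : ∀ t, Tendsto (fun i => F i t) l (nhds (G t))) (r : ℝ) :
    Tendsto (fun i => ballMean k (F i) r) l (nhds (ballMean k G r)) := by
  refine intervalIntegral.tendsto_integral_filter_of_dominated_convergence
    (fun s => M * ((k + 1) * s ^ k)) (.of_forall fun i => ?_) (.of_forall fun i => ?_)
    ((by fun_prop : Continuous fun s : ℝ => M * ((k + 1) * s ^ k)).intervalIntegrable 0 1)
    (.of_forall fun s _ => (hlim (r * s)).const_mul _)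
  · have := hF i
    exact (by fun_prop : Continuous fun s => (k + 1) * s ^ k * F i (r * s)).aestronglyMeasurable
  · refine .of_forall fun s hs => ?_
    rw [uIoc_of_le zero_le_one] at hs
    exact norm_add_one_mul_pow_mul_le hs.1.le (hM i _)

end BallMean

section CompactSupport

variable {M : ℝ} {f f' g χ G : ℝ → ℝ}

lemma exists_abs_le_of_eq_zero (hf : Continuous f) (hM : ∀ r, M ≤ r → f r = 0) :
    ∃ K, ∀ r, 0 ≤ r → |f r| ≤ K := by
  obtain ⟨K, hK⟩ := (isCompact_Icc (a := (0 : ℝ)) (b := max M 0)).exists_bound_of_continuousOn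
    hf.continuousOn
  refine ⟨K, fun r hr => ?_⟩
  obtain hrM | hrM := le_total M r
  · rw [hM r hrM, abs_zero]
    exact (norm_nonneg _).trans (hK 0 ⟨le_rfl, le_max_right _ _⟩)
  · exact hK r ⟨hr, hrM.trans (le_max_left _ _)⟩

lemma integrable_radialMeasure_of_eq_zero (n : ℕ) [NeZero n] (hf : Continuous f)
    (hM : ∀ r, M ≤ r → f r = 0) : Integrable f (radialMeasure n) := by
  obtain ⟨K, hK⟩ := exists_abs_le_of_eq_zero hf hM
  refine ((integrable_indicator_Iic M).const_mul K).mono' hf.aestronglyMeasurable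
    (ae_radialMeasure_of_forall_pos fun r hr => ?_)
  obtain hrM | hrM := le_or_gt r M
  · simpa [hrM] using hK r hr.le
  · simp [hM r hrM.le, hrM.not_ge]

lemma exists_radialField (hf : ∀ r, HasDerivAt f (f' r) r) (hf' : Continuous f')
    (h0 : f 0 = 0) (hM : ∀ r, M ≤ r → f' r = 0) :
    ∃ K φ w, RadialField K φ w ∧ ∀ r, 0 < r → φ r = f r ∧ w r = f' r := by
  obtain ⟨K, hK⟩ := exists_abs_le_of_eq_zero hf' hM
  set w : ℝ → ℝ := fun t => f' (max t 0)
  have hw : Continuous w := by fun_prop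
  have hw_eq : ∀ r, 0 ≤ r → w r = f' r := fun r hr => by simp only [w, max_eq_left hr]
  refine ⟨K, fun r => ∫ t in (0 : ℝ)..r, w t, w,
    ⟨fun r => (hw.integral_hasStrictDerivAt 0 r).hasDerivAt, hw, fun r => hK _ (le_max_right _ _),
      intervalIntegral.integral_same⟩, fun r hr => ⟨?_, hw_eq r hr.le⟩⟩
  calc ∫ t in (0 : ℝ)..r, w t = ∫ t in (0 : ℝ)..r, f' t :=
        intervalIntegral.integral_congr fun t ht => hw_eq t (uIcc_of_le hr.le ▸ ht).1
    _ = f r - f 0 := intervalIntegral.integral_eq_sub_of_hasDerivAt (fun t _ => hf t)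
        (hf'.intervalIntegrable 0 r)
    _ = f r := by rw [h0, sub_zero]

lemma integral_mul_eq_integral_sub_ballMean (m : ℕ) (hG : Continuous G)
    (hχ : ∀ r, HasDerivAt χ (g r) r) (hg : Continuous g) (hχM : ∀ r, M ≤ r → χ r = 0)
    (hgM : ∀ r, M ≤ r → g r = 0) :
    ∫ r, G r * (2 * (m + 1) * r ^ m * χ r + r ^ (m + 1) * g r) ∂radialMeasure (m + 2) =
      ∫ r, r ^ (m + 1) * g r * (G r - ballMean (2 * m + 1) G r) ∂radialMeasure (m + 2) := by
  have hχ_cont : Continuous χ := continuous_iff_continuousAt.2 fun r => (hχ r).continuousAt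
  have hmean := continuous_ballMean (k := 2 * m + 1) hG
  set d : ℝ → ℝ := fun r =>
    2 * (m + 1) * r ^ m * G r * χ r + r ^ (m + 1) * ballMean (2 * m + 1) G r * g r with hd
  have hd_int : Integrable d (radialMeasure (m + 2)) :=
    integrable_radialMeasure_of_eq_zero (M := M) _ (by fun_prop) fun r hr => by
      simp [hd, hχM r hr, hgM r hr]
  have hd_deriv : ∀ r ∈ Ici (0 : ℝ), HasDerivAt
      (fun r => r ^ (2 * m + 1 + 1) * ballMean (2 * m + 1) G r * χ r) (r ^ (m + 1) * d r) r :=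
    fun r _ => ((hasDerivAt_pow_mul_ballMean hG r).mul (hχ r)).congr_deriv (by
      push_cast [hd]
      ring)
  have hd_zero : ∫ r, d r ∂radialMeasure (m + 2) = 0 := by
    have hlim : Tendsto (fun r => r ^ (2 * m + 1 + 1) * ballMean (2 * m + 1) G r * χ r) atTop
        (nhds 0) := by
      refine tendsto_const_nhds.congr' ?_
      filter_upwards [eventually_ge_atTop M] with r hr
      rw [hχM r hr, mul_zero]
    rw [integral_radialMeasure, integral_Ioi_of_hasDerivAt_of_tendsto' hd_deriv
      ((integrable_radialMeasure_iff (m + 1)).1 hd_int) hlim]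
    simp
  rw [← sub_eq_zero, ← integral_sub, ← hd_zero]
  · refine integral_congr_ae (.of_forall fun r => ?_)
    simp only [hd]
    ring
  all_goals
    refine integrable_radialMeasure_of_eq_zero (M := M) _ (by fun_prop) fun r hr => ?_
    simp [hχM r hr, hgM r hr]

lemma ae_eq_of_forall_integral_pow_mul_eq (k j : ℕ) {A B : ℝ → ℝ}
    (hA : Integrable A (radialMeasure (k + 1))) (hB : Continuous B)
    (hAB : ∀ (g : ℝ → ℝ) (M : ℝ), Continuous g → (∀ r, M ≤ r → g r = 0) →
      ∫ r, r ^ j * g r * A r ∂radialMeasure (k + 1) =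
        ∫ r, r ^ j * g r * B r ∂radialMeasure (k + 1)) :
    ∀ᵐ r : ℝ, 0 < r → A r = B r := by
  have hloc : LocallyIntegrableOn (fun r => r ^ j * (r ^ k * A r - r ^ k * B r)) (Ioi 0) :=
    (((integrable_radialMeasure_iff k).1 hA).locallyIntegrableOn.sub
      (ContinuousOn.locallyIntegrableOn (by fun_prop) measurableSet_Ioi)).continuousOn_mul
      (by fun_prop) isOpen_Ioi.isLocallyClosed
  have hae := isOpen_Ioi.ae_eq_zero_of_integral_contDiff_smul_eq_zero hloc fun g hg hgc hgs => ?_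
  · filter_upwards [hae] with r hr hr0
    simpa [← mul_sub, (pow_pos hr0 _).ne', sub_eq_zero] using hr hr0
  have hg' := hg.continuous
  obtain ⟨M, hM⟩ := hgc.isCompact.isBounded.bddAbove
  have hgM : ∀ r, M + 1 ≤ r → g r = 0 := fun r hr =>
    image_eq_zero_of_notMem_tsupport fun hmem => by linarith [hM hmem]
  obtain ⟨K, hK⟩ := exists_abs_le_of_eq_zero (f := fun r => r ^ j * g r) (by fun_prop)
    fun r hr => by rw [hgM r hr, mul_zero]
  have hA_int : Integrable (fun r => r ^ j * g r * A r) (radialMeasure (k + 1)) :=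
    hA.bdd_mul (by fun_prop : Continuous fun r => r ^ j * g r).aestronglyMeasurable
      (ae_radialMeasure_of_forall_pos fun r hr => hK r hr.le)
  have hB_int : Integrable (fun r => r ^ j * g r * B r) (radialMeasure (k + 1)) :=
    integrable_radialMeasure_of_eq_zero (M := M + 1) _ (by fun_prop) fun r hr => by
      simp [hgM r hr]
  have hweak := sub_eq_zero.2 (hAB g (M + 1) hg' hgM)
  rw [← integral_sub hA_int hB_int, integral_radialMeasure] at hweak
  rw [← (mul_eq_zero.1 hweak).resolve_left (sphereArea_pos _).ne',
    ← setIntegral_eq_integral_of_forall_compl_eq_zero (s := Ioi 0) fun r hr => by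
      rw [image_eq_zero_of_notMem_tsupport fun hmem => hr (hgs hmem), zero_smul]]
  refine setIntegral_congr_fun measurableSet_Ioi fun r _ => ?_
  simp only [smul_eq_mul]
  ring

end CompactSupport

/-- The zeroth-order term `ε⁻¹ W(Z) - l V(Z)` of the constrained energy of a profile on `ℝᵐ⁺²`,
extended evenly to negative radii. -/
def forcing (m : ℕ) (W : ℝ → ℝ) (ε l : ℝ) (Z : ℝ → ℝ) (r : ℝ) : ℝ :=
  ε⁻¹ * W (Z |r|) - l * Vpot (m + 2) W (Z |r|)

/-- The value which the first integral of the Euler-Lagrange equation assigns to `Z'(r)²`. -/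
def slopeSq (m : ℕ) (W : ℝ → ℝ) (ε l : ℝ) (Z : ℝ → ℝ) (r : ℝ) : ℝ :=
  ε⁻¹ * (forcing m W ε l Z r - ballMean (2 * m + 1) (forcing m W ε l Z) r)

lemma slopeSq_zero (m : ℕ) (W : ℝ → ℝ) (ε l : ℝ) (Z : ℝ → ℝ) : slopeSq m W ε l Z 0 = 0 := by
  rw [slopeSq, ballMean_zero, sub_self, mul_zero]

lemma abs_slopeSq_le {m : ℕ} {W Z : ℝ → ℝ} {ε l M : ℝ} (hε : 0 < ε)
    (hM : ∀ t, |forcing m W ε l Z t| ≤ M) (r : ℝ) : |slopeSq m W ε l Z r| ≤ ε⁻¹ * (2 * M) := by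
  rw [slopeSq, abs_mul, abs_of_pos (inv_pos.2 hε)]
  gcongr
  linarith [abs_sub (forcing m W ε l Z r) (ballMean (2 * m + 1) (forcing m W ε l Z) r), hM r,
    abs_ballMean_le (k := 2 * m + 1) hM r]

namespace DoubleWell

variable {m : ℕ} {W Z : ℝ → ℝ}

lemma continuous_forcing (hW : DoubleWell W) (hZ : ContinuousOn Z (Ici 0))
    (hmem : ∀ r, 0 ≤ r → Z r ∈ Icc (0 : ℝ) 1) (ε l : ℝ) : Continuous (forcing m W ε l Z) := by
  have hZabs : Continuous fun t => Z |t| := hZ.comp_continuous continuous_abs abs_nonneg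
  have hmem' : ∀ t, Z |t| ∈ Icc (0 : ℝ) 1 := fun t => hmem _ (abs_nonneg t)
  have hpot := hW.continuousOn.comp_continuous hZabs hmem'
  have hvol := (hW.continuousOn_Vpot m).comp_continuous hZabs hmem'
  exact (hpot.const_mul _).sub (hvol.const_mul _)

lemma continuous_slopeSq (hW : DoubleWell W) (hZ : ContinuousOn Z (Ici 0))
    (hmem : ∀ r, 0 ≤ r → Z r ∈ Icc (0 : ℝ) 1) (ε l : ℝ) : Continuous (slopeSq m W ε l Z) := by
  have hforcing := hW.continuous_forcing (m := m) hZ hmem ε l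
  exact (hforcing.sub (continuous_ballMean hforcing)).const_mul _

end DoubleWell

namespace MinimizingProfile

variable {m : ℕ} {W Z Z' g : ℝ → ℝ} {ε K M : ℝ}

lemma virial_forcing (h : MinimizingProfile m W ε Z Z') (hW : DoubleWell W) (hε : 0 < ε)
    {φ w : ℝ → ℝ} (hφ : RadialField K φ w) :
    ε * ∫ r, Z' r ^ 2 * ((m + 1) * (φ r / r) - w r) ∂radialMeasure (m + 2) +
      ∫ r, forcing m W ε (multiplier m W ε Z Z') Z r * ((m + 1) * (φ r / r) + w r)
        ∂radialMeasure (m + 2) = 0 := by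
  have hdiv_meas : Measurable fun r => (m + 1) * (φ r / r) + w r :=
    ((hφ.continuous.measurable.div measurable_id).const_mul _).add hφ.continuous_deriv.measurable
  have hdiv_le : ∀ r, ‖(m + 1) * (φ r / r) + w r‖ ≤ (m + 1) * K + K := fun r => by
    refine (norm_add_le _ _).trans (add_le_add ?_ (hφ.abs_deriv_le r))
    rw [norm_mul, Real.norm_of_nonneg (by positivity)]
    exact mul_le_mul_of_nonneg_left (hφ.abs_div_le r) (by positivity)
  have hpot := h.integrable_potential.mul_bdd hdiv_meas.aestronglyMeasurable (.of_forall hdiv_le)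
  have hvol := h.integrable_volume.mul_bdd hdiv_meas.aestronglyMeasurable (.of_forall hdiv_le)
  have hsplit : ∀ᵐ r ∂radialMeasure (m + 2),
      forcing m W ε (multiplier m W ε Z Z') Z r * ((m + 1) * (φ r / r) + w r) =
        ε⁻¹ * (W (Z r) * ((m + 1) * (φ r / r) + w r)) - multiplier m W ε Z Z' *
          (Vpot (m + 2) W (Z r) * ((m + 1) * (φ r / r) + w r)) :=
    ae_radialMeasure_of_forall_pos fun r hr => by
      rw [forcing, abs_of_pos hr]
      ring
  rw [integral_congr_ae hsplit, integral_sub (hpot.const_mul _) (hvol.const_mul _),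
    integral_const_mul, integral_const_mul]
  linarith [h.virial hW hε hφ]

lemma continuous_forcing (h : MinimizingProfile m W ε Z Z') (hW : DoubleWell W) (l : ℝ) :
    Continuous (forcing m W ε l Z) :=
  hW.continuous_forcing h.radialProfile.continuousOn h.radialProfile.mem_Icc ε l

lemma continuous_slopeSq (h : MinimizingProfile m W ε Z Z') (hW : DoubleWell W) (l : ℝ) :
    Continuous (slopeSq m W ε l Z) :=
  hW.continuous_slopeSq h.radialProfile.continuousOn h.radialProfile.mem_Icc ε l

-- The virial identity for `φ = rᵐ⁺¹ χ` with `χ' = g`, integrated by parts.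
lemma integral_mul_deriv_sq_eq (h : MinimizingProfile m W ε Z Z') (hW : DoubleWell W)
    (hε : 0 < ε) (hg : Continuous g) (hgM : ∀ r, M ≤ r → g r = 0) :
    ∫ r, r ^ (m + 1) * g r * Z' r ^ 2 ∂radialMeasure (m + 2) =
      ∫ r, r ^ (m + 1) * g r * slopeSq m W ε (multiplier m W ε Z Z') Z r
        ∂radialMeasure (m + 2) := by
  set χ : ℝ → ℝ := fun r => ∫ t in M..r, g t
  have hχ : ∀ r, HasDerivAt χ (g r) r := fun r => (hg.integral_hasStrictDerivAt M r).hasDerivAt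
  have hχ_cont : Continuous χ := continuous_iff_continuousAt.2 fun r => (hχ r).continuousAt
  have hχM : ∀ r, M ≤ r → χ r = 0 := fun r hr =>
    (intervalIntegral.integral_congr fun t ht => hgM t (uIcc_of_le hr ▸ ht).1).trans
      intervalIntegral.integral_zero
  obtain ⟨K, φ, w, hφ, hφ_eq⟩ := exists_radialField (M := M) (f := fun r => r ^ (m + 1) * χ r)
    (f' := fun r => (m + 1) * r ^ m * χ r + r ^ (m + 1) * g r)
    (fun r => by simpa using (hasDerivAt_pow (m + 1) r).fun_mul (hχ r)) (by fun_prop) (by simp)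
    fun r hr => by simp [hχM r hr, hgM r hr]
  have hkinetic : ∀ᵐ r ∂radialMeasure (m + 2),
      Z' r ^ 2 * ((m + 1) * (φ r / r) - w r) = -(r ^ (m + 1) * g r * Z' r ^ 2) :=
    ae_radialMeasure_of_forall_pos fun r hr => by
      rw [(hφ_eq r hr).1, (hφ_eq r hr).2]
      field_simp
      ring
  have hforcing : ∀ᵐ r ∂radialMeasure (m + 2),
      forcing m W ε (multiplier m W ε Z Z') Z r * ((m + 1) * (φ r / r) + w r) =
        forcing m W ε (multiplier m W ε Z Z') Z r *
          (2 * (m + 1) * r ^ m * χ r + r ^ (m + 1) * g r) :=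
    ae_radialMeasure_of_forall_pos fun r hr => by
      rw [(hφ_eq r hr).1, (hφ_eq r hr).2]
      field_simp
      ring
  have hvirial := h.virial_forcing hW hε hφ
  rw [integral_congr_ae hkinetic, integral_neg, integral_congr_ae hforcing,
    integral_mul_eq_integral_sub_ballMean m (h.continuous_forcing hW _) hχ hg hχM hgM] at hvirial
  simp only [slopeSq, mul_left_comm _ ε⁻¹, integral_const_mul]
  rw [eq_inv_mul_iff_mul_eq₀ hε.ne']
  linarith

lemma deriv_sq_ae_eq_slopeSq (h : MinimizingProfile m W ε Z Z') (hW : DoubleWell W)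
    (hε : 0 < ε) :
    ∀ᵐ r : ℝ, 0 < r → Z' r ^ 2 = slopeSq m W ε (multiplier m W ε Z Z') Z r :=
  ae_eq_of_forall_integral_pow_mul_eq (m + 1) (m + 1) h.radialProfile.integrable_deriv_sq
    (h.continuous_slopeSq hW _) fun _ _ hg hgM => h.integral_mul_deriv_sq_eq hW hε hg hgM

lemma sub_eq_neg_integral_sqrt_slopeSq (h : MinimizingProfile m W ε Z Z') (hW : DoubleWell W)
    (hε : 0 < ε) {s r : ℝ} (hs : 0 ≤ s) (hr : s ≤ r) :
    Z r - Z s = -∫ t in s..r, √(slopeSq m W ε (multiplier m W ε Z Z') Z t) := by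
  have hae : ∀ᵐ t, t ∈ uIoc s r →
      -√(slopeSq m W ε (multiplier m W ε Z Z') Z t) = Z' t := by
    rw [uIoc_of_le hr]
    filter_upwards [h.deriv_sq_ae_eq_slopeSq hW hε] with t ht hts
    have ht0 : 0 < t := hs.trans_lt hts.1
    rw [← ht ht0, Real.sqrt_sq_eq_abs, abs_of_nonpos (h.deriv_nonpos ht0), neg_neg]
  have hint : IntervalIntegrable Z' volume s r :=
    ((h.continuous_slopeSq hW _).sqrt.neg.intervalIntegrable s r).congr_ae
      ((ae_restrict_iff' measurableSet_uIoc).2 hae)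
  rw [← intervalIntegral.integral_eq_sub_of_hasDerivAt_of_le hr
    (h.radialProfile.continuousOn.mono fun t ht => hs.trans ht.1)
    (fun t ht => h.radialProfile.hasDerivAt t (hs.trans_lt ht.1)) hint,
    ← intervalIntegral.integral_neg]
  exact (intervalIntegral.integral_congr_ae hae).symm

lemma abs_sub_le (h : MinimizingProfile m W ε Z Z') (hW : DoubleWell W) (hε : 0 < ε)
    (hM : ∀ t, |slopeSq m W ε (multiplier m W ε Z Z') Z t| ≤ M) {s r : ℝ} (hs : 0 ≤ s)
    (hr : 0 ≤ r) : |Z r - Z s| ≤ √M * |r - s| := by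
  wlog hsr : s ≤ r generalizing s r
  · rw [abs_sub_comm (Z r), abs_sub_comm r]
    exact this hr hs (not_le.1 hsr).le
  rw [h.sub_eq_neg_integral_sqrt_slopeSq hW hε hs hsr, abs_neg]
  refine intervalIntegral.norm_integral_le_of_norm_le_const (E := ℝ) fun t _ => ?_
  rw [Real.norm_of_nonneg (Real.sqrt_nonneg _)]
  exact Real.sqrt_le_sqrt ((le_abs_self _).trans (hM t))

end MinimizingProfile

/-! ### Compactness of minimizers -/

lemma exists_subseq_tendsto_of_lipschitzWith {X : Type*} [PseudoMetricSpace X]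
    [TopologicalSpace.SeparableSpace X] {K : Set ℝ} (hK : IsCompact K) {L : NNReal} {f : ℕ → X → ℝ}
    (hf : ∀ k, LipschitzWith L (f k)) (hmem : ∀ k x, f k x ∈ K) :
    ∃ σ : ℕ → ℕ, StrictMono σ ∧ ∃ g : X → ℝ, LipschitzWith L g ∧
      ∀ x, Tendsto (fun k => f (σ k) x) atTop (nhds (g x)) := by
  obtain ⟨s, hs, hdense⟩ := TopologicalSpace.exists_countable_dense X
  have := hs.to_subtype
  obtain ⟨y, -, σ, hσ, hy⟩ := (isCompact_univ_pi fun _ : s => hK).tendsto_subseq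
    (x := fun k (x : s) => f k x) fun k x _ => hmem k x
  have hlim : ∀ x ∈ s, Tendsto (fun k => f (σ k) x) atTop
      (nhds (limUnder atTop fun k => f (σ k) x)) := fun x hx =>
    tendsto_nhds_limUnder ⟨y ⟨x, hx⟩, tendsto_pi_nhds.1 hy ⟨x, hx⟩⟩
  have hlip : LipschitzOnWith L (fun x => limUnder atTop fun k => f (σ k) x) s :=
    LipschitzOnWith.of_dist_le_mul fun x hx x' hx' =>
      le_of_tendsto' ((hlim x hx).dist (hlim x' hx')) fun k => (hf (σ k)).dist_le_mul x x'
  obtain ⟨g, hg, heq⟩ := hlip.extend_real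
  have hequi : Equicontinuous fun k => f (σ k) :=
    (LipschitzWith.uniformEquicontinuous (fun k => f (σ k)) L fun k => hf (σ k)).equicontinuous
  refine ⟨σ, hσ, g, hg, fun x => (hequi x).tendsto_of_mem_closure
    (hg.continuous.continuousAt.mono_left nhdsWithin_le_nhds) (fun x' hx' => ?_) (hdense x)⟩
  rw [← heq hx']
  exact hlim x' hx'

lemma integrable_and_integral_le_of_tendsto {α : Type*} [MeasurableSpace α] {μ : Measure α}
    {f : ℕ → α → ℝ} {g : α → ℝ} {a : ℝ} (hf : ∀ k, Integrable (f k) μ)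
    (hnonneg : ∀ k, 0 ≤ᵐ[μ] f k) (hlim : ∀ᵐ x ∂μ, Tendsto (fun k => f k x) atTop (nhds (g x)))
    (ha : Tendsto (fun k => ∫ x, f k x ∂μ) atTop (nhds a)) :
    Integrable g μ ∧ ∫ x, g x ∂μ ≤ a := by
  have hg_nonneg : 0 ≤ᵐ[μ] g := by
    filter_upwards [hlim, ae_all_iff.2 hnonneg] with x hx hx0
    exact ge_of_tendsto' hx hx0
  have hfatou : ∫⁻ x, ENNReal.ofReal (g x) ∂μ ≤ ENNReal.ofReal a :=
    calc ∫⁻ x, ENNReal.ofReal (g x) ∂μ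
        = ∫⁻ x, liminf (fun k => ENNReal.ofReal (f k x)) atTop ∂μ :=
          lintegral_congr_ae (hlim.mono fun x hx =>
            ((ENNReal.continuous_ofReal.tendsto _).comp hx).liminf_eq.symm)
      _ ≤ liminf (fun k => ∫⁻ x, ENNReal.ofReal (f k x) ∂μ) atTop :=
          lintegral_liminf_le' fun k => (hf k).aemeasurable.ennreal_ofReal
      _ = liminf (fun k => ENNReal.ofReal (∫ x, f k x ∂μ)) atTop := by
          simp only [ofReal_integral_eq_lintegral_ofReal (hf _) (hnonneg _)]
      _ = ENNReal.ofReal a := ((ENNReal.continuous_ofReal.tendsto _).comp ha).liminf_eq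
  have hg : Integrable g μ :=
    ⟨aestronglyMeasurable_of_tendsto_ae atTop (fun k => (hf k).aestronglyMeasurable) hlim,
      (hasFiniteIntegral_iff_ofReal hg_nonneg).2 (hfatou.trans_lt ENNReal.ofReal_lt_top)⟩
  rw [← ofReal_integral_eq_lintegral_ofReal hg hg_nonneg] at hfatou
  exact ⟨hg, (ENNReal.ofReal_le_ofReal_iff
    (ge_of_tendsto' ha fun k => integral_nonneg_of_ae (hnonneg k))).1 hfatou⟩

lemma integrable_one_add_rpow_neg {n : ℕ} [NeZero n] {s : ℝ} (hs : n < s) :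
    Integrable (fun r : ℝ => (1 + r) ^ (-s)) (radialMeasure n) :=
  integrable_comp_norm.1 (integrable_one_add_norm (by simpa using hs))

lemma DoubleWell.Vpot_le_mul_rpow {W : ℝ → ℝ} (hW : DoubleWell W) (m : ℕ) {t r D : ℝ}
    (ht : t ∈ Icc (0 : ℝ) 1) (hr : 0 ≤ r) (hD : Phi W t * r ^ (m + 2) ≤ D) :
    Vpot (m + 2) W t ≤
      (2 ^ (m + 1) * (1 + D)) ^ (((m + 2 : ℕ) : ℝ) / (((m + 2 : ℕ) : ℝ) - 1)) *
        (1 + r) ^ (-(((m + 2 : ℕ) : ℝ) * (((m + 2 : ℕ) : ℝ) / (((m + 2 : ℕ) : ℝ) - 1)))) := by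
  have hq := volumeExponent_mem m
  rw [Vpot]
  set q : ℝ := ((m + 2 : ℕ) : ℝ) / (((m + 2 : ℕ) : ℝ) - 1)
  have hPhi := hW.Phi_mem ht
  have hD0 : 0 ≤ D := (mul_nonneg hPhi.1 (by positivity)).trans hD
  have hPhi_le : Phi W t ≤ 2 ^ (m + 1) * (1 + D) * ((1 + r) ^ (m + 2))⁻¹ := by
    rw [← div_eq_mul_inv, le_div_iff₀ (by positivity)]
    calc Phi W t * (1 + r) ^ (m + 2)
        ≤ Phi W t * (2 ^ (m + 1) * (1 ^ (m + 2) + r ^ (m + 2))) :=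
          mul_le_mul_of_nonneg_left (add_pow_le zero_le_one hr _) hPhi.1
      _ = 2 ^ (m + 1) * (Phi W t + Phi W t * r ^ (m + 2)) := by ring
      _ ≤ 2 ^ (m + 1) * (1 + D) := by
          gcongr
          exact hPhi.2
  calc Phi W t ^ q ≤ (2 ^ (m + 1) * (1 + D) * ((1 + r) ^ (m + 2))⁻¹) ^ q :=
        Real.rpow_le_rpow hPhi.1 hPhi_le (by linarith [hq.1])
    _ = _ := by
        rw [Real.mul_rpow (by positivity) (by positivity), Real.rpow_neg (by positivity),
          Real.inv_rpow (by positivity), Real.rpow_natCast_mul (by positivity)]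

lemma MinimizingProfile.exists_Phi_mul_pow_le {W : ℝ → ℝ} (hW : DoubleWell W) (m : ℕ) :
    ∃ C > 0, ∀ ε Z Z', MinimizingProfile m W ε Z Z' → ∀ r, 0 < r →
      Phi W (Z r) * r ^ (m + 2) ≤ C * (∫ r, W (Z r) ∂radialMeasure (m + 2) + 1) := by
  obtain ⟨C, hC, hPhi_le⟩ := hW.exists_Phi_le_mul_add_Vpot m
  refine ⟨C / ballVol (m + 2), div_pos hC (ballVol_pos _), fun ε Z Z' h r hr => ?_⟩
  rw [div_mul_eq_mul_div, le_div_iff₀ (ballVol_pos _)]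
  calc Phi W (Z r) * r ^ (m + 2) * ballVol (m + 2)
      = Phi W (Z r) * (ballVol (m + 2) * r ^ (m + 2)) := by ring
    _ ≤ ∫ s, Phi W (Z s) ∂radialMeasure (m + 2) :=
        mul_ballVol_pow_le_integral (h.integrable_Phi hW) (h.antitoneOn_Phi hW)
          (fun s hs => (hW.Phi_mem (h.mem_Icc hs)).1) hr.le
    _ ≤ ∫ s, C * (W (Z s) + Vpot (m + 2) W (Z s)) ∂radialMeasure (m + 2) :=
        integral_mono_ae (h.integrable_Phi hW)
          ((h.integrable_potential.add h.integrable_volume).const_mul C)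
          (ae_radialMeasure_of_forall_pos fun s hs => hPhi_le _ (h.mem_Icc hs))
    _ = C * (∫ r, W (Z r) ∂radialMeasure (m + 2) + 1) := by
        rw [integral_const_mul, integral_add h.integrable_potential h.integrable_volume,
          h.volume_eq_one]

lemma MinimizingProfile.abs_forcing_le {m : ℕ} {W Z Z' : ℝ → ℝ} {ε M : ℝ}
    (h : MinimizingProfile m W ε Z Z') (hW : DoubleWell W) (hε : 0 < ε)
    (hM : ∀ t ∈ Icc (0 : ℝ) 1, |W t| ≤ M) (l t : ℝ) :
    |forcing m W ε l Z t| ≤ ε⁻¹ * M + |l| := by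
  have hmem := h.radialProfile.mem_Icc _ (abs_nonneg t)
  have hV := hW.Vpot_mem m hmem
  refine (abs_sub _ _).trans ?_
  rw [abs_mul, abs_mul, abs_of_pos (inv_pos.2 hε), abs_of_nonneg hV.1]
  exact add_le_add (mul_le_mul_of_nonneg_left (hM _ hmem) (inv_pos.2 hε).le)
    (mul_le_of_le_one_right (abs_nonneg l) hV.2)

/-- A sequence of minimizing profiles `Z k` for parameters `e k → ε` whose multipliers converge
to `l`. -/
structure MultiplierConvergent (m : ℕ) (W : ℝ → ℝ) (e : ℕ → ℝ) (Z Z' : ℕ → ℝ → ℝ) (ε l : ℝ) :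
    Prop where
  pos : ∀ k, 0 < e k
  limit_pos : 0 < ε
  tendsto_param : Tendsto e atTop (nhds ε)
  minimizing : ∀ k, MinimizingProfile m W (e k) (Z k) (Z' k)
  tendsto_multiplier : Tendsto (fun k => multiplier m W (e k) (Z k) (Z' k)) atTop (nhds l)

namespace MultiplierConvergent

variable {m : ℕ} {W : ℝ → ℝ} {e : ℕ → ℝ} {Z Z' : ℕ → ℝ → ℝ} {ε l : ℝ}

lemma comp_strictMono (h : MultiplierConvergent m W e Z Z' ε l) {σ : ℕ → ℕ} (hσ : StrictMono σ) :
    MultiplierConvergent m W (e ∘ σ) (Z ∘ σ) (Z' ∘ σ) ε l :=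
  ⟨fun k => h.pos (σ k), h.limit_pos, h.tendsto_param.comp hσ.tendsto_atTop,
    fun k => h.minimizing (σ k), h.tendsto_multiplier.comp hσ.tendsto_atTop⟩

lemma tendsto_inv_param (h : MultiplierConvergent m W e Z Z' ε l) :
    Tendsto (fun k => (e k)⁻¹) atTop (nhds ε⁻¹) :=
  h.tendsto_param.inv₀ h.limit_pos.ne'

lemma exists_abs_forcing_le (h : MultiplierConvergent m W e Z Z' ε l) (hW : DoubleWell W) :
    ∃ M, ∀ k t, |forcing m W (e k) (multiplier m W (e k) (Z k) (Z' k)) (Z k) t| ≤ M := by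
  obtain ⟨MW, hMW⟩ := isCompact_Icc.exists_bound_of_continuousOn hW.continuousOn
  obtain ⟨M, hM⟩ :=
    ((h.tendsto_inv_param.mul_const MW).add h.tendsto_multiplier.abs).bddAbove_range
  exact ⟨M, fun k t => ((h.minimizing k).abs_forcing_le hW (h.pos k) hMW _ t).trans (hM ⟨k, rfl⟩)⟩

lemma exists_abs_slopeSq_le (h : MultiplierConvergent m W e Z Z' ε l) (hW : DoubleWell W) :
    ∃ M, ∀ k t, |slopeSq m W (e k) (multiplier m W (e k) (Z k) (Z' k)) (Z k) t| ≤ M := by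
  obtain ⟨M, hM⟩ := h.exists_abs_forcing_le hW
  obtain ⟨M', hM'⟩ := (h.tendsto_inv_param.mul_const (2 * M)).bddAbove_range
  exact ⟨M', fun k t => (abs_slopeSq_le (h.pos k) (hM k) t).trans (hM' ⟨k, rfl⟩)⟩

lemma exists_lipschitzWith (h : MultiplierConvergent m W e Z Z' ε l) (hW : DoubleWell W) :
    ∃ L, ∀ k, LipschitzWith L fun r => Z k |r| := by
  obtain ⟨M, hM⟩ := h.exists_abs_slopeSq_le hW
  refine ⟨(√M).toNNReal, fun k => LipschitzWith.of_dist_le_mul fun r s => ?_⟩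
  rw [Real.dist_eq, Real.dist_eq, Real.coe_toNNReal _ (Real.sqrt_nonneg _)]
  exact ((h.minimizing k).abs_sub_le hW (h.pos k) (hM k) (abs_nonneg s) (abs_nonneg r)).trans
    (mul_le_mul_of_nonneg_left (abs_abs_sub_abs_le_abs_sub r s) (Real.sqrt_nonneg _))

end MultiplierConvergent

/-- A `MultiplierConvergent` sequence of minimizing profiles which converges pointwise to the
continuous profile `Y`. -/
structure ConvergentMinimizers (m : ℕ) (W : ℝ → ℝ) (e : ℕ → ℝ) (Z Z' : ℕ → ℝ → ℝ) (ε l : ℝ)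
    (Y : ℝ → ℝ) : Prop extends MultiplierConvergent m W e Z Z' ε l where
  tendsto_profile : ∀ r, 0 ≤ r → Tendsto (fun k => Z k r) atTop (nhds (Y r))
  continuousOn : ContinuousOn Y (Ici 0)

lemma MultiplierConvergent.exists_subseq {m : ℕ} {W : ℝ → ℝ} {e : ℕ → ℝ} {Z Z' : ℕ → ℝ → ℝ}
    {ε l : ℝ} (h : MultiplierConvergent m W e Z Z' ε l) (hW : DoubleWell W) :
    ∃ σ : ℕ → ℕ, StrictMono σ ∧
      ∃ Y, ConvergentMinimizers m W (e ∘ σ) (Z ∘ σ) (Z' ∘ σ) ε l Y := by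
  obtain ⟨L, hL⟩ := h.exists_lipschitzWith hW
  obtain ⟨σ, hσ, Y, hY, hlim⟩ := exists_subseq_tendsto_of_lipschitzWith isCompact_Icc hL
    fun k r => (h.minimizing k).radialProfile.mem_Icc _ (abs_nonneg r)
  refine ⟨σ, hσ, Y, h.comp_strictMono hσ, fun r hr => ?_, hY.continuous.continuousOn⟩
  simpa only [Function.comp_apply, abs_of_nonneg hr] using hlim r

namespace ConvergentMinimizers

variable {m : ℕ} {W F Y : ℝ → ℝ} {e : ℕ → ℝ} {Z Z' : ℕ → ℝ → ℝ} {ε l r A B : ℝ}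

lemma mem_Icc (h : ConvergentMinimizers m W e Z Z' ε l Y) (r : ℝ) (hr : 0 ≤ r) :
    Y r ∈ Icc (0 : ℝ) 1 :=
  isClosed_Icc.mem_of_tendsto (h.tendsto_profile r hr)
    (.of_forall fun k => (h.minimizing k).radialProfile.mem_Icc r hr)

lemma antitoneOn (h : ConvergentMinimizers m W e Z Z' ε l Y) : AntitoneOn Y (Ici 0) :=
  fun s hs r hr hsr => le_of_tendsto_of_tendsto' (h.tendsto_profile r hr) (h.tendsto_profile s hs)
    fun k => (h.minimizing k).antitoneOn hs hr hsr

lemma tendsto_comp (h : ConvergentMinimizers m W e Z Z' ε l Y) (hF : ContinuousOn F (Icc 0 1))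
    (hr : 0 ≤ r) : Tendsto (fun k => F (Z k r)) atTop (nhds (F (Y r))) :=
  (hF (Y r) (h.mem_Icc r hr)).tendsto.comp (tendsto_nhdsWithin_iff.2 ⟨h.tendsto_profile r hr,
    .of_forall fun k => (h.minimizing k).radialProfile.mem_Icc r hr⟩)

lemma tendsto_forcing (h : ConvergentMinimizers m W e Z Z' ε l Y) (hW : DoubleWell W) (t : ℝ) :
    Tendsto (fun k => forcing m W (e k) (multiplier m W (e k) (Z k) (Z' k)) (Z k) t) atTop
      (nhds (forcing m W ε l Y t)) :=
  (h.tendsto_inv_param.mul (h.tendsto_comp hW.continuousOn (abs_nonneg t))).sub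
    (h.tendsto_multiplier.mul (h.tendsto_comp (hW.continuousOn_Vpot m) (abs_nonneg t)))

lemma tendsto_slopeSq (h : ConvergentMinimizers m W e Z Z' ε l Y) (hW : DoubleWell W) (r : ℝ) :
    Tendsto (fun k => slopeSq m W (e k) (multiplier m W (e k) (Z k) (Z' k)) (Z k) r) atTop
      (nhds (slopeSq m W ε l Y r)) := by
  obtain ⟨M, hM⟩ := h.exists_abs_forcing_le hW
  exact h.tendsto_inv_param.mul ((h.tendsto_forcing hW r).sub (tendsto_ballMean
    (fun k => (h.minimizing k).continuous_forcing hW _) hM (h.tendsto_forcing hW) r))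

lemma continuous_sqrt_slopeSq (h : ConvergentMinimizers m W e Z Z' ε l Y) (hW : DoubleWell W) :
    Continuous fun r => √(slopeSq m W ε l Y r) :=
  (hW.continuous_slopeSq h.continuousOn h.mem_Icc ε l).sqrt

lemma eq_sub_integral_sqrt_slopeSq (h : ConvergentMinimizers m W e Z Z' ε l Y)
    (hW : DoubleWell W) (hr : 0 ≤ r) :
    Y r = Y 0 - ∫ t in (0 : ℝ)..r, √(slopeSq m W ε l Y t) := by
  obtain ⟨M, hM⟩ := h.exists_abs_slopeSq_le hW
  have hint : Tendsto
      (fun k => ∫ t in (0 : ℝ)..r,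
        √(slopeSq m W (e k) (multiplier m W (e k) (Z k) (Z' k)) (Z k) t))
      atTop (nhds (∫ t in (0 : ℝ)..r, √(slopeSq m W ε l Y t))) := by
    refine intervalIntegral.tendsto_integral_filter_of_dominated_convergence (fun _ => √M)
      (.of_forall fun k =>
        ((h.minimizing k).continuous_slopeSq hW _).sqrt.aestronglyMeasurable)
      (.of_forall fun k => .of_forall fun t _ => ?_) intervalIntegrable_const
      (.of_forall fun t _ => (h.tendsto_slopeSq hW t).sqrt)
    rw [Real.norm_of_nonneg (Real.sqrt_nonneg _)]
    exact Real.sqrt_le_sqrt ((le_abs_self _).trans (hM k t))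
  refine tendsto_nhds_unique (h.tendsto_profile r hr)
    (((h.tendsto_profile 0 le_rfl).sub hint).congr fun k => ?_)
  linarith [(h.minimizing k).sub_eq_neg_integral_sqrt_slopeSq hW (h.pos k) le_rfl hr]

lemma hasDerivWithinAt (h : ConvergentMinimizers m W e Z Z' ε l Y) (hW : DoubleWell W)
    (hr : 0 ≤ r) : HasDerivWithinAt Y (-√(slopeSq m W ε l Y r)) (Ici 0) r :=
  ((((h.continuous_sqrt_slopeSq hW).integral_hasStrictDerivAt 0 r).hasDerivAt.const_sub
    (Y 0)).hasDerivWithinAt).congr (fun _ hs => h.eq_sub_integral_sqrt_slopeSq hW hs)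
    (h.eq_sub_integral_sqrt_slopeSq hW hr)

lemma deriv_sq_ae_eq (h : ConvergentMinimizers m W e Z Z' ε l Y) (hW : DoubleWell W) (k : ℕ) :
    (fun r => Z' k r ^ 2) =ᵐ[radialMeasure (m + 2)]
      fun r => √(slopeSq m W (e k) (multiplier m W (e k) (Z k) (Z' k)) (Z k) r) ^ 2 := by
  filter_upwards [(radialMeasure_absolutelyContinuous _).ae_le
    (ae_restrict_of_ae ((h.minimizing k).deriv_sq_ae_eq_slopeSq hW (h.pos k))),
    ae_radialMeasure_of_forall_pos fun r hr => hr] with r hr hr0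
  rw [← hr hr0, Real.sqrt_sq_eq_abs, sq_abs]

lemma kineticEnergy_le (h : ConvergentMinimizers m W e Z Z' ε l Y) (hW : DoubleWell W)
    (hA : Tendsto (fun k => ∫ r, Z' k r ^ 2 ∂radialMeasure (m + 2)) atTop (nhds A)) :
    Integrable (fun r => (-√(slopeSq m W ε l Y r)) ^ 2) (radialMeasure (m + 2)) ∧
      ∫ r, (-√(slopeSq m W ε l Y r)) ^ 2 ∂radialMeasure (m + 2) ≤ A := by
  simp only [neg_sq]
  refine integrable_and_integral_le_of_tendsto
    (fun k => (h.minimizing k).radialProfile.integrable_deriv_sq.congr (h.deriv_sq_ae_eq hW k))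
    (fun k => .of_forall fun r => sq_nonneg _)
    (.of_forall fun r => (h.tendsto_slopeSq hW r).sqrt.pow 2) (hA.congr fun k => ?_)
  exact integral_congr_ae (h.deriv_sq_ae_eq hW k)

lemma potentialEnergy_le (h : ConvergentMinimizers m W e Z Z' ε l Y) (hW : DoubleWell W)
    (hB : Tendsto (fun k => ∫ r, W (Z k r) ∂radialMeasure (m + 2)) atTop (nhds B)) :
    Integrable (fun r => W (Y r)) (radialMeasure (m + 2)) ∧
      ∫ r, W (Y r) ∂radialMeasure (m + 2) ≤ B :=
  integrable_and_integral_le_of_tendsto (fun k => (h.minimizing k).integrable_potential)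
    (fun k => ae_radialMeasure_of_forall_pos fun _ hr => hW.nonneg ((h.minimizing k).mem_Icc hr))
    (ae_radialMeasure_of_forall_pos fun _ hr => h.tendsto_comp hW.continuousOn hr.le) hB

lemma integrable_volume (h : ConvergentMinimizers m W e Z Z' ε l Y) (hW : DoubleWell W) :
    Integrable (fun r => Vpot (m + 2) W (Y r)) (radialMeasure (m + 2)) :=
  (integrable_and_integral_le_of_tendsto (fun k => (h.minimizing k).integrable_volume)
    (fun k => ae_radialMeasure_of_forall_pos fun _ hr =>
      (hW.Vpot_mem m ((h.minimizing k).mem_Icc hr)).1)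
    (ae_radialMeasure_of_forall_pos fun _ hr => h.tendsto_comp (hW.continuousOn_Vpot m) hr.le)
    (tendsto_const_nhds.congr fun k => (h.minimizing k).volume_eq_one.symm)).1

-- The decay `Φ(Z k) ≲ r⁻ⁿ` is uniform in `k`, so no volume escapes to infinity.
lemma volume_eq_one (h : ConvergentMinimizers m W e Z Z' ε l Y) (hW : DoubleWell W)
    (hB : Tendsto (fun k => ∫ r, W (Z k r) ∂radialMeasure (m + 2)) atTop (nhds B)) :
    ∫ r, Vpot (m + 2) W (Y r) ∂radialMeasure (m + 2) = 1 := by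
  obtain ⟨K, hK⟩ := hB.bddAbove_range
  obtain ⟨C, hC, hdecay⟩ := MinimizingProfile.exists_Phi_mul_pow_le hW m
  have hdecay_unif : ∀ k r, 0 < r → Phi W (Z k r) * r ^ (m + 2) ≤ C * (K + 1) := fun k r hr =>
    (hdecay _ _ _ (h.minimizing k) r hr).trans (by
      gcongr
      exact hK ⟨k, rfl⟩)
  have hexp : ((m + 2 : ℕ) : ℝ) <
      ((m + 2 : ℕ) : ℝ) * (((m + 2 : ℕ) : ℝ) / (((m + 2 : ℕ) : ℝ) - 1)) :=
    lt_mul_of_one_lt_right (by positivity) (volumeExponent_mem m).1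
  have hlim := tendsto_integral_of_dominated_convergence _
    (fun k => (h.minimizing k).integrable_volume.aestronglyMeasurable)
    ((integrable_one_add_rpow_neg hexp).const_mul _)
    (fun k => ae_radialMeasure_of_forall_pos fun r hr => by
      have hmem := (h.minimizing k).mem_Icc hr
      rw [Real.norm_of_nonneg (hW.Vpot_mem m hmem).1]
      exact hW.Vpot_le_mul_rpow m hmem hr.le (hdecay_unif k r hr))
    (ae_radialMeasure_of_forall_pos fun r hr => h.tendsto_comp (hW.continuousOn_Vpot m) hr.le)
  refine tendsto_nhds_unique hlim (tendsto_const_nhds.congr fun k => ?_)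
  exact (h.minimizing k).volume_eq_one.symm

lemma radialProfile (h : ConvergentMinimizers m W e Z Z' ε l Y) (hW : DoubleWell W)
    (hA : Tendsto (fun k => ∫ r, Z' k r ^ 2 ∂radialMeasure (m + 2)) atTop (nhds A))
    (hB : Tendsto (fun k => ∫ r, W (Z k r) ∂radialMeasure (m + 2)) atTop (nhds B)) :
    RadialProfile (m + 2) Y fun r => -√(slopeSq m W ε l Y r) where
  hasDerivAt r hr := (h.hasDerivWithinAt hW hr.le).hasDerivAt (Ici_mem_nhds hr)
  hasDerivWithinAt_zero := by
    simpa only [slopeSq_zero, Real.sqrt_zero, neg_zero] using h.hasDerivWithinAt hW le_rfl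
  mem_Icc := h.mem_Icc
  integrable_sq := by
    obtain ⟨C, -, hC⟩ := hW.exists_sq_le_mul_add_Vpot m
    refine (((h.potentialEnergy_le hW hB).1.add (h.integrable_volume hW)).const_mul C).mono'
      (aestronglyMeasurable_radialMeasure ((h.continuousOn.pow 2).mono Ioi_subset_Ici_self))
      (ae_radialMeasure_of_forall_pos fun r hr => ?_)
    rw [Real.norm_of_nonneg (sq_nonneg _)]
    exact hC _ (h.mem_Icc r hr.le)
  integrable_deriv_sq := (h.kineticEnergy_le hW hA).1

-- Both energies are lower semicontinuous and their sum cannot drop below `ψ(ε)`, so neither drops.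
lemma energy_eq (h : ConvergentMinimizers m W e Z Z' ε l Y) (hW : DoubleWell W)
    (hA : Tendsto (fun k => ∫ r, Z' k r ^ 2 ∂radialMeasure (m + 2)) atTop (nhds A))
    (hB : Tendsto (fun k => ∫ r, W (Z k r) ∂radialMeasure (m + 2)) atTop (nhds B))
    (hAB : ε * A + ε⁻¹ * B ≤ Psi (m + 2) W ε 1) :
    ∫ r, (-√(slopeSq m W ε l Y r)) ^ 2 ∂radialMeasure (m + 2) = A ∧
      ∫ r, W (Y r) ∂radialMeasure (m + 2) = B ∧ Psi (m + 2) W ε 1 = ε * A + ε⁻¹ * B := by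
  have hε := h.limit_pos
  have hPsi := (h.radialProfile hW hA hB).Psi_le hW hε (h.volume_eq_one hW hB) one_pos
  simp only [Real.one_rpow, inv_one, mul_one] at hPsi
  have hkin := mul_le_mul_of_nonneg_left (h.kineticEnergy_le hW hA).2 hε.le
  have hpot := mul_le_mul_of_nonneg_left (h.potentialEnergy_le hW hB).2 (inv_pos.2 hε).le
  refine ⟨mul_left_cancel₀ hε.ne' ?_, mul_left_cancel₀ (inv_pos.2 hε).ne' ?_, ?_⟩ <;> linarith

lemma minimizingProfile (h : ConvergentMinimizers m W e Z Z' ε l Y) (hW : DoubleWell W)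
    (hA : Tendsto (fun k => ∫ r, Z' k r ^ 2 ∂radialMeasure (m + 2)) atTop (nhds A))
    (hB : Tendsto (fun k => ∫ r, W (Z k r) ∂radialMeasure (m + 2)) atTop (nhds B))
    (hAB : ε * A + ε⁻¹ * B ≤ Psi (m + 2) W ε 1) :
    MinimizingProfile m W ε Y fun r => -√(slopeSq m W ε l Y r) where
  radialProfile := h.radialProfile hW hA hB
  antitoneOn := h.antitoneOn
  measurable_deriv := (h.continuous_sqrt_slopeSq hW).neg.measurable
  volume_eq_one := h.volume_eq_one hW hB
  Psi_eq := by
    obtain ⟨hkin, hpot, hPsi⟩ := h.energy_eq hW hA hB hAB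
    rw [hkin, hpot, hPsi]
  integrable_potential := (h.potentialEnergy_le hW hB).1
  integrable_volume := h.integrable_volume hW

end ConvergentMinimizers

lemma MinimizingProfile.energy_le {m : ℕ} {W Z Z' Y Y' : ℝ → ℝ} {ε : ℝ}
    (h : MinimizingProfile m W ε Z Z') (hW : DoubleWell W) (hε : 0 < ε)
    (hY : RadialProfile (m + 2) Y Y')
    (hvol : ∫ r, Vpot (m + 2) W (Y r) ∂radialMeasure (m + 2) = 1) :
    ε * ∫ r, Z' r ^ 2 ∂radialMeasure (m + 2) + ε⁻¹ * ∫ r, W (Z r) ∂radialMeasure (m + 2) ≤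
      ε * ∫ r, Y' r ^ 2 ∂radialMeasure (m + 2) + ε⁻¹ * ∫ r, W (Y r) ∂radialMeasure (m + 2) := by
  simpa only [← h.Psi_eq, Real.one_rpow, inv_one, mul_one] using hY.Psi_le hW hε hvol one_pos

section Extraction

variable {m : ℕ} {W : ℝ → ℝ} {e : ℕ → ℝ} {Z Z' : ℕ → ℝ → ℝ} {Y Y' : ℝ → ℝ} {ε : ℝ}

lemma exists_energy_le_of_tendsto (hW : DoubleWell W) (he : ∀ k, 0 < e k) (hε : 0 < ε)
    (hlim : Tendsto e atTop (nhds ε)) (hZ : ∀ k, MinimizingProfile m W (e k) (Z k) (Z' k))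
    (hY : MinimizingProfile m W ε Y Y') :
    ∃ K, ∀ k, ∫ r, Z' k r ^ 2 ∂radialMeasure (m + 2) ≤ K ∧
      ∫ r, W (Z k r) ∂radialMeasure (m + 2) ≤ K := by
  set A := ∫ r, Y' r ^ 2 ∂radialMeasure (m + 2)
  set B := ∫ r, W (Y r) ∂radialMeasure (m + 2)
  have hinv : Tendsto (fun k => (e k)⁻¹) atTop (nhds ε⁻¹) := hlim.inv₀ hε.ne'
  have henergy := (hlim.mul_const A).add (hinv.mul_const B)
  obtain ⟨K₁, hK₁⟩ := (hinv.mul henergy).bddAbove_range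
  obtain ⟨K₂, hK₂⟩ := (hlim.mul henergy).bddAbove_range
  refine ⟨max K₁ K₂, fun k => ⟨?_, ?_⟩⟩
  · refine le_trans ?_ ((hK₁ ⟨k, rfl⟩).trans (le_max_left _ _))
    rw [le_inv_mul_iff₀ (he k)]
    have hpot := mul_nonneg (inv_pos.2 (he k)).le ((hZ k).integral_potential_nonneg hW)
    linarith [(hZ k).energy_le hW (he k) hY.radialProfile hY.volume_eq_one]
  · refine le_trans ?_ ((hK₂ ⟨k, rfl⟩).trans (le_max_right _ _))
    rw [← inv_mul_le_iff₀ (he k)]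
    linarith [(hZ k).energy_le hW (he k) hY.radialProfile hY.volume_eq_one,
      MinimizingProfile.kineticEnergy_nonneg (m := m) (Z' := Z' k) (he k)]

lemma exists_subseq_tendsto_energy (hW : DoubleWell W) (he : ∀ k, 0 < e k) (hε : 0 < ε)
    (hlim : Tendsto e atTop (nhds ε)) (hZ : ∀ k, MinimizingProfile m W (e k) (Z k) (Z' k))
    (hY : MinimizingProfile m W ε Y Y') :
    ∃ σ : ℕ → ℕ, StrictMono σ ∧ ∃ A B,
      Tendsto (fun k => ∫ r, Z' (σ k) r ^ 2 ∂radialMeasure (m + 2)) atTop (nhds A) ∧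
      Tendsto (fun k => ∫ r, W (Z (σ k) r) ∂radialMeasure (m + 2)) atTop (nhds B) ∧
      ε * A + ε⁻¹ * B ≤ Psi (m + 2) W ε 1 := by
  obtain ⟨K, hK⟩ := exists_energy_le_of_tendsto hW he hε hlim hZ hY
  obtain ⟨⟨A, B⟩, -, σ, hσ, hAB⟩ :=
    ((isCompact_Icc (a := 0) (b := K)).prod (isCompact_Icc (a := 0) (b := K))).tendsto_subseq
      (x := fun k => (∫ r, Z' k r ^ 2 ∂radialMeasure (m + 2),
        ∫ r, W (Z k r) ∂radialMeasure (m + 2)))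
      fun k => ⟨⟨integral_nonneg fun _ => sq_nonneg _, (hK k).1⟩,
        (hZ k).integral_potential_nonneg hW, (hK k).2⟩
  have hA := (continuous_fst.tendsto _).comp hAB
  have hB := (continuous_snd.tendsto _).comp hAB
  have heσ := hlim.comp hσ.tendsto_atTop
  have hinv := heσ.inv₀ hε.ne'
  refine ⟨σ, hσ, A, B, hA, hB, hY.Psi_eq ▸ ?_⟩
  exact le_of_tendsto_of_tendsto' ((heσ.mul hA).add (hinv.mul hB))
    ((heσ.mul_const _).add (hinv.mul_const _)) fun k =>
      (hZ (σ k)).energy_le hW (he (σ k)) hY.radialProfile hY.volume_eq_one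

lemma tendsto_multiplier_of_tendsto {A B : ℝ} (hε : 0 < ε) (hlim : Tendsto e atTop (nhds ε))
    (hA : Tendsto (fun k => ∫ r, Z' k r ^ 2 ∂radialMeasure (m + 2)) atTop (nhds A))
    (hB : Tendsto (fun k => ∫ r, W (Z k r) ∂radialMeasure (m + 2)) atTop (nhds B)) :
    Tendsto (fun k => multiplier m W (e k) (Z k) (Z' k)) atTop
      (nhds (ε⁻¹ * B + m / (m + 2) * (ε * A))) :=
  ((hlim.inv₀ hε.ne').mul hB).add ((hlim.mul hA).const_mul _)

lemma exists_subseq_tendsto_multiplier (hW : DoubleWell W) (he : ∀ k, 0 < e k) (hε : 0 < ε)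
    (hlim : Tendsto e atTop (nhds ε)) (hZ : ∀ k, MinimizingProfile m W (e k) (Z k) (Z' k))
    (hY : ∃ Y Y', MinimizingProfile m W ε Y Y') :
    ∃ σ : ℕ → ℕ, StrictMono σ ∧ ∃ Y Y', MinimizingProfile m W ε Y Y' ∧
      Tendsto (fun k => multiplier m W (e (σ k)) (Z (σ k)) (Z' (σ k))) atTop
        (nhds (multiplier m W ε Y Y')) := by
  obtain ⟨Y₀, Y₀', hY₀⟩ := hY
  obtain ⟨σ, hσ, A, B, hA, hB, hAB⟩ := exists_subseq_tendsto_energy hW he hε hlim hZ hY₀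
  have heσ := hlim.comp hσ.tendsto_atTop
  have hconv : MultiplierConvergent m W (e ∘ σ) (Z ∘ σ) (Z' ∘ σ) ε
      (ε⁻¹ * B + m / (m + 2) * (ε * A)) :=
    ⟨fun k => he (σ k), hε, heσ, fun k => hZ (σ k), tendsto_multiplier_of_tendsto hε heσ hA hB⟩
  obtain ⟨τ, hτ, Y, hY⟩ := hconv.exists_subseq hW
  have hAτ := hA.comp hτ.tendsto_atTop
  have hBτ := hB.comp hτ.tendsto_atTop
  obtain ⟨hkin, hpot, -⟩ := hY.energy_eq hW hAτ hBτ hAB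
  refine ⟨σ ∘ τ, hσ.comp hτ, Y, _, hY.minimizingProfile hW hAτ hBτ hAB, ?_⟩
  rw [multiplier, hkin, hpot]
  exact hY.tendsto_multiplier

end Extraction

/-! ### Continuity of the multiplier -/

/-- The Lagrange multiplier `λ(ε)` of `u`, in the form in which it is defined on `ℝⁿ`. -/
def lagrangeMultiplier (n : ℕ) (W : ℝ → ℝ) (ε : ℝ) (u : En n → ℝ) : ℝ :=
  ((n : ℝ) - 1) / n * Psi n W ε 1 +
    1 / (n : ℝ) * (ε⁻¹ * (∫ x, W (u x)) - ε * ∫ x, ‖fderiv ℝ u x‖ ^ 2)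

namespace MinimizingProfile

variable {m : ℕ} {W Z Z' : ℝ → ℝ} {ε : ℝ}

lemma lagrangeMultiplier_eq (h : MinimizingProfile m W ε Z Z') :
    lagrangeMultiplier (m + 2) W ε (fun x => Z ‖x‖) = multiplier m W ε Z Z' := by
  rw [lagrangeMultiplier, h.radialProfile.integral_norm_fderiv_sq,
    integral_comp_norm fun r => W (Z r), h.Psi_eq, multiplier]
  have : (m : ℝ) + 2 ≠ 0 := by positivity
  push_cast
  generalize ε⁻¹ = δ
  field_simp
  ring

lemma minimizes (h : MinimizingProfile m W ε Z Z') : Minimizes (m + 2) W ε fun x => Z ‖x‖ :=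
  ⟨h.radialProfile.h1Box,
    (integral_comp_norm fun r => Vpot (m + 2) W (Z r)).trans h.volume_eq_one,
    (h.radialProfile.AC_eq W ε).trans h.Psi_eq.symm⟩

lemma radialDecreasing (h : MinimizingProfile m W ε Z Z') :
    RadialDecreasing (m + 2) fun x => Z ‖x‖ :=
  ⟨Z, h.antitoneOn, fun _ => rfl⟩

end MinimizingProfile

section Continuity

variable {m : ℕ} {W : ℝ → ℝ} {s : Set ℝ} {U : ℝ → En (m + 2) → ℝ}

-- Every sequence `ε_k → ε` has a subsequence along which the multipliers converge to that of some
-- radial decreasing minimizer for `ε`, and the only such minimizer is `U ε`.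
lemma continuousOn_lagrangeMultiplier (hW : DoubleWell W) (h0 : derivWithin W (Icc 0 1) 0 = 0)
    (hs : s ⊆ Ioi 0)
    (hU : ∀ ε ∈ s, Minimizes (m + 2) W ε (U ε) ∧ RadialDecreasing (m + 2) (U ε) ∧
      ∀ v, Minimizes (m + 2) W ε v → RadialDecreasing (m + 2) v → v = U ε) :
    ContinuousOn (fun ε => lagrangeMultiplier (m + 2) W ε (U ε)) s := by
  have hprofile : ∀ ε ∈ s, ∃ Z Z', MinimizingProfile m W ε Z Z' ∧ U ε = fun x => Z ‖x‖ :=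
    fun ε hε => (hU ε hε).1.exists_minimizingProfile hW h0 (hU ε hε).2.1
  intro ε hε
  refine tendsto_of_subseq_tendsto fun e he => ?_
  obtain ⟨he_lim, he_mem⟩ := tendsto_nhdsWithin_iff.1 he
  obtain ⟨N, hN⟩ := eventually_atTop.1 he_mem
  have he_shift : ∀ k, e (k + N) ∈ s := fun k => hN _ (Nat.le_add_left N k)
  choose Z Z' hZ hUZ using fun k => hprofile _ (he_shift k)
  obtain ⟨Y₀, Y₀', hY₀, -⟩ := hprofile ε hε
  obtain ⟨σ, -, Y, Y', hY, hlim⟩ := exists_subseq_tendsto_multiplier hW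
    (fun k => hs (he_shift k)) (hs hε) (he_lim.comp (tendsto_add_atTop_nat N)) hZ ⟨Y₀, Y₀', hY₀⟩
  refine ⟨fun k => σ k + N, ?_⟩
  beta_reduce
  rw [← (hU ε hε).2.2 _ hY.minimizes hY.radialDecreasing, hY.lagrangeMultiplier_eq]
  refine hlim.congr fun k => ?_
  rw [hUZ, (hZ (σ k)).lagrangeMultiplier_eq]

end Continuity

lemma two_mul_div_R0 (m : ℕ) : 2 * ((m : ℝ) + 1) / R0 (m + 2) =
    2 * (((m + 2 : ℕ) : ℝ) - 1) * ballVol (m + 2) ^ ((1 : ℝ) / ((m + 2 : ℕ) : ℝ)) := by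
  rw [R0, neg_div, Real.rpow_neg (ballVol_pos _).le, div_inv_eq_mul]
  push_cast
  ring

theorem statement12 (n : ℕ) (hn : 2 ≤ n) (W : ℝ → ℝ) (hW : DoubleWell W) :
    ∃ ε₀ > (0:ℝ), ∃ C > (0:ℝ),
      ∀ U : ℝ → En n → ℝ,
        (∀ ε ∈ Ioo (0:ℝ) ε₀, Minimizes n W ε (U ε) ∧ RadialDecreasing n (U ε) ∧
          (∀ v : En n → ℝ, Minimizes n W ε v → RadialDecreasing n v → v = U ε)) →
        ContinuousOn (fun ε =>
            (((n : ℝ) - 1) / (n : ℝ)) * Psi n W ε 1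
              + (1 / (n : ℝ)) * (ε⁻¹ * (∫ x : En n, W (U ε x))
                - ε * (∫ x : En n, ‖fderiv ℝ (U ε) x‖ ^ 2))) (Ioo 0 ε₀) ∧
        ∀ ε ∈ Ioo (0:ℝ) ε₀,
          |(((n : ℝ) - 1) / (n : ℝ)) * Psi n W ε 1
              + (1 / (n : ℝ)) * (ε⁻¹ * (∫ x : En n, W (U ε x))
                - ε * (∫ x : En n, ‖fderiv ℝ (U ε) x‖ ^ 2))
              - 2 * ((n : ℝ) - 1) * ballVol n ^ ((1 : ℝ) / (n : ℝ))| ≤ C * ε := by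
  obtain ⟨m, rfl⟩ : ∃ m, n = m + 2 := ⟨n - 2, (Nat.sub_add_cancel hn).symm⟩
  by_cases h0 : derivWithin W (Icc 0 1) 0 = 0
  · obtain ⟨C, ε₀, hε₀, hC⟩ := hW.exists_abs_multiplier_sub_le m
    refine ⟨ε₀, hε₀, max C 1, by positivity, fun U hU =>
      ⟨continuousOn_lagrangeMultiplier hW h0 (fun _ hε => hε.1) hU, fun ε hε => ?_⟩⟩
    obtain ⟨Z, Z', hZ, hUZ⟩ := (hU ε hε).1.exists_minimizingProfile hW h0 (hU ε hε).2.1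
    rw [← two_mul_div_R0]
    change |lagrangeMultiplier (m + 2) W ε (U ε) - _| ≤ _
    rw [hUZ, hZ.lagrangeMultiplier_eq]
    exact (hC ε hε Z Z' hZ).trans (mul_le_mul_of_nonneg_right (le_max_left C 1) hε.1.le)
  · have hvacuous : ∀ ε ∈ Ioo (0 : ℝ) 1, ∀ u, Minimizes (m + 2) W ε u →
        ¬RadialDecreasing (m + 2) u := fun ε hε u hu hr =>
      hW.not_minimizes_of_derivWithin_ne_zero h0 hε.1 hr hu
    exact ⟨1, one_pos, 1, one_pos, fun U hU =>
      ⟨fun ε hε => (hvacuous ε hε _ (hU ε hε).1 (hU ε hε).2.1).elim,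
        fun ε hε => (hvacuous ε hε _ (hU ε hε).1 (hU ε hε).2.1).elim⟩⟩
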